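/- arXiv:1511.02558 — 2 statements merged into one kernel-verified Lean document; each statement's English description precedes it below -/
import Mathlib

section
/- For every integer n ≥ 45, (p(n-1)/p(n)) · (1 + π/(√24 · n^{3/2})) > p(n)/p(n+1). -/
open Real

/-- The partition function, as a real number. -/
noncomputable def p (n : ℕ) : ℝ := (Fintype.card (Nat.Partition n) : ℝ)

namespace PartitionAsymptotics

section

open PowerSeries PowerSeries.WithPiTopology Finset Nat.Partition

theorem tsum_X_pow_mul_mul_one_sub (i : ℕ) :
    (∑' j : ℕ, (X : ℤ⟦X⟧) ^ ((i + 1) * j)) * (1 - X ^ (i + 1)) = 1 := by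
  simp_rw [pow_mul]
  exact tsum_pow_mul_one_sub_of_constantCoeff_eq_zero (by simp)

/-- The number of partitions of `n` into parts of size at most `k`. -/
def boundedCount (k n : ℕ) : ℕ := #(restricted n (· ≤ k))

theorem mk_boundedCount_mul_prod (k : ℕ) :
    (PowerSeries.mk fun n ↦ (boundedCount k n : ℤ)) * ∏ i ∈ range k, (1 - X ^ (i + 1)) = 1 := by
  have h := hasProd_powerSeriesMk_card_restricted ℤ (· ≤ k)
  have h2 : HasProd (fun i ↦ if i + 1 ≤ k then ∑' j : ℕ, (X : ℤ⟦X⟧) ^ ((i + 1) * j) else 1)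
      (∏ i ∈ range k, if i + 1 ≤ k then ∑' j : ℕ, (X : ℤ⟦X⟧) ^ ((i + 1) * j) else 1) :=
    hasProd_prod_of_ne_finset_one fun i hi ↦ if_neg fun h ↦ hi (mem_range.2 h)
  rw [show (PowerSeries.mk fun n ↦ (boundedCount k n : ℤ)) = _ from h.unique h2,
    ← prod_mul_distrib]
  refine prod_eq_one fun i hi ↦ ?_
  rw [if_pos (show i + 1 ≤ k from mem_range.1 hi), tsum_X_pow_mul_mul_one_sub]

theorem boundedCount_succ (k n : ℕ) : boundedCount (k + 1) n =
    boundedCount k n + if k + 1 ≤ n then boundedCount (k + 1) (n - (k + 1)) else 0 := by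
  have h1 := mk_boundedCount_mul_prod k
  have h2 := mk_boundedCount_mul_prod (k + 1)
  rw [prod_range_succ] at h2
  have h3 : (PowerSeries.mk fun n ↦ (boundedCount (k + 1) n : ℤ)) * (1 - X ^ (k + 1)) =
      PowerSeries.mk fun n ↦ (boundedCount k n : ℤ) := by
    linear_combination (PowerSeries.mk fun n ↦ (boundedCount k n : ℤ)) * h2 -
      (PowerSeries.mk fun n ↦ (boundedCount (k + 1) n : ℤ)) * (1 - X ^ (k + 1)) * h1
  have h4 := congrArg (coeff n) h3
  rw [mul_sub, mul_one, map_sub, coeff_mul_X_pow'] at h4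
  simp only [coeff_mk] at h4
  zify
  split_ifs at h4 ⊢ <;> linarith

theorem boundedCount_le (k n : ℕ) : boundedCount k n ≤ Fintype.card (Nat.Partition n) :=
  card_le_univ _

theorem boundedCount_of_le {k n : ℕ} (h : n ≤ k) :
    boundedCount k n = Fintype.card (Nat.Partition n) := by
  rw [boundedCount, restricted, filter_true_of_mem, card_univ]
  exact fun q _ i hi ↦ (Nat.Partition.le_of_mem_parts hi).trans h

theorem boundedCount_zero (n : ℕ) : boundedCount 0 n = if n = 0 then 1 else 0 := by
  have h := congrArg (coeff n) (mk_boundedCount_mul_prod 0)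
  simp only [range_zero, prod_empty, mul_one, coeff_mk, coeff_one] at h
  split_ifs at h ⊢ <;> exact_mod_cast h

/-- The finite Euler product `∏_{i < k} (1 - x ^ (i + 1))⁻¹` bounds the partial sums. -/
theorem sum_boundedCount_mul_pow_le {x : ℝ} (hx0 : 0 ≤ x) (hx1 : x < 1) (k N : ℕ) :
    ∑ n ∈ range N, (boundedCount k n : ℝ) * x ^ n ≤ ∏ i ∈ range k, (1 - x ^ (i + 1))⁻¹ := by
  induction k with
  | zero =>
    simp only [boundedCount_zero, range_zero, prod_empty]
    refine (sum_le_sum_of_subset_of_nonneg (t := range (N + 1)) (by simp) ?_).trans ?_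
    · intros; positivity
    · rw [sum_range_succ']; simp
  | succ k ih =>
    have hpos : 0 < 1 - x ^ (k + 1) := by
      have := pow_lt_one₀ hx0 hx1 k.add_one_ne_zero
      linarith
    rw [prod_range_succ, ← div_eq_mul_inv, le_div_iff₀ hpos]
    have key : ∑ n ∈ range N, (if k + 1 ≤ n then (boundedCount (k + 1) (n - (k + 1)) : ℝ) else 0)
        * x ^ n ≤ x ^ (k + 1) * ∑ n ∈ range N, (boundedCount (k + 1) n : ℝ) * x ^ n := by
      rw [mul_sum]
      simp_rw [ite_mul, zero_mul]
      rw [← sum_filter]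
      refine (sum_le_sum_of_subset_of_nonneg (t := (range N).image (· + (k + 1))) ?_ ?_).trans ?_
      · intro n hn
        simp only [mem_filter, mem_range] at hn
        exact mem_image.2 ⟨n - (k + 1), by simp; omega, by omega⟩
      · intros; positivity
      · rw [sum_image (by simp)]
        refine sum_le_sum fun n _ ↦ le_of_eq ?_
        rw [Nat.add_sub_cancel, pow_add]; ring
    have : ∑ n ∈ range N, (boundedCount (k + 1) n : ℝ) * x ^ n =
        ∑ n ∈ range N, (boundedCount k n : ℝ) * x ^ n +
        ∑ n ∈ range N, (if k + 1 ≤ n then (boundedCount (k + 1) (n - (k + 1)) : ℝ) else 0)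
        * x ^ n := by
      rw [← sum_add_distrib]
      refine sum_congr rfl fun n _ ↦ ?_
      rw [boundedCount_succ, ← add_mul]; push_cast; rfl
    linarith

/-- `∏ (1 - e^{-s(i+1)})⁻¹ ≤ exp (π² / (6 s))`. -/
theorem prod_inv_one_sub_exp_le {s : ℝ} (hs : 0 < s) (k : ℕ) :
    ∏ i ∈ range k, (1 - rexp (-s) ^ (i + 1))⁻¹ ≤ rexp (π ^ 2 / 6 / s) := by
  set x := rexp (-s) with hx
  have hx0 : 0 < x := exp_pos _
  have hx1 : x < 1 := by rw [hx, exp_lt_one_iff]; linarith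
  have hlt (i : ℕ) : x ^ (i + 1) < 1 := pow_lt_one₀ hx0.le hx1 (Nat.succ_ne_zero i)
  have hlog (i : ℕ) : (1 - x ^ (i + 1))⁻¹ = rexp (-log (1 - x ^ (i + 1))) := by
    rw [exp_neg, exp_log (by linarith [hlt i])]
  simp_rw [hlog]
  rw [← exp_sum, exp_le_exp]
  have hsum : HasSum (fun j : ℕ ↦ ∑ i ∈ range k, (x ^ (i + 1)) ^ (j + 1) / ((j : ℝ) + 1))
      (∑ i ∈ range k, -log (1 - x ^ (i + 1))) :=
    hasSum_sum fun i _ ↦ Real.hasSum_pow_div_log_of_abs_lt_one (by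
      rw [abs_of_nonneg (by positivity)]; exact hlt i)
  have hz : HasSum (fun j : ℕ ↦ 1 / ((j : ℝ) + 1) ^ 2 / s) (π ^ 2 / 6 / s) := by
    have := (hasSum_nat_add_iff' 1).2 hasSum_zeta_two
    simp only [range_one, sum_singleton] at this
    simpa using this.div_const s
  refine hasSum_le (fun j ↦ ?_) hsum hz
  rw [← sum_div]
  have hy0 : 0 < x ^ (j + 1) := by positivity
  have hy1 := hlt j
  have hgeom : ∑ i ∈ range k, (x ^ (i + 1)) ^ (j + 1) ≤ 1 / (((j : ℝ) + 1) * s) := by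
    have h1 : ∑ i ∈ range k, (x ^ (i + 1)) ^ (j + 1) =
        x ^ (j + 1) * ∑ i ∈ range k, (x ^ (j + 1)) ^ i := by
      rw [mul_sum]
      refine sum_congr rfl fun i _ ↦ ?_
      rw [← pow_mul, ← pow_mul, ← pow_add]; congr 1; ring
    have h2 : ∑ i ∈ range k, (x ^ (j + 1)) ^ i ≤ (1 - x ^ (j + 1))⁻¹ := by
      rw [← tsum_geometric_of_lt_one hy0.le hy1]
      exact (summable_geometric_of_lt_one hy0.le hy1).sum_le_tsum _ (fun _ _ ↦ by positivity)
    have h3 : 1 + ((j : ℝ) + 1) * s ≤ (x ^ (j + 1))⁻¹ := by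
      rw [hx, ← exp_nat_mul, ← exp_neg]
      refine le_trans ?_ (add_one_le_exp _)
      push_cast; linarith
    have h4 : (0 : ℝ) < ((j : ℝ) + 1) * s := by positivity
    rw [h1]
    refine (mul_le_mul_of_nonneg_left h2 hy0.le).trans ?_
    rw [← div_eq_mul_inv, div_le_div_iff₀ (by linarith) h4]
    have h5 := mul_le_mul_of_nonneg_left h3 hy0.le
    rw [mul_inv_cancel₀ hy0.ne'] at h5
    linarith
  calc (∑ i ∈ range k, (x ^ (i + 1)) ^ (j + 1)) / ((j : ℝ) + 1)
      ≤ 1 / (((j : ℝ) + 1) * s) / ((j : ℝ) + 1) := by gcongr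
    _ = 1 / ((j : ℝ) + 1) ^ 2 / s := by field_simp

theorem sum_card_partition_mul_exp_le {s : ℝ} (hs : 0 < s) (N : ℕ) :
    ∑ n ∈ range N, (Fintype.card (Nat.Partition n) : ℝ) * rexp (-s) ^ n ≤
      rexp (π ^ 2 / 6 / s) := by
  have h := sum_boundedCount_mul_pow_le (exp_pos (-s)).le (by rw [exp_lt_one_iff]; linarith) N N
  rw [sum_congr rfl fun n hn ↦ by rw [boundedCount_of_le (mem_range.1 hn).le]] at h
  exact h.trans (prod_inv_one_sub_exp_le hs N)

theorem summable_card_partition_mul_exp {s : ℝ} (hs : 0 < s) :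
    Summable fun n ↦ (Fintype.card (Nat.Partition n) : ℝ) * rexp (-s) ^ n :=
  summable_of_sum_range_le (fun _ ↦ by positivity) (sum_card_partition_mul_exp_le hs)

theorem tsum_card_partition_mul_exp_le {s : ℝ} (hs : 0 < s) :
    ∑' n, (Fintype.card (Nat.Partition n) : ℝ) * rexp (-s) ^ n ≤ rexp (π ^ 2 / 6 / s) :=
  Real.tsum_le_of_sum_range_le (fun _ ↦ by positivity) (sum_card_partition_mul_exp_le hs)

/-- The generating function of the partition numbers at `exp (-z)`. -/
noncomputable def genP (z : ℂ) : ℂ :=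
  ∑' n, (Fintype.card (Nat.Partition n) : ℂ) * Complex.exp (-z) ^ n

theorem norm_genP_term (z : ℂ) (n : ℕ) :
    ‖(Fintype.card (Nat.Partition n) : ℂ) * Complex.exp (-z) ^ n‖ =
      (Fintype.card (Nat.Partition n) : ℝ) * rexp (-z.re) ^ n := by
  simp [Complex.norm_exp]

theorem genP_eq_tprod {z : ℂ} (hz : 0 < z.re) :
    genP z = (∏' n : ℕ, (1 - Complex.exp (-z) ^ (n + 1)))⁻¹ := by
  set q := Complex.exp (-z) with hq
  have hq1 : ‖q‖ < 1 := by rw [hq, Complex.norm_exp, Complex.neg_re, exp_lt_one_iff]; linarith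
  have hS := summable_card_partition_mul_exp hz
  have hsummable (k : ℕ) : Summable fun n ↦ (boundedCount k n : ℂ) * q ^ n := by
    refine Summable.of_norm_bounded hS fun n ↦ ?_
    rw [norm_mul, norm_pow, hq, Complex.norm_exp, Complex.norm_natCast, Complex.neg_re]
    gcongr
    exact boundedCount_le k n
  have hprod (k : ℕ) : (∑' n, (boundedCount k n : ℂ) * q ^ n) *
      ∏ i ∈ range k, (1 - q ^ (i + 1)) = 1 := by
    induction k with
    | zero =>
      rw [tsum_eq_single 0 (fun n hn ↦ by simp [boundedCount_zero, hn])]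
      simp [boundedCount_zero]
    | succ k ih =>
      have h1 : ∑' n, (boundedCount (k + 1) n : ℂ) * q ^ n =
          ∑' n, (boundedCount k n : ℂ) * q ^ n +
          q ^ (k + 1) * ∑' n, (boundedCount (k + 1) n : ℂ) * q ^ n := by
        have hshift : HasSum (fun n ↦ (if k + 1 ≤ n then (boundedCount (k + 1) (n - (k + 1)) : ℂ)
            else 0) * q ^ n) (q ^ (k + 1) * ∑' n, (boundedCount (k + 1) n : ℂ) * q ^ n) := by
          rw [← hasSum_nat_add_iff' (k + 1)]
          rw [sum_eq_zero (fun n hn ↦ by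
            rw [if_neg (by simpa using mem_range.1 hn), zero_mul]), sub_zero]
          convert! (hsummable (k + 1)).hasSum.mul_left (q ^ (k + 1)) using 2 with n
          rw [if_pos (by omega), Nat.add_sub_cancel, pow_add]; ring
        refine HasSum.tsum_eq ?_
        convert! (hsummable k).hasSum.add hshift using 2 with n
        rw [boundedCount_succ, ← add_mul]; push_cast; rfl
      rw [prod_range_succ]
      linear_combination ih + (∏ i ∈ range k, (1 - q ^ (i + 1))) * h1
  have hlim1 : Filter.Tendsto (fun k ↦ ∑' n, (boundedCount k n : ℂ) * q ^ n) Filter.atTop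
      (nhds (genP z)) := by
    refine tendsto_tsum_of_dominated_convergence hS (fun n ↦ ?_) (.of_forall fun k n ↦ ?_)
    · refine tendsto_const_nhds.congr' ?_
      filter_upwards [Filter.eventually_ge_atTop n] with k hk
      rw [boundedCount_of_le hk]
    · rw [norm_mul, norm_pow, hq, Complex.norm_exp, Complex.norm_natCast, Complex.neg_re]
      gcongr
      exact boundedCount_le k n
  have hlim2 := (ModularForm.multipliable_one_sub_pow hq1).hasProd.tendsto_prod_nat
  have h := hlim1.mul hlim2
  simp_rw [hprod] at h
  exact eq_inv_of_mul_eq_one_left (tendsto_nhds_unique h tendsto_const_nhds)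

end

/-- The principal part of the generating function near the cusp `q = 1`, without the
factor `exp (-z / 24)`. -/
noncomputable def cuspFactor (z : ℂ) : ℂ :=
  (z / (2 * π)) ^ (1 / 2 : ℂ) * Complex.exp (π ^ 2 / 6 / z)

theorem sqrt_I_mul {w : ℂ} (hw : 0 < w.re) :
    Complex.sqrt (Complex.I * w) = Complex.sqrt Complex.I * w ^ (1 / 2 : ℂ) := by
  have hw0 : w ≠ 0 := by rintro rfl; simp at hw
  rw [sqrt_eq_exp (mul_ne_zero Complex.I_ne_zero hw0),
    sqrt_eq_exp Complex.I_ne_zero, Complex.cpow_def_of_ne_zero hw0,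
    ← Complex.exp_add, Complex.log_mul Complex.I_ne_zero hw0]
  · ring_nf
  · have := Complex.abs_arg_lt_pi_div_two_iff.2 (Or.inl hw)
    rw [abs_lt] at this
    rw [Complex.arg_I]
    constructor <;> linarith [pi_pos]

/-- The modular transformation law of the generating function of the partition numbers. -/
theorem genP_eq_cuspFactor_mul {z : ℂ} (hz : 0 < z.re) :
    genP z = cuspFactor z * Complex.exp (-z / 24) * genP (4 * π ^ 2 / z) := by
  have hz0 : z ≠ 0 := by rintro rfl; simp at hz
  have hpi : (π : ℂ) ≠ 0 := by exact_mod_cast pi_ne_zero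
  set τ : ℂ := Complex.I * (z / (2 * π)) with hτ
  have hwre : 0 < (z / (2 * π)).re := by
    have : (z / (2 * π)).re = z.re / (2 * π) := by
      rw [show (2 * π : ℂ) = ((2 * π : ℝ) : ℂ) by push_cast; rfl, Complex.div_ofReal_re]
    rw [this]; positivity
  have hτmem : τ ∈ UpperHalfPlane.upperHalfPlaneSet := by
    change 0 < τ.im
    rw [hτ, Complex.I_mul_im]; exact hwre
  have hinv : 0 < (4 * π ^ 2 / z).re := by
    have : (4 * π ^ 2 / z).re = 4 * π ^ 2 * (z.re / Complex.normSq z) := by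
      rw [show (4 * π ^ 2 / z : ℂ) = ((4 * π ^ 2 : ℝ) : ℂ) * z⁻¹ by push_cast; rfl,
        Complex.re_ofReal_mul, Complex.inv_re]
    rw [this]
    have := Complex.normSq_pos.2 hz0
    positivity
  have heta (w σ : ℂ) (h : 2 * π * Complex.I * σ = -w) (hw : 0 < w.re) :
      ModularForm.eta σ * genP w = Complex.exp (-w / 24) := by
    have h1 : Function.Periodic.qParam 1 σ = Complex.exp (-w) := by
      rw [Function.Periodic.qParam, ← h]; simp
    have h24 : Function.Periodic.qParam 24 σ = Complex.exp (-w / 24) := by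
      rw [Function.Periodic.qParam, ← h]; simp
    have hne : ∏' n : ℕ, (1 - Complex.exp (-w) ^ (n + 1)) ≠ 0 := by
      have hσ : σ ∈ UpperHalfPlane.upperHalfPlaneSet := by
        change 0 < σ.im
        have := congrArg Complex.re h
        simp at this
        have h2 : 0 < 2 * π * σ.im := by linarith
        exact pos_of_mul_pos_right h2 (by positivity)
      have := ModularForm.eta_tprod_ne_zero hσ
      simpa only [ModularForm.eta_q, h1] using this
    rw [genP_eq_tprod hw, ModularForm.eta, h24]
    simp only [ModularForm.eta_q, h1]
    rw [mul_assoc, mul_inv_cancel₀ hne, mul_one]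
  have e1 := heta z τ (by
    rw [hτ]; field_simp; rw [Complex.I_sq]) hz
  have e2 := heta (4 * π ^ 2 / z) (-1 / τ) (by
    rw [hτ]; field_simp; norm_num) hinv
  have e3 : ModularForm.eta (-1 / τ) = (z / (2 * π)) ^ (1 / 2 : ℂ) * ModularForm.eta τ := by
    have h := ModularForm.eta_comp_eq_csqrt_I_inv hτmem
    simp only [Function.comp, Pi.smul_apply, Pi.mul_apply, smul_eq_mul] at h
    rw [h, hτ, sqrt_I_mul hwre]
    have : Complex.sqrt Complex.I ≠ 0 := by
      rw [sqrt_eq_exp Complex.I_ne_zero]; exact Complex.exp_ne_zero _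
    field_simp
  have hη : ModularForm.eta τ ≠ 0 := ModularForm.eta_ne_zero hτmem
  have e4 : Complex.exp (-(4 * π ^ 2 / z) / 24) * Complex.exp (π ^ 2 / 6 / z) = 1 := by
    rw [← Complex.exp_add, Complex.exp_eq_one_iff]
    exact ⟨0, by field_simp; ring⟩
  apply mul_left_cancel₀ hη
  rw [e1, cuspFactor]
  rw [e3] at e2
  linear_combination (-Complex.exp (-z / 24)) * e4 -
    Complex.exp (π ^ 2 / 6 / z) * Complex.exp (-z / 24) * e2

section

open MeasureTheory Set

theorem integrable_sq_mul_cexp_neg_mul_sq {z : ℂ} (hz : 0 < z.re) :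
    Integrable fun v : ℝ ↦ (v : ℂ) ^ 2 * Complex.exp (-z * v ^ 2) := by
  refine (integrable_rpow_mul_exp_neg_mul_sq hz (s := 2) (by norm_num)).mono'
    (by fun_prop) (.of_forall fun v ↦ ?_)
  rw [norm_mul, norm_pow, Complex.norm_real, norm_eq_abs, sq_abs, norm_cexp_neg_mul_sq]
  norm_cast

theorem integral_sq_mul_cexp_neg_mul_sq {z : ℂ} (hz : 0 < z.re) :
    ∫ v : ℝ, (v : ℂ) ^ 2 * Complex.exp (-z * v ^ 2) = (π / z) ^ (1 / 2 : ℂ) / (2 * z) := by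
  have hz0 : z ≠ 0 := by rintro rfl; simp at hz
  have hderiv (v : ℝ) : HasDerivAt (fun v : ℝ ↦ (v : ℂ) * Complex.exp (-z * v ^ 2))
      (Complex.exp (-z * v ^ 2) - 2 * z * ((v : ℂ) ^ 2 * Complex.exp (-z * v ^ 2))) v := by
    have h : HasDerivAt (fun v : ℂ ↦ v * Complex.exp (-z * v ^ 2)) _ (v : ℂ) :=
      (hasDerivAt_id (v : ℂ)).mul (((hasDerivAt_pow 2 (v : ℂ)).const_mul (-z)).cexp)
    convert! h.comp_ofReal using 1
    simp; ring
  have hi := integrable_cexp_neg_mul_sq hz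
  have hi2 := (integrable_sq_mul_cexp_neg_mul_sq hz).const_mul (2 * z)
  have h := integral_eq_zero_of_hasDerivAt_of_integrable hderiv (hi.sub hi2)
    (integrable_mul_cexp_neg_mul_sq hz)
  rw [integral_sub hi hi2, integral_gaussian_complex hz, integral_const_mul] at h
  rw [eq_div_iff (by simpa using hz0)]
  linear_combination -h

theorem integrable_cexp_linear_sub_mul_sq {z : ℂ} (hz : 0 < z.re) (b : ℂ) :
    Integrable fun v : ℝ ↦ Complex.exp (b * v) * Complex.exp (-z * v ^ 2) := by
  have := integrable_cexp_quadratic' (b := -z) (by simpa using hz) b 0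
  refine this.congr (.of_forall fun v ↦ ?_)
  simp only [← Complex.exp_add]; congr 1; ring

theorem integral_cexp_linear_sub_mul_sq {z : ℂ} (hz : 0 < z.re) (b : ℂ) :
    ∫ v : ℝ, Complex.exp (b * v) * Complex.exp (-z * v ^ 2) =
      (π / z) ^ (1 / 2 : ℂ) * Complex.exp (b ^ 2 / (4 * z)) := by
  have := integral_cexp_quadratic (b := -z) (by simpa using hz) b 0
  rw [neg_neg, zero_sub, mul_neg, div_neg, neg_neg] at this
  rw [← this]
  refine integral_congr_ae (.of_forall fun v ↦ ?_)
  simp only [← Complex.exp_add]; congr 1; ring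

theorem cosh_sub_mul_cexp_eq (z : ℂ) (c v : ℝ) :
    ((cosh (c * v) - 1 - (c * v) ^ 2 / 2 : ℝ) : ℂ) * Complex.exp (-z * v ^ 2) =
      (1 / 2) * (Complex.exp (c * v) * Complex.exp (-z * v ^ 2)) +
      (1 / 2) * (Complex.exp (-c * v) * Complex.exp (-z * v ^ 2)) - Complex.exp (-z * v ^ 2) -
      (c ^ 2 / 2) * ((v : ℂ) ^ 2 * Complex.exp (-z * v ^ 2)) := by
  push_cast
  rw [Complex.cosh, neg_mul (c : ℂ)]
  ring

theorem integrable_cosh_sub_mul_cexp {z : ℂ} (hz : 0 < z.re) (c : ℝ) :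
    Integrable fun v : ℝ ↦
      ((cosh (c * v) - 1 - (c * v) ^ 2 / 2 : ℝ) : ℂ) * Complex.exp (-z * v ^ 2) := by
  simp_rw [cosh_sub_mul_cexp_eq]
  exact ((((integrable_cexp_linear_sub_mul_sq hz c).const_mul _).add
    ((integrable_cexp_linear_sub_mul_sq hz (-c)).const_mul _)).sub
    (integrable_cexp_neg_mul_sq hz)).sub ((integrable_sq_mul_cexp_neg_mul_sq hz).const_mul _)

theorem integral_cosh_sub_mul_cexp {z : ℂ} (hz : 0 < z.re) (c : ℝ) :
    ∫ v : ℝ, ((cosh (c * v) - 1 - (c * v) ^ 2 / 2 : ℝ) : ℂ) * Complex.exp (-z * v ^ 2) =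
      (π / z) ^ (1 / 2 : ℂ) * (Complex.exp (c ^ 2 / 4 / z) - 1 - c ^ 2 / 4 / z) := by
  have hz0 : z ≠ 0 := by rintro rfl; simp at hz
  have i1 := (integrable_cexp_linear_sub_mul_sq hz c).const_mul (1 / 2 : ℂ)
  have i2 := (integrable_cexp_linear_sub_mul_sq hz (-c)).const_mul (1 / 2 : ℂ)
  have i3 := integrable_cexp_neg_mul_sq hz
  have i4 := (integrable_sq_mul_cexp_neg_mul_sq hz).const_mul (c ^ 2 / 2 : ℂ)
  simp_rw [cosh_sub_mul_cexp_eq]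
  rw [integral_sub (by exact (i1.add i2).sub i3) i4, integral_sub (by exact i1.add i2) i3,
    integral_add i1 i2]
  simp only [integral_const_mul]
  rw [integral_cexp_linear_sub_mul_sq hz, integral_cexp_linear_sub_mul_sq hz,
    integral_gaussian_complex hz, integral_sq_mul_cexp_neg_mul_sq hz, neg_sq, div_div]
  field_simp
  ring

theorem integral_cosh_sub_mul_cexp_Ioi {z : ℂ} (hz : 0 < z.re) (c : ℝ) :
    ∫ v in Ioi (0 : ℝ), ((cosh (c * v) - 1 - (c * v) ^ 2 / 2 : ℝ) : ℂ) * Complex.exp (-z * v ^ 2) =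
      (π / z) ^ (1 / 2 : ℂ) * (Complex.exp (c ^ 2 / 4 / z) - 1 - c ^ 2 / 4 / z) / 2 := by
  have hi := integrable_cosh_sub_mul_cexp hz c
  rw [← integral_cosh_sub_mul_cexp hz c,
    ← integral_add_compl (measurableSet_Ioi (a := (0 : ℝ))) hi, compl_Ioi]
  have h := integral_comp_neg_Ioi 0 fun v : ℝ ↦
    ((cosh (c * v) - 1 - (c * v) ^ 2 / 2 : ℝ) : ℂ) * Complex.exp (-z * v ^ 2)
  simp only [mul_neg, cosh_neg, neg_sq, Complex.ofReal_neg, neg_zero] at h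
  rw [← h]; ring

theorem cosh_sub_one_le {x : ℝ} (hx : 0 ≤ x) : cosh x - 1 ≤ x ^ 2 / 2 * rexp x := by
  have h1 : cosh x * rexp (-(x ^ 2 / 2)) ≤ 1 := by
    rw [exp_neg, ← div_eq_mul_inv, div_le_one (exp_pos _)]
    exact cosh_le_exp_half_sq x
  have h2 := mul_le_mul_of_nonneg_left (add_one_le_exp (-(x ^ 2 / 2))) (cosh_pos x).le
  have h3 : cosh x ≤ rexp x := by
    rw [cosh_eq]; linarith [exp_le_exp.2 (show -x ≤ x by linarith)]
  nlinarith [mul_le_mul_of_nonneg_left h3 (by positivity : 0 ≤ x ^ 2 / 2)]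

theorem abs_cosh_sub_le {x : ℝ} (hx : 0 ≤ x) :
    |cosh x - 1 - x ^ 2 / 2| ≤ x ^ 2 * rexp x := by
  have h1 := cosh_sub_one_le hx
  have h2 := one_le_cosh x
  have h3 : x ^ 2 / 2 ≤ x ^ 2 / 2 * rexp x :=
    le_mul_of_one_le_right (by positivity) (one_le_exp hx)
  rw [abs_le]; constructor <;> linarith [sq_nonneg x]

/-- The numerator of the inverse Laplace transform of `z ^ (1/2) * (exp (A / z) - 1 - A / z)`. -/
noncomputable def kernelNum (x : ℝ) : ℝ := x * sinh x - cosh x + 1 - x ^ 2 / 2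

theorem abs_kernelNum_le {x : ℝ} (hx : 0 ≤ x) : |kernelNum x| ≤ x ^ 2 * rexp x := by
  have h1 := cosh_sub_one_le hx
  have h2 := one_le_cosh x
  have h3 : x ^ 2 / 2 ≤ x ^ 2 / 2 * rexp x :=
    le_mul_of_one_le_right (by positivity) (one_le_exp hx)
  have h4 : sinh x ≤ x * rexp x := by
    have := mul_le_mul_of_nonneg_left (add_one_le_exp (-2 * x)) (exp_pos x).le
    rw [← exp_add, show x + -2 * x = -x by ring] at this
    rw [sinh_eq]; linarith
  have h5 := sinh_nonneg_iff.2 hx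
  rw [kernelNum, abs_le]
  constructor <;> nlinarith [mul_le_mul_of_nonneg_left h4 hx, mul_nonneg hx h5]

theorem integrableOn_of_norm_le_exp {f : ℝ → ℝ} (hf : Measurable f) {z : ℂ} (hz : 0 < z.re)
    {C b : ℝ} (h : ∀ v, 0 < v → |f v| ≤ C * rexp (b * v)) :
    IntegrableOn (fun v : ℝ ↦ (f v : ℂ) * Complex.exp (-z * v ^ 2)) (Ioi 0) := by
  have hi := ((integrable_cexp_linear_sub_mul_sq hz b).norm.const_mul C).integrableOn (s := Ioi 0)
  refine hi.mono' (by fun_prop) ((ae_restrict_iff' measurableSet_Ioi).2 (.of_forall fun v hv ↦ ?_))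
  rw [norm_mul, norm_mul, ← mul_assoc, Complex.norm_real, norm_eq_abs, ← Complex.ofReal_mul,
    ← Complex.ofReal_exp, Complex.norm_real, norm_eq_abs, abs_exp]
  exact mul_le_mul_of_nonneg_right (h v hv) (norm_nonneg _)

theorem abs_kernelNum_div_le {c v : ℝ} (hc : 0 < c) (hv : 0 < v) :
    |kernelNum (c * v) / v ^ 2| ≤ c ^ 2 * rexp (c * v) := by
  rw [abs_div, abs_of_pos (by positivity : 0 < v ^ 2), div_le_iff₀ (by positivity)]
  refine (abs_kernelNum_le (by positivity)).trans (le_of_eq (by ring))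

@[fun_prop]
theorem continuous_kernelNum : Continuous kernelNum := by
  unfold kernelNum
  fun_prop

theorem integrableOn_kernelNum_div {c : ℝ} (hc : 0 < c) {z : ℂ} (hz : 0 < z.re) :
    IntegrableOn (fun v : ℝ ↦ ((kernelNum (c * v) / v ^ 2 : ℝ) : ℂ) * Complex.exp (-z * v ^ 2))
      (Ioi 0) :=
  integrableOn_of_norm_le_exp (by fun_prop) hz
    fun _ hv ↦ abs_kernelNum_div_le hc hv

theorem integral_kernelNum_div {c : ℝ} (hc : 0 < c) {z : ℂ} (hz : 0 < z.re) :
    ∫ v in Ioi (0 : ℝ), ((kernelNum (c * v) / v ^ 2 : ℝ) : ℂ) * Complex.exp (-z * v ^ 2) =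
      z * ((π / z) ^ (1 / 2 : ℂ) * (Complex.exp (c ^ 2 / 4 / z) - 1 - c ^ 2 / 4 / z)) := by
  set k : ℝ → ℝ := fun v ↦ cosh (c * v) - 1 - (c * v) ^ 2 / 2 with hk
  set m : ℝ → ℝ := fun v ↦ k v / v with hm
  have hmle {v : ℝ} (hv : 0 ≤ v) : |m v| ≤ c ^ 2 * v * rexp (c * v) := by
    rcases hv.eq_or_lt with rfl | hv
    · simp [hm]
    rw [hm, abs_div, abs_of_pos hv, div_le_iff₀ hv]
    refine (abs_cosh_sub_le (by positivity)).trans (le_of_eq (by ring))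
  have hmd {v : ℝ} (hv : 0 < v) : HasDerivAt m (kernelNum (c * v) / v ^ 2) v := by
    have h1 : HasDerivAt (fun v ↦ c * v) c v := by simpa using (hasDerivAt_id v).const_mul c
    have h : HasDerivAt m _ v :=
      ((h1.cosh.sub_const 1).sub ((h1.pow 2).div_const 2)).div (hasDerivAt_id v) hv.ne'
    convert! h using 1
    simp only [kernelNum, Pi.sub_apply, Pi.pow_apply]
    push_cast
    ring
  set f : ℝ → ℂ := fun v ↦ (m v : ℂ) * Complex.exp (-z * v ^ 2) with hf
  have hfd (v : ℝ) (hv : v ∈ Ioi (0 : ℝ)) : HasDerivAt f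
      (((kernelNum (c * v) / v ^ 2 : ℝ) : ℂ) * Complex.exp (-z * v ^ 2) -
        2 * z * ((k v : ℂ) * Complex.exp (-z * v ^ 2))) v := by
    have h2 : HasDerivAt (fun v : ℝ ↦ Complex.exp (-z * v ^ 2)) _ v :=
      (((hasDerivAt_pow 2 (v : ℂ)).const_mul (-z)).cexp).comp_ofReal
    convert! (hmd hv).ofReal_comp.mul h2 using 1
    have hv0 : (v : ℂ) ≠ 0 := by exact_mod_cast (ne_of_gt hv)
    simp only [hm]
    push_cast
    field_simp
    ring
  have i1 := integrableOn_kernelNum_div hc hz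
  have i2 : IntegrableOn (fun v : ℝ ↦ 2 * z * ((k v : ℂ) * Complex.exp (-z * v ^ 2))) (Ioi 0) :=
    ((integrable_cosh_sub_mul_cexp hz c).const_mul _).integrableOn
  have i3 : IntegrableOn f (Ioi 0) :=
    integrableOn_of_norm_le_exp (C := c) (b := 2 * c) (by fun_prop) hz fun v hv ↦ by
      refine (hmle hv.le).trans ?_
      have := add_one_le_exp (c * v)
      rw [show 2 * c * v = c * v + c * v by ring, exp_add]
      have h3 : c * v ≤ rexp (c * v) := by linarith
      calc c ^ 2 * v * rexp (c * v) = c * ((c * v) * rexp (c * v)) := by ring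
        _ ≤ _ := by gcongr
  have hcont : ContinuousWithinAt f (Ici 0) 0 := by
    have h1 : ContinuousWithinAt m (Ici 0) 0 := by
      have h0 : m 0 = 0 := by simp [hm]
      rw [ContinuousWithinAt, h0]
      have h2 : Filter.Tendsto (fun v ↦ c ^ 2 * v * rexp (c * v)) (nhdsWithin 0 (Ici 0))
          (nhds 0) := by
        have : Continuous fun v ↦ c ^ 2 * v * rexp (c * v) := by fun_prop
        simpa using (this.tendsto 0).mono_left nhdsWithin_le_nhds
      refine squeeze_zero_norm' ?_ h2
      filter_upwards [self_mem_nhdsWithin] with v hv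
      exact hmle hv
    have h2 : ContinuousWithinAt (fun v : ℝ ↦ Complex.exp (-z * v ^ 2)) (Ici 0) 0 := by fun_prop
    exact (Complex.continuous_ofReal.continuousAt.comp_continuousWithinAt h1).mul h2
  have h := integral_Ioi_of_hasDerivAt_of_tendsto hcont hfd (i1.sub i2)
    (tendsto_zero_of_hasDerivAt_of_integrableOn_Ioi hfd (i1.sub i2) i3)
  rw [integral_sub i1 i2, integral_const_mul, integral_cosh_sub_mul_cexp_Ioi hz c] at h
  have hf0 : f 0 = 0 := by simp [hf, hm]
  rw [hf0] at h
  linear_combination h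

/-- The inverse Laplace transform of `√π * z ^ (1/2) * (exp (A / z) - 1 - A / z)`, where
`A = c ^ 2 / 4`. -/
noncomputable def laplaceKernel (c t : ℝ) : ℝ := kernelNum (c * √t) / (2 * t * √t)

theorem smul_laplaceKernel_sq (c : ℝ) (z : ℂ) {v : ℝ} (hv : 0 < v) :
    (2 * v ^ ((2 : ℝ) - 1)) •
      ((laplaceKernel c (v ^ (2 : ℝ)) : ℂ) * Complex.exp (-z * (v ^ (2 : ℝ) : ℝ))) =
    ((kernelNum (c * v) / v ^ 2 : ℝ) : ℂ) * Complex.exp (-z * v ^ 2) := by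
  have hv0 : (v : ℂ) ≠ 0 := by exact_mod_cast hv.ne'
  rw [show (2 : ℝ) - 1 = 1 by norm_num, rpow_one, rpow_two, laplaceKernel, sqrt_sq hv.le,
    Complex.real_smul]
  push_cast
  field_simp

theorem integrableOn_laplaceKernel {c : ℝ} (hc : 0 < c) {z : ℂ} (hz : 0 < z.re) :
    IntegrableOn (fun t : ℝ ↦ (laplaceKernel c t : ℂ) * Complex.exp (-z * t)) (Ioi 0) := by
  rw [← integrableOn_Ioi_comp_rpow_iff _ (two_ne_zero (α := ℝ)), abs_of_pos two_pos]
  exact (integrableOn_kernelNum_div hc hz).congr_fun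
    (fun v hv ↦ (smul_laplaceKernel_sq c z hv).symm) measurableSet_Ioi

theorem mul_pi_div_cpow_half {z : ℂ} (hz : 0 < z.re) :
    z * (π / z) ^ (1 / 2 : ℂ) = √π * z ^ (1 / 2 : ℂ) := by
  have hz0 : z ≠ 0 := by rintro rfl; simp at hz
  have harg : z.arg ≠ π := by
    have := (abs_lt.1 (Complex.abs_arg_lt_pi_div_two_iff.2 (Or.inl hz))).2
    linarith [pi_pos]
  have hzz : z ^ (1 / 2 : ℂ) * z ^ (1 / 2 : ℂ) = z := by
    rw [← Complex.cpow_add _ _ hz0]; norm_num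
  have h1 : (π / z : ℂ) ^ (1 / 2 : ℂ) = √π * (z ^ (1 / 2 : ℂ))⁻¹ := by
    rw [← Complex.inv_cpow _ _ harg, div_eq_mul_inv,
      Complex.cpow_def_of_ne_zero (mul_ne_zero (by exact_mod_cast pi_ne_zero) (inv_ne_zero hz0)),
      Complex.cpow_def_of_ne_zero (inv_ne_zero hz0),
      Complex.log_ofReal_mul pi_pos (inv_ne_zero hz0), add_mul, Complex.exp_add]
    congr 1
    rw [sqrt_eq_rpow, rpow_def_of_pos pi_pos]
    push_cast; rfl
  have hne : z ^ (1 / 2 : ℂ) ≠ 0 := by rw [Ne, Complex.cpow_eq_zero_iff]; tauto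
  rw [h1]
  nth_rewrite 1 [← hzz]
  field_simp

/-- The function `z ^ (1/2) * (exp (A / z) - 1 - A / z)`. -/
noncomputable def laplaceImage (A : ℝ) (z : ℂ) : ℂ :=
  z ^ (1 / 2 : ℂ) * (Complex.exp (A / z) - 1 - A / z)

theorem integral_laplaceKernel {c : ℝ} (hc : 0 < c) {z : ℂ} (hz : 0 < z.re) :
    ∫ t in Ioi (0 : ℝ), (laplaceKernel c t : ℂ) * Complex.exp (-z * t) =
      √π * laplaceImage (c ^ 2 / 4) z := by
  rw [← integral_comp_rpow_Ioi_of_pos two_pos, setIntegral_congr_fun measurableSet_Ioi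
    (fun v hv ↦ smul_laplaceKernel_sq c z hv), integral_kernelNum_div hc hz, ← mul_assoc,
    mul_pi_div_cpow_half hz, laplaceImage]
  push_cast
  ring

/-- The point of height `2 π ξ` on the vertical line `Re z = y`. -/
noncomputable def linePt (y ξ : ℝ) : ℂ := y + 2 * π * ξ * Complex.I

@[simp] theorem linePt_re (y ξ : ℝ) : (linePt y ξ).re = y := by simp [linePt]

@[simp] theorem linePt_im (y ξ : ℝ) : (linePt y ξ).im = 2 * π * ξ := by simp [linePt]

@[fun_prop]
theorem continuous_linePt (y : ℝ) : Continuous (linePt y) := by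
  unfold linePt
  fun_prop

theorem linePt_ne_zero {y : ℝ} (hy : 0 < y) (ξ : ℝ) : linePt y ξ ≠ 0 := by
  intro h
  have := congrArg Complex.re h
  simp at this
  exact hy.ne' this

theorem sq_norm_linePt (y ξ : ℝ) : ‖linePt y ξ‖ ^ 2 = y ^ 2 + 4 * π ^ 2 * ξ ^ 2 := by
  rw [Complex.sq_norm, Complex.normSq_apply, linePt_re, linePt_im]
  ring

theorem le_norm_linePt {y : ℝ} (ξ : ℝ) : y ≤ ‖linePt y ξ‖ := by
  simpa using Complex.re_le_norm (linePt y ξ)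

theorem norm_linePt_pos {y : ℝ} (hy : 0 < y) (ξ : ℝ) : 0 < ‖linePt y ξ‖ :=
  hy.trans_le (le_norm_linePt ξ)

theorem norm_cpow_half (z : ℂ) : ‖z ^ (1 / 2 : ℂ)‖ = √‖z‖ := by
  rw [sqrt_eq_rpow, ← Complex.norm_cpow_real]
  norm_num

theorem norm_laplaceImage_le {A : ℝ} (hA : 0 ≤ A) {z : ℂ} (hz : z ≠ 0) :
    ‖laplaceImage A z‖ ≤ √‖z‖ * ((A / ‖z‖) ^ 2 * rexp (A / ‖z‖)) := by
  rw [laplaceImage, norm_mul, norm_cpow_half]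
  gcongr
  have h := Complex.norm_exp_sub_sum_le_norm_mul_exp (A / z) 2
  simp only [Finset.sum_range_succ, Finset.sum_range_zero] at h
  rw [norm_div, Complex.norm_real, norm_eq_abs, abs_of_nonneg hA] at h
  convert! h using 2
  simp; ring

theorem continuous_laplaceImage_linePt (A : ℝ) {y : ℝ} (hy : 0 < y) :
    Continuous fun ξ ↦ laplaceImage A (linePt y ξ) := by
  unfold laplaceImage
  have h0 := linePt_ne_zero hy
  refine Continuous.mul ?_ ?_
  · refine Continuous.cpow (by fun_prop) continuous_const fun ξ ↦ Or.inl ?_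
    simpa using hy
  · fun_prop (disch := assumption)

theorem integrable_laplaceImage_linePt {A : ℝ} (hA : 0 ≤ A) {y : ℝ} (hy : 0 < y) :
    Integrable fun ξ ↦ laplaceImage A (linePt y ξ) := by
  set κ := min (y ^ 2) (4 * π ^ 2) with hκ
  have hκ0 : 0 < κ := lt_min (by positivity) (by positivity)
  have h1 : Integrable fun ξ : ℝ ↦ (1 + ‖ξ‖ ^ 2) ^ (-(3 / 2 : ℝ) / 2) :=
    integrable_rpow_neg_one_add_norm_sq (by norm_num)
  refine (h1.const_mul (A ^ 2 * rexp (A / y) * κ ^ (-(3 / 2 : ℝ) / 2))).mono'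
    (continuous_laplaceImage_linePt A hy).aestronglyMeasurable (.of_forall fun ξ ↦ ?_)
  have hpos := norm_linePt_pos hy ξ
  refine (norm_laplaceImage_le hA (linePt_ne_zero hy ξ)).trans ?_
  have h2 : rexp (A / ‖linePt y ξ‖) ≤ rexp (A / y) := by
    gcongr; exact le_norm_linePt ξ
  have h3 : √‖linePt y ξ‖ * (A / ‖linePt y ξ‖) ^ 2 =
      A ^ 2 * (‖linePt y ξ‖ ^ 2) ^ (-(3 / 2 : ℝ) / 2) := by
    have e1 : (‖linePt y ξ‖ ^ 2) ^ (-(3 / 2 : ℝ) / 2) = √‖linePt y ξ‖ * (‖linePt y ξ‖ ^ 2)⁻¹ := by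
      rw [← rpow_natCast, ← rpow_neg hpos.le, ← rpow_mul hpos.le, sqrt_eq_rpow,
        ← rpow_add hpos]
      norm_num
    rw [e1]; field_simp
  have h4 : (‖linePt y ξ‖ ^ 2) ^ (-(3 / 2 : ℝ) / 2) ≤
      κ ^ (-(3 / 2 : ℝ) / 2) * (1 + ‖ξ‖ ^ 2) ^ (-(3 / 2 : ℝ) / 2) := by
    rw [← mul_rpow hκ0.le (by positivity)]
    refine rpow_le_rpow_of_nonpos (by positivity) ?_ (by norm_num)
    rw [sq_norm_linePt, norm_eq_abs, sq_abs]
    nlinarith [min_le_left (y ^ 2) (4 * π ^ 2), min_le_right (y ^ 2) (4 * π ^ 2), sq_nonneg ξ]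
  calc √‖linePt y ξ‖ * ((A / ‖linePt y ξ‖) ^ 2 * rexp (A / ‖linePt y ξ‖))
      = A ^ 2 * (‖linePt y ξ‖ ^ 2) ^ (-(3 / 2 : ℝ) / 2) * rexp (A / ‖linePt y ξ‖) := by
        rw [← h3]; ring
    _ ≤ A ^ 2 * (κ ^ (-(3 / 2 : ℝ) / 2) * (1 + ‖ξ‖ ^ 2) ^ (-(3 / 2 : ℝ) / 2)) *
        rexp (A / y) := by gcongr
    _ = _ := by ring

theorem integrable_exp_mul_laplaceImage {A : ℝ} (hA : 0 ≤ A) {y : ℝ} (hy : 0 < y) (t : ℝ) :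
    Integrable fun ξ ↦ Complex.exp (linePt y ξ * t) * laplaceImage A (linePt y ξ) := by
  refine ((integrable_laplaceImage_linePt hA hy).norm.const_mul (rexp (y * t))).mono'
    (Continuous.aestronglyMeasurable ?_) (.of_forall fun ξ ↦ ?_)
  · have := continuous_laplaceImage_linePt A hy
    fun_prop
  · rw [norm_mul, Complex.norm_exp]
    simp

open FourierTransform in
theorem integral_exp_mul_laplaceImage {c y t : ℝ} (hc : 0 < c) (hy : 0 < y) (ht : 0 < t) :
    ∫ ξ, Complex.exp (linePt y ξ * t) * laplaceImage (c ^ 2 / 4) (linePt y ξ) =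
      (laplaceKernel c t / √π : ℝ) := by
  set g : ℝ → ℂ := (Ioi (0 : ℝ)).indicator
    fun s ↦ (laplaceKernel c s : ℂ) * Complex.exp (-(y : ℂ) * s) with hg
  have hgi : Integrable g :=
    (integrable_indicator_iff measurableSet_Ioi).2 (integrableOn_laplaceKernel hc (by simpa))
  have hF : 𝓕 g = fun ξ ↦ √π * laplaceImage (c ^ 2 / 4) (linePt y ξ) := by
    funext ξ
    rw [Real.fourier_real_eq_integral_exp_smul,
      ← integral_laplaceKernel hc (z := linePt y ξ) (by simpa),
      ← integral_indicator measurableSet_Ioi]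
    refine integral_congr_ae (.of_forall fun s ↦ ?_)
    by_cases hs : s ∈ Ioi (0 : ℝ)
    · simp only [hg, indicator_of_mem hs, smul_eq_mul]
      rw [mul_left_comm, ← Complex.exp_add]
      congr 2
      rw [linePt]; push_cast; ring
    · simp [hg, indicator_of_notMem hs]
  have hFi : Integrable (𝓕 g) := by
    rw [hF]
    exact (integrable_laplaceImage_linePt (by positivity) hy).const_mul _
  have hcont : ContinuousAt g t := by
    have h1 : ContinuousAt (fun s : ℝ ↦ (laplaceKernel c s : ℂ) * Complex.exp (-(y : ℂ) * s)) t := by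
      have h2 : ContinuousAt (laplaceKernel c) t := by
        unfold laplaceKernel
        refine ContinuousAt.div (by fun_prop) (by fun_prop) (by positivity)
      fun_prop
    refine h1.congr ?_
    filter_upwards [Ioi_mem_nhds ht] with s hs
    rw [hg, indicator_of_mem hs]
  have h := hgi.fourierInv_fourier_eq hFi hcont
  rw [Real.fourierInv_eq', hF] at h
  have hpi : (√π : ℂ) ≠ 0 := by
    exact_mod_cast (sqrt_pos.2 pi_pos).ne'
  have h5 : ∫ ξ, Complex.exp (linePt y ξ * t) * laplaceImage (c ^ 2 / 4) (linePt y ξ) =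
      (Complex.exp (y * t) / √π) * ∫ ξ : ℝ, Complex.exp ((2 * π * inner ℝ ξ t : ℝ) * Complex.I) •
        (√π * laplaceImage (c ^ 2 / 4) (linePt y ξ)) := by
    rw [← integral_const_mul]
    refine integral_congr_ae (.of_forall fun ξ ↦ ?_)
    simp only [smul_eq_mul]
    rw [show linePt y ξ * t = y * t + (2 * π * inner ℝ ξ t : ℝ) * Complex.I by
      simp [linePt]; ring, Complex.exp_add]
    field_simp
  rw [h5, h, hg, indicator_of_mem (mem_Ioi.2 ht)]
  have : Complex.exp (y * t) * Complex.exp (-(y : ℂ) * t) = 1 := by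
    rw [← Complex.exp_add]; simp
  push_cast
  linear_combination (laplaceKernel c t / √π : ℂ) * this

theorem integral_exp_int_mul_linePt (y : ℝ) (k : ℤ) :
    ∫ ξ in (-1 / 2 : ℝ)..(1 / 2), Complex.exp (k * linePt y ξ) = if k = 0 then 1 else 0 := by
  split_ifs with hk
  · simp [hk]; norm_num
  have h0 : (2 * π * k * Complex.I : ℂ) ≠ 0 := by
    simp [hk, pi_ne_zero]
  have h1 (ξ : ℝ) : Complex.exp (k * linePt y ξ) =
      Complex.exp (k * y) * Complex.exp (2 * π * k * Complex.I * ξ) := by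
    rw [← Complex.exp_add, linePt]; congr 1; ring
  simp_rw [h1]
  rw [intervalIntegral.integral_const_mul, integral_exp_mul_complex h0]
  have h2 : Complex.exp (2 * π * k * Complex.I * (1 / 2 : ℝ)) =
      Complex.exp (2 * π * k * Complex.I * (-1 / 2 : ℝ)) := by
    rw [Complex.exp_eq_exp_iff_exists_int]
    exact ⟨k, by push_cast; ring⟩
  rw [h2]; simp

theorem card_partition_eq_integral {y : ℝ} (hy : 0 < y) (n : ℕ) :
    (Fintype.card (Nat.Partition n) : ℂ) =
      ∫ ξ in (-1 / 2 : ℝ)..(1 / 2), genP (linePt y ξ) * Complex.exp (n * linePt y ξ) := by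
  set a : ℕ → ℂ := fun m ↦ (Fintype.card (Nat.Partition m) : ℂ) with ha
  have hterm (m : ℕ) (ξ : ℝ) : a m * Complex.exp (-linePt y ξ) ^ m *
      Complex.exp (n * linePt y ξ) = a m * Complex.exp (((n - m : ℤ) : ℂ) * linePt y ξ) := by
    rw [mul_assoc, ← Complex.exp_nat_mul, ← Complex.exp_add]
    congr 2; push_cast; ring
  have h := intervalIntegral.hasSum_integral_of_dominated_convergence (μ := volume)
    (a := (-1 / 2 : ℝ)) (b := 1 / 2)
    (F := fun m ξ ↦ a m * Complex.exp (-linePt y ξ) ^ m * Complex.exp (n * linePt y ξ))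
    (f := fun ξ ↦ genP (linePt y ξ) * Complex.exp (n * linePt y ξ))
    (fun m _ ↦ (Fintype.card (Nat.Partition m) : ℝ) * rexp (-y) ^ m * rexp (n * y))
    (fun m ↦ (by fun_prop : Continuous _).aestronglyMeasurable)
    (fun m ↦ .of_forall fun ξ _ ↦ by
      rw [norm_mul, norm_genP_term, Complex.norm_exp]; simp)
    (.of_forall fun ξ _ ↦ (summable_card_partition_mul_exp hy).mul_right _)
    intervalIntegrable_const
    (.of_forall fun ξ _ ↦ by
      refine HasSum.mul_right _ (Summable.hasSum ?_)
      refine Summable.of_norm ?_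
      simp_rw [ha, norm_genP_term]
      simpa using summable_card_partition_mul_exp hy)
  simp_rw [hterm, intervalIntegral.integral_const_mul, integral_exp_int_mul_linePt] at h
  rw [← h.tsum_eq, tsum_eq_single n]
  · simp [ha]
  · intro m hm
    rw [if_neg (by omega), mul_zero]

theorem cuspFactor_eq (z : ℂ) : cuspFactor z =
    (√(2 * π) : ℂ)⁻¹ * (laplaceImage (π ^ 2 / 6) z + z ^ (1 / 2 : ℂ) * (1 + π ^ 2 / 6 / z)) := by
  have h : (z / (2 * π)) ^ (1 / 2 : ℂ) = (√(2 * π) : ℂ)⁻¹ * z ^ (1 / 2 : ℂ) := by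
    rcases eq_or_ne z 0 with rfl | hz
    · simp
    have h2 : (0 : ℝ) < (2 * π)⁻¹ := by positivity
    rw [show z / (2 * π) = ((2 * π)⁻¹ : ℝ) * z by push_cast; field_simp,
      Complex.cpow_def_of_ne_zero (mul_ne_zero (by exact_mod_cast h2.ne') hz),
      Complex.cpow_def_of_ne_zero hz, Complex.log_ofReal_mul h2 hz, add_mul, Complex.exp_add]
    congr 1
    rw [← Complex.ofReal_inv, ← sqrt_inv, sqrt_eq_rpow, rpow_def_of_pos h2]
    push_cast; rfl
  rw [cuspFactor, h, laplaceImage]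
  push_cast
  ring

theorem norm_genP_sub_one_le {z : ℂ} {s : ℝ} (hs : 0 < s) (hsz : s ≤ z.re) :
    ‖genP z - 1‖ ≤ rexp (-(z.re - s)) * rexp (π ^ 2 / 6 / s) := by
  have hz : 0 < z.re := hs.trans_le hsz
  have hsum : Summable fun n ↦ (Fintype.card (Nat.Partition n) : ℂ) * Complex.exp (-z) ^ n := by
    refine Summable.of_norm ?_
    simp_rw [norm_genP_term]
    exact summable_card_partition_mul_exp hz
  have h1 : genP z - 1 =
      ∑' n, (Fintype.card (Nat.Partition (n + 1)) : ℂ) * Complex.exp (-z) ^ (n + 1) := by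
    rw [genP, hsum.tsum_eq_zero_add]
    simp
  have hS := summable_card_partition_mul_exp hs
  have hS1 := (summable_nat_add_iff 1).2 hS
  rw [h1]
  refine (tsum_of_norm_bounded (hS1.mul_left (rexp (-(z.re - s)))).hasSum fun n ↦ ?_).trans ?_
  · rw [norm_genP_term, mul_left_comm]
    gcongr
    rw [← exp_nat_mul, ← exp_nat_mul, ← exp_add, exp_le_exp]
    push_cast
    nlinarith [mul_nonneg (Nat.cast_nonneg (α := ℝ) n) (sub_nonneg.2 hsz)]
  · rw [tsum_mul_left]
    gcongr
    refine le_trans ?_ (tsum_card_partition_mul_exp_le hs)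
    rw [hS.tsum_eq_zero_add]
    simp

theorem norm_linePt_le {y ξ : ℝ} (hy : 0 < y) (hy1 : y ≤ 1) (hξ : |ξ| ≤ 1 / 2) :
    ‖linePt y ξ‖ ^ 2 ≤ π ^ 2 + y ^ 2 ∧ ‖linePt y ξ‖ ≤ 2 * π := by
  have h1 : ξ ^ 2 ≤ 1 / 4 := by
    rw [← sq_abs]; nlinarith [abs_nonneg ξ]
  have h2 : ‖linePt y ξ‖ ^ 2 ≤ π ^ 2 + y ^ 2 := by
    rw [sq_norm_linePt]; nlinarith [sq_nonneg π]
  refine ⟨h2, abs_le_of_sq_le_sq' ?_ (by positivity) |>.2⟩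
  nlinarith [pi_gt_three]

theorem re_ofReal_div_linePt (a y ξ : ℝ) :
    ((a : ℂ) / linePt y ξ).re = a * (y / ‖linePt y ξ‖ ^ 2) := by
  rw [div_eq_mul_inv, Complex.re_ofReal_mul, Complex.inv_re, linePt_re, Complex.sq_norm]

theorem norm_exp_linePt_mul (y ξ t : ℝ) : ‖Complex.exp (linePt y ξ * t)‖ = rexp (t * y) := by
  rw [Complex.norm_exp]; simp [mul_comm]

theorem norm_cuspFactor_mul_le {y ξ : ℝ} (hy : 0 < y) (hy1 : y ≤ 1) (hξ : |ξ| ≤ 1 / 2) :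
    ‖cuspFactor (linePt y ξ) * (genP (4 * π ^ 2 / linePt y ξ) - 1)‖ ≤
      rexp (π ^ 2 / 6 + (π ^ 2 + y ^ 2) / (24 * y)) := by
  obtain ⟨hn2, hn⟩ := norm_linePt_le hy hy1 hξ
  have hpos := norm_linePt_pos hy ξ
  set r := y / ‖linePt y ξ‖ ^ 2 with hr
  have hr0 : 0 < r := by positivity
  have hcusp : ‖cuspFactor (linePt y ξ)‖ ≤ rexp (π ^ 2 / 6 * r) := by
    have h1 : (π ^ 2 / 6 / linePt y ξ).re = π ^ 2 / 6 * r := by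
      rw [hr, ← re_ofReal_div_linePt]; push_cast; rfl
    rw [cuspFactor, norm_mul, norm_cpow_half, Complex.norm_exp, h1]
    refine mul_le_of_le_one_left (exp_pos _).le ?_
    rw [sqrt_le_left zero_le_one, one_pow, norm_div,
      show (2 * π : ℂ) = ((2 * π : ℝ) : ℂ) by push_cast; rfl, Complex.norm_real, norm_eq_abs,
      abs_of_pos (by positivity), div_le_one (by positivity)]
    exact hn
  have hre : (4 * π ^ 2 / linePt y ξ).re = 4 * π ^ 2 * r := by
    rw [hr, ← re_ofReal_div_linePt]; push_cast; rfl
  have h24 : π ^ 2 / 6 / (4 * π ^ 2) = 1 / 24 := by field_simp; norm_num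
  rw [norm_mul]
  rcases le_total 1 r with h | h
  · have h1 := norm_genP_sub_one_le (z := 4 * π ^ 2 / linePt y ξ) (s := 4 * π ^ 2)
      (by positivity) (by rw [hre]; nlinarith [sq_nonneg π])
    rw [hre, h24, ← exp_add] at h1
    refine (mul_le_mul hcusp h1 (norm_nonneg _) (exp_pos _).le).trans ?_
    rw [← exp_add, exp_le_exp]
    have h2 : 1 / 24 ≤ (π ^ 2 + y ^ 2) / (24 * y) := by
      rw [div_le_div_iff₀ (by norm_num) (by positivity)]
      nlinarith [pi_gt_three]
    nlinarith [mul_nonneg (sub_nonneg.2 h) (sq_nonneg π)]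
  · have h1 := norm_genP_sub_one_le (z := 4 * π ^ 2 / linePt y ξ) (s := 4 * π ^ 2 * r)
      (by positivity) hre.ge
    rw [hre, sub_self, neg_zero, exp_zero, one_mul] at h1
    refine (mul_le_mul hcusp h1 (norm_nonneg _) (exp_pos _).le).trans ?_
    rw [← exp_add, exp_le_exp]
    have h2 : π ^ 2 / 6 / (4 * π ^ 2 * r) ≤ (π ^ 2 + y ^ 2) / (24 * y) := by
      rw [← div_div, h24, hr, div_le_div_iff₀ (by positivity) (by positivity)]
      field_simp
      linarith
    have h3 : π ^ 2 / 6 * r ≤ π ^ 2 / 6 := mul_le_of_le_one_right (by positivity) h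
    linarith

theorem norm_laplaceImage_linePt_le {y ξ : ℝ} (hy : 0 < y) (hξ : 1 / 2 < |ξ|) :
    ‖laplaceImage (π ^ 2 / 6) (linePt y ξ)‖ ≤ 9 * |ξ| ^ (-(3 / 2) : ℝ) := by
  have hpos := norm_linePt_pos hy ξ
  have hξ0 : 0 < |ξ| := by linarith
  have h2 : 2 * π * |ξ| ≤ ‖linePt y ξ‖ := by
    refine abs_le_of_sq_le_sq' ?_ hpos.le |>.2
    rw [sq_norm_linePt, mul_pow, sq_abs]; nlinarith [sq_nonneg y]
  have h3 : |ξ| ≤ ‖linePt y ξ‖ := by nlinarith [pi_gt_three]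
  have h4 : π ≤ ‖linePt y ξ‖ := by nlinarith [pi_gt_three]
  have hpi : π ^ 2 ≤ 9.87 := by nlinarith [pi_lt_d6, pi_gt_three]
  have h5 : rexp (π ^ 2 / 6 / ‖linePt y ξ‖) ≤ 3 := by
    have : π ^ 2 / 6 / ‖linePt y ξ‖ ≤ 1 := by
      rw [div_le_one hpos]; nlinarith [pi_lt_four, pi_pos]
    linarith [exp_le_exp.2 this, exp_one_lt_d9]
  refine (norm_laplaceImage_le (by positivity) (linePt_ne_zero hy ξ)).trans ?_
  have e1 : √‖linePt y ξ‖ * (‖linePt y ξ‖ ^ 2)⁻¹ = ‖linePt y ξ‖ ^ (-(3 / 2) : ℝ) := by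
    rw [← rpow_natCast, ← rpow_neg hpos.le, sqrt_eq_rpow, ← rpow_add hpos]
    norm_num
  have e2 : ‖linePt y ξ‖ ^ (-(3 / 2) : ℝ) ≤ |ξ| ^ (-(3 / 2) : ℝ) :=
    rpow_le_rpow_of_nonpos hξ0 h3 (by norm_num)
  have h6 : (π ^ 2 / 6) ^ 2 ≤ 3 := by nlinarith [sq_nonneg π]
  calc √‖linePt y ξ‖ * ((π ^ 2 / 6 / ‖linePt y ξ‖) ^ 2 * rexp (π ^ 2 / 6 / ‖linePt y ξ‖))
      = (π ^ 2 / 6) ^ 2 * rexp (π ^ 2 / 6 / ‖linePt y ξ‖) *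
        (√‖linePt y ξ‖ * (‖linePt y ξ‖ ^ 2)⁻¹) := by field_simp
    _ ≤ 3 * 3 * |ξ| ^ (-(3 / 2) : ℝ) := by rw [e1]; gcongr
    _ = _ := by ring

theorem norm_integral_tail_le {y : ℝ} (hy : 0 < y) (t : ℝ) :
    ‖(∫ ξ, Complex.exp (linePt y ξ * t) * laplaceImage (π ^ 2 / 6) (linePt y ξ)) -
      ∫ ξ in (-1 / 2 : ℝ)..(1 / 2),
        Complex.exp (linePt y ξ * t) * laplaceImage (π ^ 2 / 6) (linePt y ξ)‖ ≤
      54 * rexp (t * y) := by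
  set f : ℝ → ℂ := fun ξ ↦ Complex.exp (linePt y ξ * t) * laplaceImage (π ^ 2 / 6) (linePt y ξ)
    with hf
  have hi : Integrable f := integrable_exp_mul_laplaceImage (by positivity) hy t
  have hb (ξ : ℝ) (hξ : 1 / 2 < |ξ|) : ‖f ξ‖ ≤ rexp (t * y) * (9 * |ξ| ^ (-(3 / 2) : ℝ)) := by
    rw [hf, norm_mul, norm_exp_linePt_mul]
    gcongr
    exact norm_laplaceImage_linePt_le hy hξ
  have hpow : ∫ ξ in Ioi (1 / 2 : ℝ), rexp (t * y) * (9 * ξ ^ (-(3 / 2) : ℝ)) ≤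
      27 * rexp (t * y) := by
    rw [integral_const_mul, integral_const_mul, integral_Ioi_rpow_of_lt (by norm_num) (by norm_num)]
    have h2 : (1 / 2 : ℝ) ^ (-(3 / 2) + 1 : ℝ) ≤ 3 / 2 := by
      rw [show (-(3 / 2) + 1 : ℝ) = -(1 / 2) by norm_num, one_div, ← rpow_neg_eq_inv_rpow, neg_neg,
        ← one_div, ← sqrt_eq_rpow, sqrt_le_left (by norm_num)]
      norm_num
    have h3 := mul_le_mul_of_nonneg_left h2 (exp_pos (t * y)).le
    generalize (1 / 2 : ℝ) ^ (-(3 / 2) + 1 : ℝ) = x at h3 ⊢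
    calc _ = 18 * (rexp (t * y) * x) := by ring
      _ ≤ _ := by linarith
  have hpi : IntegrableOn (fun ξ : ℝ ↦ rexp (t * y) * (9 * ξ ^ (-(3 / 2) : ℝ))) (Ioi (1 / 2)) :=
    ((integrableOn_Ioi_rpow_of_lt (by norm_num) (by norm_num)).const_mul _).const_mul _
  have hright (g : ℝ → ℂ) (hg : ∀ ξ, 1 / 2 < ξ → ‖g ξ‖ ≤ rexp (t * y) * (9 * ξ ^ (-(3 / 2) : ℝ))) :
      ‖∫ ξ in Ioi (1 / 2 : ℝ), g ξ‖ ≤ 27 * rexp (t * y) :=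
    (norm_integral_le_of_norm_le hpi
      ((ae_restrict_iff' measurableSet_Ioi).2 (.of_forall hg))).trans hpow
  have h1 := hright f fun ξ hξ ↦ by
    simpa [abs_of_pos (show 0 < ξ by linarith)] using hb ξ (hξ.trans_le (le_abs_self ξ))
  have h2 := hright (fun ξ ↦ f (-ξ)) fun ξ hξ ↦ by
    have := hb (-ξ) (by rw [abs_neg]; exact hξ.trans_le (le_abs_self ξ))
    rwa [abs_neg, abs_of_pos (show 0 < ξ by linarith)] at this
  rw [integral_comp_neg_Ioi] at h2
  have h3 : (∫ ξ, f ξ) - ∫ ξ in (-1 / 2 : ℝ)..(1 / 2), f ξ =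
      (∫ ξ in Iic (-(1 / 2) : ℝ), f ξ) + ∫ ξ in Ioi (1 / 2 : ℝ), f ξ := by
    have e1 := intervalIntegral.integral_Iic_add_Ioi (b := (-(1 / 2) : ℝ)) hi.integrableOn
      hi.integrableOn
    have e2 := intervalIntegral.integral_interval_add_Ioi (a := (-(1 / 2) : ℝ)) (b := 1 / 2)
      hi.integrableOn hi.integrableOn
    rw [← e1, ← e2, neg_div]; ring
  rw [h3]
  refine (norm_add_le _ _).trans ?_
  linarith

theorem norm_genP_mul_exp_sub_le {y ξ t : ℝ} {n : ℕ} (ht : t = n - 1 / 24) (hy : 0 < y)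
    (hy1 : y ≤ 1) (hξ : |ξ| ≤ 1 / 2) :
    ‖genP (linePt y ξ) * Complex.exp (n * linePt y ξ) - (√(2 * π) : ℂ)⁻¹ *
      (Complex.exp (linePt y ξ * t) * laplaceImage (π ^ 2 / 6) (linePt y ξ))‖ ≤
      rexp (t * y) * (1 + π ^ 2 / 6 / y + rexp (π ^ 2 / 6 + (π ^ 2 + y ^ 2) / (24 * y))) := by
  have hexp : Complex.exp (-linePt y ξ / 24) * Complex.exp (n * linePt y ξ) =
      Complex.exp (linePt y ξ * t) := by
    rw [← Complex.exp_add, ht]; congr 1; push_cast; ring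
  have h1 : genP (linePt y ξ) * Complex.exp (n * linePt y ξ) - (√(2 * π) : ℂ)⁻¹ *
      (Complex.exp (linePt y ξ * t) * laplaceImage (π ^ 2 / 6) (linePt y ξ)) =
      Complex.exp (linePt y ξ * t) * ((√(2 * π) : ℂ)⁻¹ * linePt y ξ ^ (1 / 2 : ℂ) *
        (1 + π ^ 2 / 6 / linePt y ξ) +
        cuspFactor (linePt y ξ) * (genP (4 * π ^ 2 / linePt y ξ) - 1)) := by
    rw [genP_eq_cuspFactor_mul (by simpa)]
    linear_combination cuspFactor (linePt y ξ) * genP (4 * π ^ 2 / linePt y ξ) * hexp +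
      Complex.exp (linePt y ξ * t) * cuspFactor_eq (linePt y ξ)
  rw [h1, norm_mul, norm_exp_linePt_mul]
  gcongr
  refine (norm_add_le _ _).trans (add_le_add ?_ (norm_cuspFactor_mul_le hy hy1 hξ))
  rw [norm_mul]
  have h2 : ‖(√(2 * π) : ℂ)⁻¹ * linePt y ξ ^ (1 / 2 : ℂ)‖ ≤ 1 := by
    rw [norm_mul, norm_cpow_half, norm_inv, Complex.norm_real, norm_eq_abs,
      abs_of_pos (by positivity), inv_mul_le_iff₀ (by positivity), mul_one]
    exact sqrt_le_sqrt (norm_linePt_le hy hy1 hξ).2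
  refine (mul_le_of_le_one_left (norm_nonneg _) h2).trans ((norm_add_le _ _).trans ?_)
  rw [norm_one]
  gcongr
  rw [show (π ^ 2 / 6 : ℂ) = ((π ^ 2 / 6 : ℝ) : ℂ) by push_cast; rfl, norm_div,
    Complex.norm_real, norm_eq_abs, abs_of_pos (by positivity)]
  gcongr
  exact le_norm_linePt ξ

theorem abs_card_partition_sub_le {y t : ℝ} {n : ℕ} (ht : t = n - 1 / 24) (ht0 : 0 < t)
    (hy : 0 < y) (hy1 : y ≤ 1) :
    |(Fintype.card (Nat.Partition n) : ℝ) - laplaceKernel (π * √(2 / 3)) t / (√2 * π)| ≤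
      rexp (t * y) * (55 + π ^ 2 / 6 / y + rexp (π ^ 2 / 6 + (π ^ 2 + y ^ 2) / (24 * y))) := by
  set B := rexp (π ^ 2 / 6 + (π ^ 2 + y ^ 2) / (24 * y)) with hB
  set f : ℝ → ℂ := fun ξ ↦ Complex.exp (linePt y ξ * t) * laplaceImage (π ^ 2 / 6) (linePt y ξ)
    with hf
  set G : ℝ → ℂ := fun ξ ↦ genP (linePt y ξ) * Complex.exp (n * linePt y ξ) with hG
  have hpG : (Fintype.card (Nat.Partition n) : ℂ) = ∫ ξ in (-1 / 2 : ℝ)..(1 / 2), G ξ :=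
    card_partition_eq_integral hy n
  have hGi : IntervalIntegrable G volume (-1 / 2) (1 / 2) := by
    by_contra h
    rw [intervalIntegral.integral_undef h] at hpG
    exact Fintype.card_ne_zero (Nat.cast_eq_zero.1 hpG)
  have hfi : Integrable f := integrable_exp_mul_laplaceImage (by positivity) hy t
  have hfI : IntervalIntegrable (fun ξ ↦ (√(2 * π) : ℂ)⁻¹ * f ξ) volume (-1 / 2) (1 / 2) :=
    (hfi.const_mul _).intervalIntegrable
  have hinv : ∫ ξ, f ξ = (laplaceKernel (π * √(2 / 3)) t / √π : ℝ) := by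
    have := integral_exp_mul_laplaceImage (c := π * √(2 / 3)) (by positivity) hy ht0
    rwa [mul_pow, sq_sqrt (by norm_num), show π ^ 2 * (2 / 3) / 4 = π ^ 2 / 6 by ring] at this
  have hmain : ‖∫ ξ in (-1 / 2 : ℝ)..(1 / 2), (G ξ - (√(2 * π) : ℂ)⁻¹ * f ξ)‖ ≤
      rexp (t * y) * (1 + π ^ 2 / 6 / y + B) := by
    have := intervalIntegral.norm_integral_le_of_norm_le_const
      (a := (-1 / 2 : ℝ)) (b := 1 / 2) (f := fun ξ ↦ G ξ - (√(2 * π) : ℂ)⁻¹ * f ξ)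
      (C := rexp (t * y) * (1 + π ^ 2 / 6 / y + B)) fun ξ hξ ↦ by
        rw [uIoc_of_le (by norm_num)] at hξ
        exact norm_genP_mul_exp_sub_le ht hy hy1
          (abs_le.2 ⟨by linarith [hξ.1], hξ.2⟩)
    norm_num at this
    norm_num
    exact this
  rw [intervalIntegral.integral_sub hGi hfI, ← hpG, intervalIntegral.integral_const_mul] at hmain
  have htail := norm_integral_tail_le hy t
  rw [← hf, hinv] at htail
  set J := ∫ ξ in (-1 / 2 : ℝ)..(1 / 2), f ξ with hJ
  have hk : ‖(√(2 * π) : ℂ)⁻¹‖ ≤ 1 := by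
    rw [norm_inv, Complex.norm_real, norm_eq_abs, abs_of_pos (by positivity)]
    refine inv_le_one_of_one_le₀ (one_le_sqrt.2 ?_)
    linarith [pi_gt_three]
  have hconst : ((laplaceKernel (π * √(2 / 3)) t / (√2 * π) : ℝ) : ℂ) =
      (√(2 * π) : ℂ)⁻¹ * (laplaceKernel (π * √(2 / 3)) t / √π : ℝ) := by
    rw [← Complex.ofReal_inv, ← Complex.ofReal_mul, sqrt_mul (by norm_num)]
    congr 1
    have : √π * √π = π := mul_self_sqrt pi_pos.le
    generalize laplaceKernel (π * √(2 / 3)) t = K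
    nth_rewrite 1 [← this]
    field_simp
  rw [← norm_eq_abs, ← Complex.norm_real, Complex.ofReal_sub, hconst, Complex.ofReal_natCast,
    show ∀ a b : ℂ, a - (√(2 * π) : ℂ)⁻¹ * b =
      (a - (√(2 * π) : ℂ)⁻¹ * J) - (√(2 * π) : ℂ)⁻¹ * (b - J) by intros; ring]
  refine (norm_sub_le _ _).trans ?_
  have := mul_le_mul hk htail (norm_nonneg _) zero_le_one
  rw [← norm_mul] at this
  linarith

end

/-- The constant `π √(2/3)` governing the growth of the partition numbers. -/
noncomputable def growthConst : ℝ := π * √(2 / 3)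

theorem growthConst_pos : 0 < growthConst := by unfold growthConst; positivity

theorem growthConst_sq : growthConst ^ 2 = 2 * π ^ 2 / 3 := by
  rw [growthConst, mul_pow, sq_sqrt (by norm_num)]; ring

theorem growthConst_sq_mem : 6.57 < growthConst ^ 2 ∧ growthConst ^ 2 < 6.6 := by
  rw [growthConst_sq]
  constructor <;> nlinarith [pi_gt_d4, pi_lt_d4]

theorem growthConst_mem : 2.56 < growthConst ∧ growthConst < 2.57 := by
  obtain ⟨h1, h2⟩ := growthConst_sq_mem
  constructor <;> nlinarith [growthConst_pos]

/-- The dominant term in the asymptotics of the partition number at `t + 1 / 24`. -/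
noncomputable def mainTerm (t : ℝ) : ℝ :=
  (growthConst * √t - 1) * rexp (growthConst * √t) / (4 * √2 * π * (t * √t))

theorem laplaceKernel_div_eq {t : ℝ} (ht : 0 < t) :
    laplaceKernel growthConst t / (√2 * π) = mainTerm t +
      (1 - (growthConst * √t) ^ 2 / 2 - (growthConst * √t + 1) * rexp (-(growthConst * √t)) / 2) /
        (2 * √2 * π * (t * √t)) := by
  rw [laplaceKernel, mainTerm, kernelNum, sinh_eq, cosh_eq]
  field_simp
  ring

theorem abs_card_partition_sub_mainTerm_le {t : ℝ} {n : ℕ} (ht : t = n - 1 / 24)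
    (hu : 80 ≤ growthConst * √t) :
    |(Fintype.card (Nat.Partition n) : ℝ) - mainTerm t| ≤ 9 * rexp (5 / 8 * (growthConst * √t)) := by
  set u := growthConst * √t with hu_def
  have hu0 : 0 < u := by linarith
  have ht0 : 0 < t := by
    by_contra h
    rw [hu_def, sqrt_eq_zero_of_nonpos (not_lt.1 h)] at hu0
    simp at hu0
  have hu2 : u ^ 2 = 2 * π ^ 2 / 3 * t := by
    rw [hu_def, mul_pow, growthConst_sq, sq_sqrt ht0.le]
  have hpi2 : π ^ 2 < 9.87 := by nlinarith [pi_gt_three, pi_lt_d4]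
  set y := π ^ 2 / (3 * u) with hy
  have hy0 : 0 < y := by positivity
  have hy1 : y ≤ 1 / 24 := by
    rw [hy, div_le_iff₀ (by positivity)]; linarith
  have hty : t * y = u / 2 := by
    rw [hy]; field_simp; linarith
  have hAy : π ^ 2 / 6 / y = u / 2 := by
    rw [hy]; field_simp; norm_num
  have hexp : π ^ 2 / 6 + (π ^ 2 + y ^ 2) / (24 * y) ≤ 2 + u / 8 := by
    have : (π ^ 2 + y ^ 2) / (24 * y) = (π ^ 2 / 6 / y) / 4 + y / 24 := by field_simp; ring
    rw [this, hAy]; linarith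
  have h := abs_card_partition_sub_le ht ht0 hy0 (hy1.trans (by norm_num))
  rw [← growthConst, laplaceKernel_div_eq ht0, ← hu_def, hty, hAy] at h
  have ht1 : 1 ≤ t := by nlinarith
  have hden : 1 ≤ 2 * √2 * π * (t * √t) := by
    have h1 : 1 ≤ √t := one_le_sqrt.2 ht1
    have h2 : 1 ≤ √2 := one_le_sqrt.2 (by norm_num)
    have h3 : 1 ≤ t * √t := one_le_mul_of_one_le_of_one_le ht1 h1
    nlinarith [pi_gt_three, mul_nonneg (sub_nonneg.2 h2) pi_pos.le]
  have hq : |(1 - u ^ 2 / 2 - (u + 1) * rexp (-u) / 2) / (2 * √2 * π * (t * √t))| ≤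
      8 * rexp (u / 2) := by
    rw [abs_div, abs_of_pos (zero_lt_one.trans_le hden)]
    refine (div_le_self (abs_nonneg _) hden).trans ?_
    have h1 : rexp (-u) ≤ 1 := exp_le_one_iff.2 (by linarith)
    have h2 := pow_div_factorial_le_exp (u / 2) (by positivity) 2
    norm_num at h2
    have h3 : 0 ≤ (u + 1) * rexp (-u) := by positivity
    have h4 : (u + 1) * rexp (-u) ≤ u + 1 := mul_le_of_le_one_right (by positivity) h1
    rw [abs_le]; constructor <;> nlinarith
  have hgrow : 63 + u / 2 ≤ rexp (u / 8) := by
    refine le_trans ?_ (pow_div_factorial_le_exp (u / 8) (by positivity) 3)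
    norm_num [Nat.factorial]
    nlinarith [mul_nonneg hu0.le (mul_nonneg (sub_nonneg.2 hu) (by linarith : 0 ≤ u + 80))]
  have hB : rexp (π ^ 2 / 6 + (π ^ 2 + y ^ 2) / (24 * y)) ≤ 8 * rexp (u / 8) := by
    refine (exp_le_exp.2 hexp).trans ?_
    rw [exp_add]
    gcongr
    rw [show (2 : ℝ) = 1 + 1 by norm_num, exp_add]
    nlinarith [exp_one_lt_d9, exp_pos 1]
  have hsplit : rexp (5 / 8 * u) = rexp (u / 2) * rexp (u / 8) := by
    rw [← exp_add]; congr 1; ring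
  rw [hsplit]
  have e1 : rexp (u / 2) * (55 + u / 2 + rexp (π ^ 2 / 6 + (π ^ 2 + y ^ 2) / (24 * y))) ≤
      rexp (u / 2) * (55 + u / 2 + 8 * rexp (u / 8)) := by gcongr
  have e2 : rexp (u / 2) * (63 + u / 2) ≤ rexp (u / 2) * rexp (u / 8) := by gcongr
  rw [abs_le] at *
  constructor <;> nlinarith

theorem exp_le_mainTerm {t : ℝ} (ht0 : 0 < t) (hu : 80 ≤ growthConst * √t) :
    9 * rexp (5 / 8 * (growthConst * √t)) ≤ mainTerm t / (20 * t ^ 2) := by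
  obtain ⟨hc1, hc2⟩ := growthConst_sq_mem
  obtain ⟨hc3, hc4⟩ := growthConst_mem
  set c := growthConst
  set u := c * √t with hu_def
  have hw : 0 < √t := sqrt_pos.2 ht0
  have hw2 : √t ^ 2 = t := sq_sqrt ht0.le
  have h1 : 1.3 * u ≤ rexp (u / 16) := by
    have h5 : (148 : ℝ) ≤ rexp 5 := by
      rw [show (5 : ℝ) = (5 : ℕ) * 1 by norm_num, exp_nat_mul]
      refine le_trans (by norm_num : (148 : ℝ) ≤ 2.718 ^ 5) ?_
      gcongr
      linarith [exp_one_gt_d9]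
    have h6 := add_one_le_exp (u / 16 - 5)
    have h7 : rexp (u / 16) = rexp 5 * rexp (u / 16 - 5) := by rw [← exp_add]; congr 1; ring
    rw [h7]
    have h8 : 0 ≤ u / 16 - 5 + 1 := by linarith
    have h9 := mul_le_mul h5 h6 h8 (exp_pos 5).le
    linarith
  have h2 : 4.8 * (c ^ 2) ^ 3 * t ^ 3 ≤ rexp (3 / 8 * u) := by
    have h3 : rexp (3 / 8 * u) = rexp (u / 16) ^ 6 := by
      rw [← exp_nat_mul]; congr 1; push_cast; ring
    have h4 : (1.3 * u) ^ 6 ≤ rexp (u / 16) ^ 6 := by gcongr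
    have h5 : (1.3 * u) ^ 6 = 1.3 ^ 6 * (c ^ 2) ^ 3 * t ^ 3 := by
      rw [show t ^ 3 = (√t ^ 2) ^ 3 by rw [hw2], hu_def]; ring
    rw [h3]
    refine le_trans ?_ h4
    rw [h5]
    gcongr
    norm_num
  have h3 : 4.8 * 283 * t ^ 3 ≤ rexp (3 / 8 * u) := by
    refine le_trans ?_ h2
    gcongr
    calc (283 : ℝ) ≤ 6.57 ^ 3 := by norm_num
      _ ≤ _ := by gcongr
  have hexp : rexp u = rexp (5 / 8 * u) * rexp (3 / 8 * u) := by
    rw [← exp_add]; congr 1; ring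
  have hs2 : √2 ≤ 1.415 := sqrt_le_iff.2 (by norm_num)
  have hK : 720 * (√2 * π) ≤ 3206 := by
    have := mul_le_mul hs2 pi_lt_d4.le pi_pos.le (by norm_num)
    linarith
  have hu1 : 2.52 * √t ≤ u - 1 := by nlinarith
  rw [mainTerm, div_div, le_div_iff₀ (by positivity), hexp]
  have key : 9 * (4 * √2 * π * (t * √t) * (20 * t ^ 2)) ≤ (u - 1) * rexp (3 / 8 * u) := by
    calc 9 * (4 * √2 * π * (t * √t) * (20 * t ^ 2)) = 720 * (√2 * π) * (√t * t ^ 3) := by ring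
      _ ≤ 3206 * (√t * t ^ 3) := by gcongr
      _ ≤ 2.52 * √t * (4.8 * 283 * t ^ 3) := by
        have : 0 < √t * t ^ 3 := by positivity
        nlinarith
      _ ≤ _ := by gcongr; linarith
  have := mul_le_mul_of_nonneg_left key (exp_pos (5 / 8 * u)).le
  linarith

theorem mainTerm_pos {t : ℝ} (ht : 1 ≤ t) : 0 < mainTerm t := by
  have h1 : 1 ≤ √t := one_le_sqrt.2 ht
  have h2 : 0 < growthConst * √t - 1 := by nlinarith [growthConst_mem.1]
  unfold mainTerm
  positivity

/-- The second difference of the square root is at most `(1/4) t^(-3/2) + (1/2) t^(-7/2)`. -/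
theorem two_mul_sqrt_sub_le {t : ℝ} (ht : 1 ≤ t) :
    2 * √t - (√(t - 1) + √(t + 1)) ≤ √t * (1 / t ^ 2 / 4 + (1 / t ^ 2) ^ 2 / 2) := by
  set b := 1 / t ^ 2 with hb
  have hb0 : 0 < b := by positivity
  have hb1 : b ≤ 1 := by rw [hb, div_le_one (by positivity)]; nlinarith
  have htb : t ^ 2 * b = 1 := by rw [hb]; field_simp
  have hw2 : √t ^ 2 = t := sq_sqrt (by linarith)
  have hm2 : √(t - 1) ^ 2 = t - 1 := sq_sqrt (by linarith)
  have hp2 : √(t + 1) ^ 2 = t + 1 := sq_sqrt (by linarith)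
  have hs : t * (1 - b / 2 - b ^ 2 / 2) ≤ √(t - 1) * √(t + 1) := by
    refine (abs_le_of_sq_le_sq' ?_ (by positivity)).2
    rw [mul_pow, mul_pow, hm2, hp2]
    have h1 : (1 - b / 2 - b ^ 2 / 2) ^ 2 ≤ 1 - b := by
      nlinarith [mul_nonneg (sq_nonneg b) (sub_nonneg.2 hb1),
        mul_nonneg (mul_nonneg (sq_nonneg b) hb0.le) (sub_nonneg.2 hb1)]
    have h2 := mul_le_mul_of_nonneg_left h1 (sq_nonneg t)
    linarith
  have hmain : √t * (2 - (b / 4 + b ^ 2 / 2)) ≤ √(t - 1) + √(t + 1) := by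
    refine (abs_le_of_sq_le_sq' ?_ (by positivity)).2
    rw [mul_pow, hw2, add_sq, hm2, hp2]
    have h1 : (2 - (b / 4 + b ^ 2 / 2)) ^ 2 ≤ 4 - b - b ^ 2 := by
      nlinarith [mul_nonneg (sq_nonneg b) (sub_nonneg.2 hb1),
        mul_nonneg (mul_nonneg (sq_nonneg b) hb0.le) (sub_nonneg.2 hb1)]
    have h2 := mul_le_mul_of_nonneg_left h1 (by linarith : 0 ≤ t)
    linarith
  linarith

theorem sqrt_sub_one_add_sqrt_add_one_le {t : ℝ} (ht : 1 ≤ t) :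
    √(t - 1) + √(t + 1) ≤ 2 * √t := by
  have hw2 : √t ^ 2 = t := sq_sqrt (by linarith)
  have hm2 : √(t - 1) ^ 2 = t - 1 := sq_sqrt (by linarith)
  have hp2 : √(t + 1) ^ 2 = t + 1 := sq_sqrt (by linarith)
  refine (abs_le_of_sq_le_sq' ?_ (by positivity)).2
  nlinarith [sq_nonneg (√(t - 1) - √(t + 1))]

/-- `(u(t) - 1) ^ 2` compared with `(u(t-1) - 1) (u(t+1) - 1)`. -/
theorem sq_sub_one_mul_le {t : ℝ} (ht : 999 ≤ t) :
    (growthConst * √t - 1) ^ 2 * (1 - 0.53 * (1 / t ^ 2)) ≤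
      (growthConst * √(t - 1) - 1) * (growthConst * √(t + 1) - 1) := by
  set b := 1 / t ^ 2 with hb
  have hb0 : 0 < b := by positivity
  have htb : t ^ 2 * b = 1 := by rw [hb]; field_simp
  have hb1 : b ≤ 0.00001 := by rw [hb, div_le_iff₀ (by positivity)]; nlinarith
  have hw2 : √t ^ 2 = t := sq_sqrt (by linarith)
  have hm2 : √(t - 1) ^ 2 = t - 1 := sq_sqrt (by linarith)
  have hp2 : √(t + 1) ^ 2 = t + 1 := sq_sqrt (by linarith)
  have hc := growthConst_mem.1
  have hw : 31 ≤ √t := le_sqrt_of_sq_le (by linarith)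
  have hsum := mul_le_mul_of_nonneg_left (sqrt_sub_one_add_sqrt_add_one_le (by linarith : 1 ≤ t))
    growthConst_pos.le
  have hs : t * (1 - 0.501 * b) ≤ √(t - 1) * √(t + 1) := by
    refine (abs_le_of_sq_le_sq' ?_ (by positivity)).2
    rw [mul_pow, mul_pow, hm2, hp2]
    have h1 : (1 - 0.501 * b) ^ 2 ≤ 1 - b := by nlinarith
    have h2 := mul_le_mul_of_nonneg_left h1 (sq_nonneg t)
    linarith
  have hs' := mul_le_mul_of_nonneg_left hs (sq_nonneg growthConst)
  set u := growthConst * √t with hu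
  have hu2 : u ^ 2 = growthConst ^ 2 * t := by rw [hu, mul_pow, hw2]
  have hu79 : 79 ≤ u := by nlinarith
  have hN : 0.501 * u ^ 2 ≤ 0.53 * (u - 1) ^ 2 := by nlinarith
  have hN' := mul_le_mul_of_nonneg_right hN hb0.le
  nlinarith

theorem sq_mainTerm_mul_le {t : ℝ} (ht : 999 ≤ t) :
    mainTerm t ^ 2 * (1 - 0.53 * (1 / t ^ 2)) ≤
      mainTerm (t - 1) * mainTerm (t + 1) * ((1 - 1 / t ^ 2) * (1 - 1 / t ^ 2 / 2) *
        rexp (growthConst * (2 * √t - (√(t - 1) + √(t + 1))))) := by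
  have hmid := sq_sub_one_mul_le ht
  set b := 1 / t ^ 2 with hb
  have hb0 : 0 < b := by positivity
  have htb : t ^ 2 * b = 1 := by rw [hb]; field_simp
  have hb1 : b ≤ 0.00001 := by rw [hb, div_le_iff₀ (by positivity)]; nlinarith
  have hw : 0 < √t := sqrt_pos.2 (by linarith)
  have hm : 0 < √(t - 1) := sqrt_pos.2 (by linarith)
  have hp : 0 < √(t + 1) := sqrt_pos.2 (by linarith)
  have hw2 : √t ^ 2 = t := sq_sqrt (by linarith)
  have hm2 : √(t - 1) ^ 2 = t - 1 := sq_sqrt (by linarith)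
  have hp2 : √(t + 1) ^ 2 = t + 1 := sq_sqrt (by linarith)
  have hs : √(t - 1) * √(t + 1) ≤ t * (1 - b / 2) := by
    refine (abs_le_of_sq_le_sq' ?_ (by nlinarith)).2
    rw [mul_pow, mul_pow, hm2, hp2]
    nlinarith [mul_nonneg (sq_nonneg t) (sq_nonneg b)]
  set U := growthConst * √t - 1
  set V := (growthConst * √(t - 1) - 1) * (growthConst * √(t + 1) - 1) with hV
  have hV0 : 0 ≤ V := le_trans (by
    have : 0 ≤ 1 - 0.53 * b := by linarith
    positivity) hmid
  set K := 4 * √2 * π with hK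
  have hK0 : 0 < K := by positivity
  have e0 : mainTerm t ^ 2 = U ^ 2 * rexp (2 * (growthConst * √t)) / (K ^ 2 * t ^ 3) := by
    rw [mainTerm, div_pow, mul_pow, mul_pow, mul_pow t, hw2, ← exp_nat_mul]
    push_cast
    congr 1
  have e1 : mainTerm (t - 1) * mainTerm (t + 1) =
      V * rexp (growthConst * √(t - 1) + growthConst * √(t + 1)) /
        (K ^ 2 * (t ^ 2 * (1 - b)) * (√(t - 1) * √(t + 1))) := by
    rw [mainTerm, mainTerm, div_mul_div_comm, exp_add, hV]
    congr 1
    · ring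
    · linear_combination (K ^ 2 * (√(t - 1) * √(t + 1))) * htb
  have e2 : rexp (2 * (growthConst * √t)) =
      rexp (growthConst * √(t - 1) + growthConst * √(t + 1)) *
        rexp (growthConst * (2 * √t - (√(t - 1) + √(t + 1)))) := by
    rw [← exp_add]; congr 1; ring
  rw [e0, e1, e2]
  set X := rexp (growthConst * √(t - 1) + growthConst * √(t + 1))
  set Y := rexp (growthConst * (2 * √t - (√(t - 1) + √(t + 1))))
  have hb2 : 0 < 1 - b := by linarith
  have ht0 : 0 < t := by linarith
  have lhs : U ^ 2 * (X * Y) / (K ^ 2 * t ^ 3) * (1 - 0.53 * b) =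
      X * Y / (K ^ 2 * t ^ 2) * (U ^ 2 * (1 - 0.53 * b) / t) := by
    field_simp
  have rhs : V * X / (K ^ 2 * (t ^ 2 * (1 - b)) * (√(t - 1) * √(t + 1))) *
      ((1 - b) * (1 - b / 2) * Y) =
      X * Y / (K ^ 2 * t ^ 2) * (V * (1 - b / 2) / (√(t - 1) * √(t + 1))) := by
    field_simp
  rw [lhs, rhs]
  refine mul_le_mul_of_nonneg_left ?_ (by positivity)
  rw [div_le_div_iff₀ ht0 (by positivity)]
  calc U ^ 2 * (1 - 0.53 * b) * (√(t - 1) * √(t + 1)) ≤ V * (t * (1 - b / 2)) := by gcongr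
    _ = _ := by ring

/-- The second difference of the exponent, exponentiated, against its leading term. -/
theorem exp_growthConst_mul_le {t : ℝ} (ht : 999 ≤ t) :
    rexp (growthConst * (2 * √t - (√(t - 1) + √(t + 1)))) ≤
      (1 + growthConst / 4 / (t * √t)) * (1 + 0.002 * (1 / t ^ 2)) := by
  have h := mul_le_mul_of_nonneg_left (two_mul_sqrt_sub_le (by linarith : 1 ≤ t))
    growthConst_pos.le
  have hc0 := growthConst_pos
  have hc := growthConst_mem
  have hw : 31 ≤ √t := le_sqrt_of_sq_le (by linarith)
  have hw2 : √t ^ 2 = t := sq_sqrt (by linarith)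
  have ht0 : 0 < t := by linarith
  have hw0 : 0 < √t := by linarith
  set b := 1 / t ^ 2 with hb
  set X := growthConst / 4 / (t * √t) with hX
  have hb0 : 0 < b := by positivity
  have hb1 : b ≤ 0.00001 := by rw [hb, div_le_iff₀ (by positivity)]; nlinarith
  have hX0 : 0 < X := by positivity
  have hX1 : X ≤ 0.0001 := by
    rw [hX, div_le_iff₀ (by positivity)]; nlinarith [mul_le_mul ht hw (by norm_num) ht0.le]
  have hX2 : X ^ 2 ≤ 0.0005 * b := by
    have : X ^ 2 = growthConst ^ 2 / 16 / t * b := by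
      rw [hX, hb, div_pow, mul_pow, hw2]; field_simp; norm_num
    rw [this]
    gcongr
    rw [div_le_iff₀ ht0]
    nlinarith [growthConst_sq_mem.2]
  have hd : growthConst * (√t * (b / 4 + b ^ 2 / 2)) = X * (1 + 2 * b) := by
    have : growthConst * √t * b / 4 = X := by
      rw [hX, hb]
      field_simp
      rw [hw2]
    rw [← this]; ring
  rw [hd] at h
  have hbd : X * (1 + 2 * b) ≤ 0.001 := by nlinarith
  have hexp := exp_bound' (x := X * (1 + 2 * b)) (by positivity) (by linarith) (n := 2) (by norm_num)
  simp only [Finset.sum_range_succ, Finset.sum_range_zero, Nat.factorial] at hexp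
  norm_num at hexp
  refine (exp_le_exp.2 h).trans (hexp.trans ?_)
  have h2 : (1 + 2 * b) ^ 2 ≤ 1.01 := by nlinarith
  have h3 : (X * (1 + 2 * b)) ^ 2 ≤ 0.0005 * b * 1.01 := by
    rw [mul_pow]; gcongr
  nlinarith [mul_pos hX0 hb0]

theorem one_add_mul_le_one_add_div {t n : ℝ} (ht : 999 ≤ t) (hn : n = t + 1 / 24) :
    (1 + growthConst / 4 / (t * √t)) * (1 - 0.002 * (1 / t ^ 2)) ≤
      1 + growthConst / 4 / (n * √n) := by
  have hc0 := growthConst_pos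
  have hc := growthConst_mem
  have hw : 31 ≤ √t := le_sqrt_of_sq_le (by linarith)
  have hw2 : √t ^ 2 = t := sq_sqrt (by linarith)
  have ht0 : 0 < t := by linarith
  have hw0 : 0 < √t := by linarith
  have hn0 : 0 < n := by linarith
  have hX : growthConst / 4 / (t * √t) * (1 / (16 * t)) ≤ 0.002 * (1 / t ^ 2) := by
    have : growthConst / 4 / (t * √t) * (1 / (16 * t)) = growthConst / 64 / √t * (1 / t ^ 2) := by
      field_simp; norm_num
    rw [this]
    gcongr
    rw [div_le_iff₀ hw0]
    linarith
  have hn' : √n ≤ √t * (1 + 1 / (48 * t)) := by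
    refine sqrt_le_iff.2 ⟨by positivity, ?_⟩
    rw [mul_pow, hw2, hn]
    have : t * (1 + 1 / (48 * t)) ^ 2 = t + 1 / 24 + 1 / (48 ^ 2 * t) := by
      field_simp; ring
    rw [this]
    have : 0 < 1 / (48 ^ 2 * t) := by positivity
    linarith
  have key : growthConst / 4 / (t * √t) * (1 - 1 / (16 * t)) ≤ growthConst / 4 / (n * √n) := by
    rw [le_div_iff₀ (by positivity), div_mul_eq_mul_div, div_mul_eq_mul_div,
      div_le_iff₀ (by positivity)]
    set a := 1 / (48 * t) with ha
    have ha0 : 0 < a := by positivity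
    have ha1 : a ≤ 0.001 := by rw [ha, div_le_iff₀ (by positivity)]; linarith
    have e1 : 1 / (16 * t) = 3 * a := by rw [ha]; field_simp; norm_num
    have e2 : n = t * (1 + 2 * a) := by rw [ha, hn]; field_simp; ring
    have h1 : n * √n ≤ t * (1 + 2 * a) * (√t * (1 + a)) := by
      rw [← e2]; gcongr
    have h3 : (1 - 3 * a) * ((1 + 2 * a) * (1 + a)) ≤ 1 := by nlinarith [pow_pos ha0 3]
    rw [e1]
    calc growthConst / 4 * (1 - 3 * a) * (n * √n)
        ≤ growthConst / 4 * (1 - 3 * a) * (t * (1 + 2 * a) * (√t * (1 + a))) := by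
          have : 0 ≤ 1 - 3 * a := by linarith
          gcongr
      _ = growthConst / 4 * (t * √t) * ((1 - 3 * a) * ((1 + 2 * a) * (1 + a))) := by ring
      _ ≤ growthConst / 4 * (t * √t) * 1 := by gcongr
      _ = _ := by ring
  have : 0 < growthConst / 4 / (t * √t) * (0.002 * (1 / t ^ 2)) := by positivity
  linarith

theorem error_factor_lt {b : ℝ} (hb0 : 0 < b) (hb1 : b ≤ 0.00001) :
    (1 - b) * (1 - b / 2) * (1 + 0.002 * b) * (1 + b / 19) ^ 2 <
      (1 - 0.53 * b) * (1 - b / 19) ^ 2 * (1 - 0.002 * b) := by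
  have hm4 : 0 < 1 - 0.53 * b := by linarith
  have hm5 : 0 < 1 - 0.002 * b := by linarith
  have f1 : (1 - b) * (1 - b / 2) ≤ 1 - 1.49 * b := by nlinarith
  have f2 : (1 + 0.002 * b) * (1 + b / 19) ^ 2 ≤ 1 + 0.11 * b := by
    have : (1 + b / 19) ^ 2 ≤ 1 + 0.106 * b := by nlinarith
    calc _ ≤ (1 + 0.002 * b) * (1 + 0.106 * b) := by gcongr
      _ ≤ _ := by nlinarith
  have f3 : 1 - 0.7 * b ≤ (1 - 0.53 * b) * (1 - b / 19) ^ 2 * (1 - 0.002 * b) := by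
    have g1 : 1 - 0.106 * b ≤ (1 - b / 19) ^ 2 := by nlinarith
    have g2 : 1 - 0.64 * b ≤ (1 - 0.53 * b) * (1 - b / 19) ^ 2 :=
      le_trans (by nlinarith) (mul_le_mul_of_nonneg_left g1 hm4.le)
    exact le_trans (by nlinarith) (mul_le_mul_of_nonneg_right g2 hm5.le)
  have f4 : (1 - b) * (1 - b / 2) * ((1 + 0.002 * b) * (1 + b / 19) ^ 2) ≤
      (1 - 1.49 * b) * (1 + 0.11 * b) :=
    mul_le_mul f1 f2 (by positivity) (by linarith)
  nlinarith

theorem sq_card_partition_lt {m : ℕ} (hm : 1000 ≤ m) :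
    (Fintype.card (Nat.Partition (m + 1)) : ℝ) ^ 2 <
      Fintype.card (Nat.Partition m) * Fintype.card (Nat.Partition (m + 2)) *
        (1 + growthConst / 4 / (((m + 1 : ℕ) : ℝ) * √((m + 1 : ℕ) : ℝ))) := by
  have hmR : (1000 : ℝ) ≤ m := by exact_mod_cast hm
  obtain ⟨t, ht⟩ : ∃ t : ℝ, t = ((m + 1 : ℕ) : ℝ) - 1 / 24 := ⟨_, rfl⟩
  have ht' : t = m + 1 - 1 / 24 := by rw [ht]; push_cast; ring
  have ht999 : 1000 ≤ t := by linarith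
  have hu : ∀ {s : ℝ}, t - 1 ≤ s → 80 ≤ growthConst * √s := by
    intro s hs
    have h1 : 31.5 ≤ √s := le_sqrt_of_sq_le (by norm_num; linarith)
    nlinarith [growthConst_mem.1]
  have h0 := (abs_card_partition_sub_mainTerm_le (n := m) (t := t - 1) (by rw [ht']; ring)
    (hu le_rfl)).trans (exp_le_mainTerm (by linarith) (hu le_rfl))
  have h1 := (abs_card_partition_sub_mainTerm_le (n := m + 1) (t := t) ht
    (hu (by linarith))).trans (exp_le_mainTerm (by linarith) (hu (by linarith)))
  have h2 := (abs_card_partition_sub_mainTerm_le (n := m + 2) (t := t + 1)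
    (by rw [ht']; push_cast; ring)
    (hu (by linarith))).trans (exp_le_mainTerm (by linarith) (hu (by linarith)))
  have hH := sq_mainTerm_mul_le (t := t) (by linarith)
  have hE := exp_growthConst_mul_le (t := t) (by linarith)
  have hY := one_add_mul_le_one_add_div (t := t) (n := ((m + 1 : ℕ) : ℝ)) (by linarith)
    (by rw [ht]; ring)
  have hA := mainTerm_pos (t := t - 1) (by linarith)
  have hB := mainTerm_pos (t := t) (by linarith)
  have hC := mainTerm_pos (t := t + 1) (by linarith)
  have hinv0 : mainTerm (t - 1) / (20 * (t - 1) ^ 2) ≤ mainTerm (t - 1) * (1 / t ^ 2 / 19) := by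
    rw [div_eq_mul_inv]
    refine mul_le_mul_of_nonneg_left ?_ hA.le
    rw [div_div, inv_eq_one_div]
    refine one_div_le_one_div_of_le (by positivity) ?_
    nlinarith
  have hinv1 : mainTerm t / (20 * t ^ 2) ≤ mainTerm t * (1 / t ^ 2 / 19) := by
    rw [div_eq_mul_inv]
    refine mul_le_mul_of_nonneg_left ?_ hB.le
    rw [div_div, inv_eq_one_div]
    refine one_div_le_one_div_of_le (by positivity) ?_
    nlinarith
  have hinv2 : mainTerm (t + 1) / (20 * (t + 1) ^ 2) ≤ mainTerm (t + 1) * (1 / t ^ 2 / 19) := by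
    rw [div_eq_mul_inv]
    refine mul_le_mul_of_nonneg_left ?_ hC.le
    rw [div_div, inv_eq_one_div]
    refine one_div_le_one_div_of_le (by positivity) ?_
    nlinarith
  have hX0 : 0 < 1 + growthConst / 4 / (t * √t) := by
    have := growthConst_pos
    positivity
  set Y := 1 + growthConst / 4 / (((m + 1 : ℕ) : ℝ) * √((m + 1 : ℕ) : ℝ))
  set X := 1 + growthConst / 4 / (t * √t)
  set E := rexp (growthConst * (2 * √t - (√(t - 1) + √(t + 1))))
  set A := mainTerm (t - 1)
  set B := mainTerm t
  set C := mainTerm (t + 1)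
  set b := 1 / t ^ 2 with hb
  have hb0 : 0 < b := by positivity
  have hb1 : b ≤ 0.00001 := by rw [hb, div_le_iff₀ (by positivity)]; nlinarith
  have hP0 : A * (1 - b / 19) ≤ Fintype.card (Nat.Partition m) := by
    linarith [(abs_le.1 h0).1]
  have hP1 : (Fintype.card (Nat.Partition (m + 1)) : ℝ) ≤ B * (1 + b / 19) := by
    linarith [(abs_le.1 h1).2]
  have hP2 : C * (1 - b / 19) ≤ Fintype.card (Nat.Partition (m + 2)) := by
    linarith [(abs_le.1 h2).1]
  have hm1 : 0 < 1 - b / 19 := by linarith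
  have hm2 : 0 < 1 - b := by linarith
  have hm3 : 0 < 1 - b / 2 := by linarith
  have hm4 : 0 < 1 - 0.53 * b := by linarith
  have hm5 : 0 < 1 - 0.002 * b := by linarith
  have hpoly := error_factor_lt hb0 hb1
  have hsq : (Fintype.card (Nat.Partition (m + 1)) : ℝ) ^ 2 ≤ (B * (1 + b / 19)) ^ 2 := by
    gcongr
  refine hsq.trans_lt (lt_of_lt_of_le ?_ (mul_le_mul
    (mul_le_mul hP0 hP2 (by positivity) (by positivity)) hY (by positivity) (by positivity)))
  refine lt_of_mul_lt_mul_right ?_ hm4.le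
  calc (B * (1 + b / 19)) ^ 2 * (1 - 0.53 * b)
      = B ^ 2 * (1 - 0.53 * b) * (1 + b / 19) ^ 2 := by ring
    _ ≤ A * C * ((1 - b) * (1 - b / 2) * (X * (1 + 0.002 * b))) * (1 + b / 19) ^ 2 := by
        refine mul_le_mul_of_nonneg_right (hH.trans ?_) (by positivity)
        gcongr
    _ = A * C * X * ((1 - b) * (1 - b / 2) * (1 + 0.002 * b) * (1 + b / 19) ^ 2) := by ring
    _ < A * C * X * ((1 - 0.53 * b) * (1 - b / 19) ^ 2 * (1 - 0.002 * b)) :=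
        mul_lt_mul_of_pos_left hpoly (by positivity)
    _ = _ := by ring

section

open Finset

/-- `∑_{n < N} boundedCount k n * B ^ n` modulo `B ^ N`, computed as
`∏_{i < k} (1 + B ^ (i + 1) + B ^ (2 * (i + 1)) + ⋯)`. -/
def packedCount (B N : ℕ) : ℕ → ℕ
  | 0 => 1 % B ^ N
  | k + 1 => packedCount B N k *
      (((B ^ (k + 1)) ^ (N / (k + 1) + 1) - 1) / (B ^ (k + 1) - 1)) % B ^ N

theorem sum_range_ite_sub_mul_pow {R : Type*} [CommRing R] {x : R} {N : ℕ} (hx : x ^ N = 0)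
    (g : ℕ → R) (k : ℕ) :
    ∑ n ∈ range N, (if k ≤ n then g (n - k) else 0) * x ^ n =
      x ^ k * ∑ n ∈ range N, g n * x ^ n := by
  rcases le_total N k with h | h
  · rw [pow_eq_zero_of_le h hx, zero_mul]
    exact sum_eq_zero fun n hn ↦ by
      rcases (mem_range.1 hn).trans_le h |>.not_ge with h'
      rw [if_neg h', zero_mul]
  · obtain ⟨m, rfl⟩ := Nat.exists_eq_add_of_le h
    conv_rhs => rw [add_comm k m, sum_range_add]
    rw [sum_range_add, mul_add, mul_sum, mul_sum, add_comm]
    congr 1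
    · refine sum_congr rfl fun j _ ↦ ?_
      rw [if_pos (Nat.le_add_right _ _), Nat.add_sub_cancel_left]
      ring
    · rw [sum_eq_zero fun n hn ↦ by rw [if_neg (mem_range.1 hn).not_ge, zero_mul], sum_eq_zero]
      intro j _
      linear_combination (g (m + j) * x ^ j) * hx

theorem sum_boundedCount_mul_pow_modEq {B N : ℕ} (hB : 2 ≤ B) (hN : N ≠ 0) (k : ℕ) :
    ∑ n ∈ range N, boundedCount k n * B ^ n ≡ packedCount B N k [MOD B ^ N] := by
  rw [← ZMod.natCast_eq_natCast_iff]
  have hx : (B : ZMod (B ^ N)) ^ N = 0 := by exact_mod_cast ZMod.natCast_self (B ^ N)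
  induction k with
  | zero =>
    obtain ⟨M, rfl⟩ := Nat.exists_eq_succ_of_ne_zero hN
    rw [packedCount, ZMod.natCast_mod, sum_range_succ']
    simp [boundedCount_zero]
  | succ k ih =>
    have hgeom := Nat.geomSum_eq (m := B ^ (k + 1)) (hB.trans (Nat.le_self_pow (by simp) B))
      (N / (k + 1) + 1)
    rw [packedCount, ZMod.natCast_mod, ← hgeom, Nat.cast_mul, ← ih]
    push_cast
    have h1 := mul_neg_geom_sum ((B : ZMod (B ^ N)) ^ (k + 1)) (N / (k + 1) + 1)
    rw [← pow_mul ((B : ZMod (B ^ N))), pow_eq_zero_of_le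
      (Nat.lt_mul_div_succ N (Nat.succ_pos k)).le hx, sub_zero] at h1
    have h2 := sum_range_ite_sub_mul_pow hx (fun n ↦ (boundedCount (k + 1) n : ZMod (B ^ N))) (k + 1)
    have h3 : ∑ n ∈ range N, (boundedCount (k + 1) n : ZMod (B ^ N)) * (B : ZMod (B ^ N)) ^ n =
        ∑ n ∈ range N, (boundedCount k n : ZMod (B ^ N)) * (B : ZMod (B ^ N)) ^ n +
        ∑ n ∈ range N, (if k + 1 ≤ n then (boundedCount (k + 1) (n - (k + 1)) : ZMod (B ^ N))
          else 0) * (B : ZMod (B ^ N)) ^ n := by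
      rw [← sum_add_distrib]
      refine sum_congr rfl fun n _ ↦ ?_
      rw [boundedCount_succ, ← add_mul]; push_cast; rfl
    rw [h2] at h3
    linear_combination (-(∑ n ∈ range N, (boundedCount (k + 1) n : ZMod (B ^ N)) *
      (B : ZMod (B ^ N)) ^ n)) * h1 +
      (∑ i ∈ range (N / (k + 1) + 1), ((B : ZMod (B ^ N)) ^ (k + 1)) ^ i) * h3

theorem sum_mul_pow_lt {B : ℕ} {f : ℕ → ℕ} (N : ℕ) (hf : ∀ n < N, f n < B) :
    ∑ n ∈ range N, f n * B ^ n < B ^ N := by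
  induction N with
  | zero => simp
  | succ N ih =>
    have h1 := ih fun n hn ↦ hf n (by lia)
    have h2 := Nat.mul_le_mul_right (B ^ N) (hf N N.lt_succ_self)
    rw [sum_range_succ, pow_succ']
    lia

theorem sum_mul_pow_div_mod {B N n : ℕ} (hB : 0 < B) {f : ℕ → ℕ} (hf : ∀ n < N, f n < B)
    (hn : n < N) : (∑ i ∈ range N, f i * B ^ i) / B ^ n % B = f n := by
  obtain ⟨m, rfl⟩ := Nat.exists_eq_add_of_lt hn
  have h : ∑ i ∈ range (n + m + 1), f i * B ^ i = ∑ i ∈ range n, f i * B ^ i +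
      B ^ n * (f n + B * ∑ j ∈ range m, f (n + (j + 1)) * B ^ j) := by
    rw [add_assoc, sum_range_add, sum_range_succ', mul_add, mul_sum, mul_sum, add_zero]
    congr 1
    rw [add_comm, mul_comm]
    congr 1
    exact sum_congr rfl fun j _ ↦ by ring
  rw [h, Nat.add_mul_div_left _ _ (by positivity), Nat.div_eq_of_lt
    (sum_mul_pow_lt n fun i hi ↦ hf i (by lia)), zero_add, Nat.add_mul_mod_self_left,
    Nat.mod_eq_of_lt (hf n hn)]

theorem packedCount_lt {B N : ℕ} (hB : 0 < B) (k : ℕ) : packedCount B N k < B ^ N := by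
  cases k <;> exact Nat.mod_lt _ (by positivity)

theorem packedCount_div_mod {B N n : ℕ} (hB : 2 ≤ B)
    (hcard : ∀ n < N, Fintype.card (Nat.Partition n) < B) (hn : n < N) :
    packedCount B N N / B ^ n % B = Fintype.card (Nat.Partition n) := by
  have h := sum_boundedCount_mul_pow_modEq hB (by lia : N ≠ 0) N
  rw [sum_congr rfl fun n hn ↦ by rw [boundedCount_of_le (mem_range.1 hn).le]] at h
  rw [← h.eq_of_lt_of_lt (sum_mul_pow_lt N hcard) (packedCount_lt (by lia) N)]
  exact sum_mul_pow_div_mod (by lia) hcard hn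

theorem card_partition_lt {n : ℕ} (hn : n < 1002) : Fintype.card (Nat.Partition n) < 2 ^ 128 := by
  have h := sum_card_partition_mul_exp_le (s := 1 / 20) (by norm_num) (n + 1)
  have h1 := (single_le_sum (f := fun n ↦ (Fintype.card (Nat.Partition n) : ℝ) *
    rexp (-(1 / 20)) ^ n) (fun _ _ ↦ by positivity) (self_mem_range_succ n)).trans h
  have hnR : (n : ℝ) < 1002 := by exact_mod_cast hn
  have h2 : (Fintype.card (Nat.Partition n) : ℝ) ≤ rexp (π ^ 2 / 6 / (1 / 20) + n / 20) := by
    rw [exp_add]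
    refine le_trans (le_of_eq ?_) (mul_le_mul_of_nonneg_right h1 (exp_pos _).le)
    rw [mul_assoc, ← exp_nat_mul, ← exp_add]
    ring_nf
    simp
  have hpi : π ^ 2 < 10 := by nlinarith [pi_lt_d2, pi_pos]
  have h3 : rexp (π ^ 2 / 6 / (1 / 20) + n / 20) ≤ rexp ((88 : ℕ) * 1) :=
    exp_le_exp.2 (by push_cast; linarith)
  rw [exp_nat_mul] at h3
  have h4 : rexp 1 ^ 88 ≤ 2.7182818286 ^ 88 := by
    gcongr
    exact exp_one_lt_d9.le
  have h5 : (2.7182818286 : ℝ) ^ 88 < 2 ^ 128 := by norm_num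
  exact_mod_cast h2.trans_lt (h3.trans_lt (h4.trans_lt h5))

/-- The squared inequality for three consecutive values, with `3.1415` for `π`. -/
def ratioCheck (n a b c : ℕ) : Bool :=
  Nat.ble ((b ^ 2 - a * c) ^ 2 * (24 * n ^ 3) * 10000 ^ 2 + 1) ((31415 * (a * c)) ^ 2)

/-- `ratioCheck` at `45, …, 44 + k`, reading the values off the base `B` digits of `F`. -/
def packedCheck (B F : ℕ) : ℕ → Bool
  | 0 => true
  | k + 1 => ratioCheck (k + 45) (F / B ^ (k + 44) % B) (F / B ^ (k + 45) % B)
      (F / B ^ (k + 46) % B) && packedCheck B F k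

/-- Case analysis on `F` makes the kernel evaluate it once before the checks. -/
def packedCheckForced (B k : ℕ) : ℕ → Bool
  | 0 => false
  | F + 1 => packedCheck B (F + 1) k

theorem packedCheckForced_packedCount :
    packedCheckForced (2 ^ 128) 956 (packedCount (2 ^ 128) 1002 1002) = true := by
  decide +kernel

theorem ratioCheck_of_packedCheck {B F K k : ℕ} (h : packedCheck B F K = true) (hk : k < K) :
    ratioCheck (k + 45) (F / B ^ (k + 44) % B) (F / B ^ (k + 45) % B)
      (F / B ^ (k + 46) % B) = true := by
  induction K with
  | zero => lia
  | succ K ih =>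
    rw [packedCheck, Bool.and_eq_true] at h
    rcases Nat.lt_succ_iff_lt_or_eq.1 hk with h' | rfl
    · exact ih h.2 h'
    · exact h.1

theorem packedCheck_of_packedCheckForced {B F k : ℕ} (h : packedCheckForced B k F = true) :
    packedCheck B F k = true := by
  cases F with
  | zero => exact absurd h Bool.false_ne_true
  | succ F => exact h

theorem ratioCheck_card_partition {k : ℕ} (hk : k < 956) :
    ratioCheck (k + 45) (Fintype.card (Nat.Partition (k + 44)))
      (Fintype.card (Nat.Partition (k + 45))) (Fintype.card (Nat.Partition (k + 46))) = true := by
  have h := ratioCheck_of_packedCheck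
    (packedCheck_of_packedCheckForced packedCheckForced_packedCount) hk
  have hcard : ∀ n < 1002, Fintype.card (Nat.Partition n) < 2 ^ 128 := fun n hn ↦
    card_partition_lt hn
  rwa [packedCount_div_mod (by norm_num) hcard (by lia),
    packedCount_div_mod (by norm_num) hcard (by lia),
    packedCount_div_mod (by norm_num) hcard (by lia)] at h

theorem sq_lt_of_ratioCheck {n a b c : ℕ} (hn : 0 < n) (h : ratioCheck n a b c = true) :
    (b : ℝ) ^ 2 < a * c * (1 + growthConst / 4 / (n * √n)) := by
  have h1 : (b ^ 2 - a * c) ^ 2 * (24 * n ^ 3) * 10000 ^ 2 < (31415 * (a * c)) ^ 2 :=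
    Nat.le_of_ble_eq_true h
  have hnR : (0 : ℝ) < n := by exact_mod_cast hn
  have hsn : 0 < √(n : ℝ) := sqrt_pos.2 hnR
  have hc := growthConst_pos
  have hac : 0 < a * c := by
    by_contra! h0
    rw [Nat.le_zero.1 h0] at h1
    simp at h1
  have hacR : (0 : ℝ) < a * c := by exact_mod_cast hac
  have h2 : ((b ^ 2 - a * c : ℕ) : ℝ) ^ 2 * (24 * n ^ 3) * 10000 ^ 2 < (31415 * (a * c)) ^ 2 := by
    exact_mod_cast h1
  have h3 : (b : ℝ) ^ 2 - a * c ≤ ((b ^ 2 - a * c : ℕ) : ℝ) := by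
    have : b ^ 2 ≤ (b ^ 2 - a * c) + a * c := by lia
    have : (b : ℝ) ^ 2 ≤ ((b ^ 2 - a * c : ℕ) : ℝ) + a * c := by exact_mod_cast this
    linarith
  set D := ((b ^ 2 - a * c : ℕ) : ℝ)
  have hpi : (3.1415 : ℝ) ^ 2 ≤ π ^ 2 := by
    gcongr
    exact pi_gt_d4.le
  have h4 : D < a * c * (growthConst / 4 / (n * √n)) := by
    refine (abs_lt_of_sq_lt_sq' ?_ (by positivity)).2
    rw [mul_pow, div_pow, div_pow, mul_pow (n : ℝ), growthConst_sq, sq_sqrt hnR.le,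
      mul_div_assoc', lt_div_iff₀ (by positivity)]
    nlinarith [mul_le_mul_of_nonneg_left hpi (sq_nonneg ((a : ℝ) * c))]
  linarith

theorem sq_card_partition_lt_of_le {m : ℕ} (hm : 44 ≤ m) :
    (Fintype.card (Nat.Partition (m + 1)) : ℝ) ^ 2 <
      Fintype.card (Nat.Partition m) * Fintype.card (Nat.Partition (m + 2)) *
        (1 + growthConst / 4 / (((m + 1 : ℕ) : ℝ) * √((m + 1 : ℕ) : ℝ))) := by
  rcases le_or_gt 1000 m with h | h
  · exact sq_card_partition_lt h
  · obtain ⟨k, rfl⟩ := Nat.exists_eq_add_of_le' hm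
    exact sq_lt_of_ratioCheck (by lia) (ratioCheck_card_partition (by lia))

end

end PartitionAsymptotics

theorem partition_ratio_ineq_pi (n : ℕ) (hn : 45 ≤ n) :
    p (n - 1) / p n * (1 + π / (Real.sqrt 24 * (n : ℝ) ^ ((3 : ℝ) / 2))) >
      p n / p (n + 1) := by
  obtain ⟨m, rfl⟩ := Nat.exists_eq_add_of_le' (Nat.one_le_of_lt hn)
  have h := PartitionAsymptotics.sq_card_partition_lt_of_le (m := m) (by lia)
  have hpos (k : ℕ) : 0 < p k := by
    rw [p]
    exact_mod_cast Fintype.card_pos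
  have hpow : ((m + 1 : ℕ) : ℝ) ^ ((3 : ℝ) / 2) = ((m + 1 : ℕ) : ℝ) * √((m + 1 : ℕ) : ℝ) := by
    rw [show (3 : ℝ) / 2 = 1 + 1 / 2 by norm_num, rpow_add (by positivity), rpow_one, sqrt_eq_rpow]
  have hconst : PartitionAsymptotics.growthConst / 4 = π / √24 := by
    have h1 : √24 * √(2 / 3) = 4 := by
      rw [← sqrt_mul (by norm_num), sqrt_eq_iff_mul_self_eq] <;> norm_num
    rw [PartitionAsymptotics.growthConst, div_eq_div_iff (by norm_num) (by positivity)]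
    linear_combination π * h1
  rw [hpow, ← div_div, ← hconst, gt_iff_lt, Nat.add_sub_cancel, div_mul_eq_mul_div,
    div_lt_div_iff₀ (hpos _) (hpos _), ← sq]
  refine h.trans_eq ?_
  rw [p, p]
  ring
end

section
/- The limit as n → ∞ of -n^{3/2} · (log p(n) + log p(n-2) - 2·log p(n-1)) equals π/√24. -/
open Real Filter Topology

section GeneratingFunction

open PowerSeries PowerSeries.WithPiTopology

theorem PowerSeries.hasSum_X_pow_mul {d : ℕ} (hd : 0 < d) :
    HasSum (fun j : ℕ => (X : ℂ⟦X⟧) ^ (d * j))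
      (PowerSeries.mk fun n => if d ∣ n then (1 : ℂ) else 0) := by
  rw [hasSum_iff_hasSum_coeff]
  intro n
  simp only [coeff_X_pow, coeff_mk]
  by_cases h : d ∣ n
  · obtain ⟨j, rfl⟩ := h
    simp only [dvd_mul_right, if_true]
    have h : (fun i => if d * j = d * i then (1 : ℂ) else 0) = fun i => if i = j then 1 else 0 := by
      ext i
      simp only [Nat.mul_right_inj hd.ne', eq_comm]
    rw [h]
    exact hasSum_ite_eq j (1 : ℂ)
  · simp only [h, if_false]
    have h' : (fun i => if n = d * i then (1 : ℂ) else 0) = fun _ => 0 := by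
      ext i
      rw [if_neg]
      rintro rfl
      exact h (dvd_mul_right _ _)
    rw [h']
    exact hasSum_zero

theorem card_restricted_le_powerSeries (N : ℕ) :
    (PowerSeries.mk fun n => ((Nat.Partition.restricted n (· ≤ N)).card : ℂ)) =
      ∏ i ∈ Finset.range N, PowerSeries.mk fun n => if (i + 1) ∣ n then (1 : ℂ) else 0 := by
  have h := Nat.Partition.hasProd_powerSeriesMk_card_restricted ℂ (· ≤ N)
  refine h.unique ?_
  have h2 := hasProd_prod_of_ne_finset_one (L := .unconditional ℕ) (s := Finset.range N)
    (f := fun i ↦ if i + 1 ≤ N then ∑' j : ℕ, (X : ℂ⟦X⟧) ^ ((i + 1) * j) else 1) (by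
      intro i hi
      rw [if_neg]
      simpa using hi)
  rwa [Finset.prod_congr rfl fun i hi => ?_] at h2
  rw [if_pos (Nat.succ_le_of_lt (Finset.mem_range.mp hi)),
    (PowerSeries.hasSum_X_pow_mul i.succ_pos).tsum_eq]

theorem hasSum_dvd_indicator_mul_pow {d : ℕ} (hd : 0 < d) {q : ℂ} (hq : ‖q‖ < 1) :
    HasSum (fun n : ℕ => (if d ∣ n then (1 : ℂ) else 0) * q ^ n) (1 - q ^ d)⁻¹ := by
  have hinj : Function.Injective (fun j : ℕ => d * j) := fun a b h =>
    Nat.eq_of_mul_eq_mul_left hd h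
  rw [← hinj.hasSum_iff]
  · have hqd : ‖q ^ d‖ < 1 := by
      rw [norm_pow]
      exact pow_lt_one₀ (norm_nonneg _) hq hd.ne'
    simpa [Function.comp_def, pow_mul] using hasSum_geometric_of_norm_lt_one hqd
  · intro n hn
    rw [if_neg, zero_mul]
    rintro ⟨j, rfl⟩
    exact hn ⟨j, rfl⟩

theorem summable_norm_and_hasSum_prod (N : ℕ) {q : ℂ} (hq : ‖q‖ < 1) :
    Summable (fun n => ‖coeff n (∏ i ∈ Finset.range N, PowerSeries.mk fun n =>
      if (i + 1) ∣ n then (1 : ℂ) else 0) * q ^ n‖) ∧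
    HasSum (fun n => coeff n (∏ i ∈ Finset.range N, PowerSeries.mk fun n =>
      if (i + 1) ∣ n then (1 : ℂ) else 0) * q ^ n)
      (∏ i ∈ Finset.range N, (1 - q ^ (i + 1))⁻¹) := by
  induction N with
  | zero =>
    have h : ∀ n ∉ ({0} : Finset ℕ), coeff n (1 : ℂ⟦X⟧) * q ^ n = 0 := by
      intro n hn
      simp [coeff_one, show n ≠ 0 by simpa using hn]
    constructor
    · simp only [Finset.range_zero, Finset.prod_empty]
      exact summable_of_ne_finset_zero (s := {0}) fun n hn => by rw [h n hn, norm_zero]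
    · simpa using hasSum_sum_of_ne_finset_zero h
  | succ N ih =>
    have hs : Summable (fun n : ℕ => ‖(if (N + 1) ∣ n then (1 : ℂ) else 0) * q ^ n‖) :=
      (hasSum_dvd_indicator_mul_pow N.succ_pos hq).summable.norm
    have hco : ∀ n, coeff n (∏ i ∈ Finset.range (N + 1), PowerSeries.mk fun n =>
        if (i + 1) ∣ n then (1 : ℂ) else 0) * q ^ n =
        ∑ kl ∈ Finset.HasAntidiagonal.antidiagonal n,
          (coeff kl.1 (∏ i ∈ Finset.range N, PowerSeries.mk fun n =>
          if (i + 1) ∣ n then (1 : ℂ) else 0) * q ^ kl.1) *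
          ((if (N + 1) ∣ kl.2 then (1 : ℂ) else 0) * q ^ kl.2) := by
      intro n
      rw [Finset.prod_range_succ, coeff_mul, Finset.sum_mul]
      refine Finset.sum_congr rfl fun kl hkl => ?_
      rw [← Finset.HasAntidiagonal.mem_antidiagonal.mp hkl, pow_add, coeff_mk]
      ring
    simp only [hco]
    have h1 := summable_norm_sum_mul_antidiagonal_of_summable_norm ih.1 hs
    refine ⟨h1, ?_⟩
    have h2 := tsum_mul_tsum_eq_tsum_sum_antidiagonal_of_summable_norm ih.1 hs
    rw [ih.2.tsum_eq, (hasSum_dvd_indicator_mul_pow N.succ_pos hq).tsum_eq] at h2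
    rw [Finset.prod_range_succ, h2]
    exact h1.of_norm.hasSum

theorem hasSum_card_restricted (N : ℕ) {q : ℂ} (hq : ‖q‖ < 1) :
    HasSum (fun n => ((Nat.Partition.restricted n (· ≤ N)).card : ℂ) * q ^ n)
      (∏ i ∈ Finset.range N, (1 - q ^ (i + 1))⁻¹) := by
  convert (summable_norm_and_hasSum_prod N hq).2 using 2 with n
  rw [← card_restricted_le_powerSeries, coeff_mk]

end GeneratingFunction

theorem card_restricted_le (n N : ℕ) :
    ((Nat.Partition.restricted n (· ≤ N)).card : ℝ) ≤ p n := by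
  unfold p
  exact_mod_cast Finset.card_le_univ _

theorem card_restricted_eq {n N : ℕ} (h : n ≤ N) :
    ((Nat.Partition.restricted n (· ≤ N)).card : ℝ) = p n := by
  unfold p Nat.Partition.restricted
  rw [Finset.filter_true_of_mem, Finset.card_univ]
  intro x _ i hi
  exact (Nat.Partition.le_of_mem_parts hi).trans h

theorem p_pos (n : ℕ) : 0 < p n := by
  unfold p
  exact_mod_cast Fintype.card_pos

theorem summable_p_mul_pow {r B : ℝ} (h0 : 0 ≤ r) (h1 : r < 1)
    (hB : ∀ N, ∏ i ∈ Finset.range N, (1 - r ^ (i + 1))⁻¹ ≤ B) :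
    Summable (fun n => p n * r ^ n) := by
  refine summable_of_sum_range_le (c := B) (fun n => by have := p_pos n; positivity) fun N => ?_
  refine le_trans ?_ (hB N)
  have h := hasSum_card_restricted N (q := (r : ℂ))
    (by rwa [Complex.norm_real, Real.norm_of_nonneg h0])
  have h' : HasSum (fun n => ((Nat.Partition.restricted n (· ≤ N)).card : ℝ) * r ^ n)
      (∏ i ∈ Finset.range N, (1 - r ^ (i + 1))⁻¹) := by
    exact_mod_cast h
  refine le_trans (le_of_eq ?_) (sum_le_hasSum (Finset.range N) (fun n _ => by positivity) h')
  refine Finset.sum_congr rfl fun n hn => ?_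
  rw [card_restricted_eq (Finset.mem_range.mp hn).le]

/-- If the finite products converge, the partition generating series is summable
with the limit as its sum. -/
theorem hasSum_p_mul_pow {q a : ℂ} {B : ℝ} (hq : ‖q‖ < 1)
    (hB : ∀ N, ∏ i ∈ Finset.range N, (1 - ‖q‖ ^ (i + 1))⁻¹ ≤ B)
    (ha : Tendsto (fun N => ∏ i ∈ Finset.range N, (1 - q ^ (i + 1))⁻¹) atTop (𝓝 a)) :
    HasSum (fun n => (p n : ℂ) * q ^ n) a := by
  have hs := summable_p_mul_pow (norm_nonneg q) hq hB
  have hnorm : ∀ n, ‖(p n : ℂ) * q ^ n‖ = p n * ‖q‖ ^ n := fun n => by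
    rw [norm_mul, norm_pow, Complex.norm_real, Real.norm_of_nonneg (p_pos n).le]
  have hs' : Summable (fun n => (p n : ℂ) * q ^ n) := Summable.of_norm (by simpa only [hnorm])
  have hlim := tendsto_tsum_of_dominated_convergence (𝓕 := atTop)
    (f := fun (N : ℕ) n => ((Nat.Partition.restricted n (· ≤ N)).card : ℂ) * q ^ n)
    (g := fun n => (p n : ℂ) * q ^ n) hs (fun n => by
      refine tendsto_const_nhds.congr' ?_
      filter_upwards [eventually_ge_atTop n] with N hN
      rw [← card_restricted_eq hN, Complex.ofReal_natCast])
    (Eventually.of_forall fun N n => by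
      rw [norm_mul, norm_pow, Complex.norm_natCast]
      exact mul_le_mul_of_nonneg_right (card_restricted_le n N) (by positivity))
  simp only [(hasSum_card_restricted _ hq).tsum_eq] at hlim
  rw [tendsto_nhds_unique ha hlim]
  exact hs'.hasSum

section Moments

/-- The frequency `(m + 1) * (k + 1)` attached to a pair of indices `(m, k)`. -/
noncomputable def freq (x : ℕ × ℕ) : ℝ := ((x.1 : ℝ) + 1) * ((x.2 : ℝ) + 1)

theorem freq_pos (x : ℕ × ℕ) : 0 < freq x := by
  unfold freq
  positivity

/-- The `j`-th derivative, up to sign, of `t ↦ log ∏ k, (1 - exp (-k t))⁻¹`. -/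
noncomputable def moment (j : ℕ) (t : ℝ) : ℝ :=
  ∑' x : ℕ × ℕ, freq x ^ j / ((x.1 : ℝ) + 1) * exp (-(freq x * t))

theorem summable_inv_succ_sq : Summable (fun m : ℕ => 1 / ((m : ℝ) + 1) ^ 2) := by
  have h := (summable_nat_add_iff 1).mpr (hasSum_zeta_two.summable)
  simpa using h

theorem summable_inv_freq_sq : Summable (fun x : ℕ × ℕ => 1 / freq x ^ 2) := by
  have h := summable_inv_succ_sq.mul_of_nonneg summable_inv_succ_sq
    (fun m => by positivity) (fun m => by positivity)
  refine h.congr fun x => ?_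
  unfold freq
  rw [mul_pow, one_div_mul_one_div]

theorem pow_mul_exp_neg_le (n : ℕ) {y : ℝ} (hy : 0 ≤ y) : y ^ n * exp (-y) ≤ n.factorial := by
  have h := Real.pow_div_factorial_le_exp y hy n
  rw [div_le_iff₀ (by positivity)] at h
  rw [Real.exp_neg, ← div_eq_mul_inv, div_le_iff₀ (exp_pos y)]
  linarith

theorem moment_term_nonneg (j : ℕ) (t : ℝ) (x : ℕ × ℕ) :
    0 ≤ freq x ^ j / ((x.1 : ℝ) + 1) * exp (-(freq x * t)) := by
  have := freq_pos x
  positivity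

theorem moment_term_le (j : ℕ) {ε t : ℝ} (hε : 0 < ε) (ht : ε ≤ t) (x : ℕ × ℕ) :
    freq x ^ j / ((x.1 : ℝ) + 1) * exp (-(freq x * t)) ≤
      (j + 2).factorial / ε ^ (j + 2) * (1 / freq x ^ 2) := by
  have hf := freq_pos x
  have h1 : freq x ^ j / ((x.1 : ℝ) + 1) ≤ freq x ^ j :=
    div_le_self (by positivity) (by linarith [(Nat.cast_nonneg x.1 : (0 : ℝ) ≤ x.1)])
  have h2 : exp (-(freq x * t)) ≤ exp (-(freq x * ε)) :=
    exp_le_exp.mpr (neg_le_neg (mul_le_mul_of_nonneg_left ht hf.le))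
  refine (mul_le_mul h1 h2 (exp_pos _).le (by positivity)).trans ?_
  have h3 := pow_mul_exp_neg_le (j + 2) (mul_pos hf hε).le
  rw [div_mul_div_comm, mul_one, le_div_iff₀ (by positivity)]
  calc freq x ^ j * exp (-(freq x * ε)) * (ε ^ (j + 2) * freq x ^ 2)
      = (freq x * ε) ^ (j + 2) * exp (-(freq x * ε)) := by ring
    _ ≤ _ := h3

theorem summable_moment (j : ℕ) {t : ℝ} (ht : 0 < t) :
    Summable (fun x : ℕ × ℕ => freq x ^ j / ((x.1 : ℝ) + 1) * exp (-(freq x * t))) :=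
  Summable.of_nonneg_of_le (moment_term_nonneg j t) (moment_term_le j ht le_rfl)
    (summable_inv_freq_sq.mul_left _)

theorem continuousOn_moment (j : ℕ) {ε : ℝ} (hε : 0 < ε) :
    ContinuousOn (moment j) (Set.Ici ε) := by
  refine continuousOn_tsum (fun x => by fun_prop)
    (summable_inv_freq_sq.mul_left ((j + 2).factorial / ε ^ (j + 2))) fun x t ht => ?_
  rw [Real.norm_of_nonneg (moment_term_nonneg j t x)]
  exact moment_term_le j hε ht x

theorem moment_antitoneOn (j : ℕ) : AntitoneOn (moment j) (Set.Ioi 0) := by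
  intro s hs t ht hst
  refine (summable_moment j ht).tsum_le_tsum (fun x => ?_) (summable_moment j hs)
  have hf := freq_pos x
  gcongr

/-- The exponential sum `∑ k ≥ 1, k ^ j * exp (-k x)`. -/
noncomputable def powExpSum (j : ℕ) (x : ℝ) : ℝ :=
  ∑' k : ℕ, ((k : ℝ) + 1) ^ j * exp (-(((k : ℝ) + 1) * x))

theorem exp_neg_succ_mul (k : ℕ) (x : ℝ) :
    exp (-(((k : ℝ) + 1) * x)) = exp (-x) * exp (-x) ^ k := by
  rw [← Real.exp_nat_mul, ← Real.exp_add]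
  ring_nf

theorem hasSum_choose_mul_exp (j : ℕ) {x : ℝ} (hx : 0 < x) :
    HasSum (fun k : ℕ => ((k + j).choose j : ℝ) * exp (-(((k : ℝ) + 1) * x)))
      (exp (-x) / (1 - exp (-x)) ^ (j + 1)) := by
  have hr : ‖exp (-x)‖ < 1 := by
    rw [Real.norm_of_nonneg (exp_pos _).le]
    exact Real.exp_lt_one_iff.mpr (by linarith)
  have h := (hasSum_choose_mul_geometric_of_norm_lt_one j hr).mul_left (exp (-x))
  rw [mul_one_div] at h
  refine h.congr_fun fun k => ?_
  rw [exp_neg_succ_mul]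
  ring

theorem succ_pow_le_factorial_mul_choose (j k : ℕ) :
    ((k : ℝ) + 1) ^ j ≤ j.factorial * ((k + j).choose j : ℝ) := by
  have h := Nat.pow_succ_le_ascFactorial (k + 1) j
  rw [Nat.ascFactorial_eq_factorial_mul_choose] at h
  exact_mod_cast h

theorem summable_powExpSum (j : ℕ) {x : ℝ} (hx : 0 < x) :
    Summable (fun k : ℕ => ((k : ℝ) + 1) ^ j * exp (-(((k : ℝ) + 1) * x))) := by
  refine Summable.of_nonneg_of_le (fun k => by positivity) (fun k => ?_)
    ((hasSum_choose_mul_exp j hx).summable.mul_left (j.factorial : ℝ))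
  rw [← mul_assoc]
  exact mul_le_mul_of_nonneg_right (succ_pow_le_factorial_mul_choose j k) (exp_pos _).le

theorem div_one_add_le_one_sub_exp_neg {x : ℝ} (hx : 0 < x) : x / (1 + x) ≤ 1 - exp (-x) := by
  have h := Real.add_one_le_exp x
  have h2 : exp (-x) ≤ 1 / (1 + x) := by
    rw [Real.exp_neg, ← one_div]
    exact one_div_le_one_div_of_le (by linarith) (by linarith)
  have h3 : x / (1 + x) = 1 - 1 / (1 + x) := by
    field_simp
    ring
  linarith

theorem pow_mul_powExpSum_le (j : ℕ) {x : ℝ} (hx : 0 < x) :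
    x ^ (j + 1) * powExpSum j x ≤ j.factorial * ((j + 1).factorial * exp 1) := by
  have h1 : powExpSum j x ≤ j.factorial * (exp (-x) / (1 - exp (-x)) ^ (j + 1)) := by
    refine hasSum_le (fun k => ?_) (summable_powExpSum j hx).hasSum
      ((hasSum_choose_mul_exp j hx).mul_left (j.factorial : ℝ))
    rw [← mul_assoc]
    exact mul_le_mul_of_nonneg_right (succ_pow_le_factorial_mul_choose j k) (exp_pos _).le
  have h2 := div_one_add_le_one_sub_exp_neg hx
  have h3 : x ^ (j + 1) / (1 - exp (-x)) ^ (j + 1) ≤ (1 + x) ^ (j + 1) := by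
    rw [div_le_iff₀ (pow_pos (lt_of_lt_of_le (by positivity) h2) _), ← mul_pow]
    refine pow_le_pow_left₀ hx.le ?_ _
    rwa [div_le_iff₀ (by positivity), mul_comm] at h2
  have h4 := pow_mul_exp_neg_le (j + 1) (y := 1 + x) (by positivity)
  have h5 : exp (-x) = exp (-(1 + x)) * exp 1 := by
    rw [← Real.exp_add]
    ring_nf
  calc x ^ (j + 1) * powExpSum j x
      ≤ x ^ (j + 1) * (j.factorial * (exp (-x) / (1 - exp (-x)) ^ (j + 1))) := by gcongr
    _ = j.factorial * (x ^ (j + 1) / (1 - exp (-x)) ^ (j + 1) * exp (-x)) := by ring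
    _ ≤ j.factorial * ((1 + x) ^ (j + 1) * exp (-x)) := by gcongr
    _ = j.factorial * ((1 + x) ^ (j + 1) * exp (-(1 + x)) * exp 1) := by rw [h5]; ring
    _ ≤ j.factorial * ((j + 1).factorial * exp 1) := by gcongr

theorem powExpSum_one {x : ℝ} (hx : 0 < x) :
    powExpSum 1 x = exp (-x) / (1 - exp (-x)) ^ 2 := by
  have h := (hasSum_choose_mul_exp 1 hx).tsum_eq
  rw [← h]
  refine tsum_congr fun k => ?_
  simp

theorem powExpSum_two {x : ℝ} (hx : 0 < x) :
    powExpSum 2 x = 2 * (exp (-x) / (1 - exp (-x)) ^ 3) - exp (-x) / (1 - exp (-x)) ^ 2 := by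
  rw [← (((hasSum_choose_mul_exp 2 hx).mul_left 2).sub (hasSum_choose_mul_exp 1 hx)).tsum_eq]
  refine tsum_congr fun k => ?_
  rw [Nat.cast_choose_two]
  push_cast [Nat.choose_one_right]
  ring

theorem tendsto_div_one_sub_exp_neg :
    Tendsto (fun x : ℝ => x / (1 - exp (-x))) (𝓝[>] 0) (𝓝 1) := by
  have h : HasDerivAt (fun x : ℝ => 1 - exp (-x)) 1 0 := by
    have := ((hasDerivAt_neg (0 : ℝ)).exp).const_sub 1
    simpa using this
  have h2 := (hasDerivAt_iff_tendsto_slope_zero.mp h).mono_left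
    (nhdsWithin_mono 0 (fun x (hx : 0 < x) => hx.ne'))
  have h3 := h2.inv₀ one_ne_zero
  rw [inv_one] at h3
  refine h3.congr fun x => ?_
  simp [div_eq_mul_inv, mul_comm]

theorem tendsto_exp_neg_nhdsGT : Tendsto (fun x : ℝ => exp (-x)) (𝓝[>] 0) (𝓝 1) := by
  have h : Tendsto (fun x : ℝ => exp (-x)) (𝓝 0) (𝓝 (exp (-0))) :=
    (by fun_prop : Continuous fun x : ℝ => exp (-x)).tendsto 0
  rw [neg_zero, exp_zero] at h
  exact h.mono_left nhdsWithin_le_nhds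

theorem tendsto_sq_mul_powExpSum_one :
    Tendsto (fun x => x ^ (1 + 1) * powExpSum 1 x) (𝓝[>] 0) (𝓝 1) := by
  have h := (tendsto_div_one_sub_exp_neg.pow 2).mul tendsto_exp_neg_nhdsGT
  simp only [one_pow, one_mul] at h
  refine h.congr' ?_
  filter_upwards [self_mem_nhdsWithin] with x hx
  rw [powExpSum_one hx, div_pow]
  ring

theorem tendsto_cube_mul_powExpSum_two :
    Tendsto (fun x => x ^ (2 + 1) * powExpSum 2 x) (𝓝[>] 0) (𝓝 2) := by
  have h := (((tendsto_div_one_sub_exp_neg.pow 3).mul tendsto_exp_neg_nhdsGT).const_mul 2).sub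
    ((((tendsto_div_one_sub_exp_neg.pow 2).mul tendsto_exp_neg_nhdsGT)).mul
      (tendsto_nhdsWithin_of_tendsto_nhds (tendsto_id (α := ℝ) (x := 𝓝 0))))
  simp only [one_pow, mul_one, mul_zero, sub_zero] at h
  refine h.congr' ?_
  filter_upwards [self_mem_nhdsWithin] with x hx
  rw [powExpSum_two hx, id, div_pow, div_pow]
  ring

theorem pow_mul_moment (j : ℕ) {t : ℝ} (ht : 0 < t) :
    t ^ (j + 1) * moment j t = ∑' m : ℕ, 1 / ((m : ℝ) + 1) ^ 2 *
      ((((m : ℝ) + 1) * t) ^ (j + 1) * powExpSum j (((m : ℝ) + 1) * t)) := by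
  unfold moment powExpSum
  rw [(summable_moment j ht).tsum_prod, ← tsum_mul_left]
  refine tsum_congr fun m => ?_
  rw [← tsum_mul_left, ← tsum_mul_left, ← tsum_mul_left]
  refine tsum_congr fun k => ?_
  have hm : (m : ℝ) + 1 ≠ 0 := by positivity
  rw [show freq (m, k) = ((m : ℝ) + 1) * ((k : ℝ) + 1) from rfl,
    show ((m : ℝ) + 1) * ((k : ℝ) + 1) * t = ((k : ℝ) + 1) * (((m : ℝ) + 1) * t) by ring]
  rw [mul_pow, mul_pow, pow_succ ((m : ℝ) + 1) j]
  field_simp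

theorem powExpSum_nonneg (j : ℕ) (x : ℝ) : 0 ≤ powExpSum j x :=
  tsum_nonneg fun k => by positivity

theorem tendsto_pow_mul_moment {j : ℕ} {a : ℝ}
    (h : Tendsto (fun x => x ^ (j + 1) * powExpSum j x) (𝓝[>] 0) (𝓝 a)) :
    Tendsto (fun t => t ^ (j + 1) * moment j t) (𝓝[>] 0) (𝓝 (π ^ 2 / 6 * a)) := by
  have hz : ∑' m : ℕ, 1 / ((m : ℝ) + 1) ^ 2 * a = π ^ 2 / 6 * a := by
    rw [tsum_mul_right]
    congr 1
    have h1 := hasSum_zeta_two.tsum_eq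
    rw [hasSum_zeta_two.summable.tsum_eq_zero_add] at h1
    simpa using h1
  rw [← hz]
  have key := tendsto_tsum_of_dominated_convergence (𝓕 := 𝓝[>] (0 : ℝ))
    (f := fun t (m : ℕ) => 1 / ((m : ℝ) + 1) ^ 2 *
      ((((m : ℝ) + 1) * t) ^ (j + 1) * powExpSum j (((m : ℝ) + 1) * t)))
    (g := fun m : ℕ => 1 / ((m : ℝ) + 1) ^ 2 * a)
    (summable_inv_succ_sq.mul_right (j.factorial * ((j + 1).factorial * exp 1)))
    (fun m => by
      refine Tendsto.const_mul _ (h.comp ?_)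
      refine tendsto_nhdsWithin_iff.mpr ⟨?_, ?_⟩
      · have : Tendsto (fun t : ℝ => ((m : ℝ) + 1) * t) (𝓝 0) (𝓝 (((m : ℝ) + 1) * 0)) :=
          tendsto_id.const_mul _
        rw [mul_zero] at this
        exact this.mono_left nhdsWithin_le_nhds
      · filter_upwards [self_mem_nhdsWithin] with t (ht : 0 < t)
        exact mul_pos (by positivity) ht)
    (by
      filter_upwards [self_mem_nhdsWithin] with t (ht : 0 < t) m
      have hp := powExpSum_nonneg j (((m : ℝ) + 1) * t)
      rw [Real.norm_of_nonneg (by positivity)]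
      exact mul_le_mul_of_nonneg_left (pow_mul_powExpSum_le j (by positivity)) (by positivity))
  refine key.congr' ?_
  filter_upwards [self_mem_nhdsWithin] with t ht
  rw [pow_mul_moment j ht]

theorem tendsto_sq_mul_moment_one :
    Tendsto (fun t => t ^ 2 * moment 1 t) (𝓝[>] 0) (𝓝 (π ^ 2 / 6)) := by
  simpa using tendsto_pow_mul_moment tendsto_sq_mul_powExpSum_one

theorem tendsto_cube_mul_moment_two :
    Tendsto (fun t => t ^ 3 * moment 2 t) (𝓝[>] 0) (𝓝 (π ^ 2 / 3)) := by
  have h := tendsto_pow_mul_moment tendsto_cube_mul_powExpSum_two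
  rwa [show π ^ 2 / 6 * 2 = π ^ 2 / 3 by ring] at h

theorem exists_pow_mul_moment_le (j : ℕ) :
    ∃ C, ∀ t, 0 < t → t ^ (j + 1) * moment j t ≤ C := by
  refine ⟨∑' m : ℕ, 1 / ((m : ℝ) + 1) ^ 2 * (j.factorial * ((j + 1).factorial * exp 1)),
    fun t ht => ?_⟩
  rw [pow_mul_moment j ht]
  have hle : ∀ m : ℕ, 1 / ((m : ℝ) + 1) ^ 2 *
      ((((m : ℝ) + 1) * t) ^ (j + 1) * powExpSum j (((m : ℝ) + 1) * t)) ≤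
      1 / ((m : ℝ) + 1) ^ 2 * (j.factorial * ((j + 1).factorial * exp 1)) := fun m =>
    mul_le_mul_of_nonneg_left (pow_mul_powExpSum_le j (by positivity)) (by positivity)
  have hs := summable_inv_succ_sq.mul_right (j.factorial * ((j + 1).factorial * exp 1))
  refine (Summable.of_nonneg_of_le (fun m => ?_) hle hs).tsum_le_tsum hle hs
  have hp := powExpSum_nonneg j (((m : ℝ) + 1) * t)
  positivity

end Moments

section LogGenerating

open Complex (I)

/-- The logarithm of the partition generating function at `exp (-s)`. -/
noncomputable def logGen (s : ℂ) : ℂ :=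
  ∑' x : ℕ × ℕ, 1 / ((x.1 : ℂ) + 1) * Complex.exp (-(freq x * s))

theorem norm_logGen_term (s : ℂ) (x : ℕ × ℕ) :
    ‖1 / ((x.1 : ℂ) + 1) * Complex.exp (-(freq x * s))‖ =
      freq x ^ 0 / ((x.1 : ℝ) + 1) * exp (-(freq x * s.re)) := by
  have h : ((x.1 : ℂ) + 1) = ((x.1 + 1 : ℕ) : ℂ) := by push_cast; rfl
  rw [norm_mul, Complex.norm_exp, norm_div, norm_one, h, Complex.norm_natCast]
  simp

theorem hasSum_logGen {s : ℂ} (hs : 0 < s.re) :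
    HasSum (fun x : ℕ × ℕ => 1 / ((x.1 : ℂ) + 1) * Complex.exp (-(freq x * s))) (logGen s) := by
  refine (Summable.of_norm ?_).hasSum
  simpa only [norm_logGen_term] using summable_moment 0 hs

theorem norm_exp_neg_lt_one {s : ℂ} (hs : 0 < s.re) : ‖Complex.exp (-s)‖ < 1 := by
  rw [Complex.norm_exp, Complex.neg_re]
  exact Real.exp_lt_one_iff.mpr (by linarith)

theorem tendsto_prod_eulerFactor {s : ℂ} (hs : 0 < s.re) :
    Tendsto (fun N => ∏ i ∈ Finset.range N, (1 - Complex.exp (-s) ^ (i + 1))⁻¹) atTop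
      (𝓝 (Complex.exp (logGen s))) := by
  have hq : ∀ k : ℕ, ‖Complex.exp (-s) ^ (k + 1)‖ < 1 := fun k => by
    rw [norm_pow]
    exact pow_lt_one₀ (norm_nonneg _) (norm_exp_neg_lt_one hs) k.succ_ne_zero
  have h1 : HasSum (fun y : ℕ × ℕ => 1 / ((y.2 : ℂ) + 1) *
      Complex.exp (-(freq y.swap * s))) (logGen s) :=
    (Equiv.prodComm ℕ ℕ).hasSum_iff.mpr (hasSum_logGen hs)
  have h2 : HasSum (fun k : ℕ => -Complex.log (1 - Complex.exp (-s) ^ (k + 1))) (logGen s) := by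
    refine h1.prod_fiberwise fun k => ?_
    refine (Complex.hasSum_taylorSeries_neg_log' (hq k)).congr_fun fun m => ?_
    rw [← Complex.exp_nat_mul, ← Complex.exp_nat_mul]
    unfold freq
    simp only [Prod.swap]
    rw [one_div_mul_eq_div]
    congr 2
    push_cast
    ring
  have h3 := h2.cexp.tendsto_prod_nat
  refine h3.congr fun N => Finset.prod_congr rfl fun k _ => ?_
  have hne : 1 - Complex.exp (-s) ^ (k + 1) ≠ 0 := by
    intro h
    have := hq k
    rw [← sub_eq_zero.mp h, norm_one] at this
    exact lt_irrefl _ this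
  rw [Function.comp_apply, Complex.exp_neg, Complex.exp_log hne]

theorem hasSum_p_mul_exp {s : ℂ} (hs : 0 < s.re) :
    HasSum (fun n => (p n : ℂ) * Complex.exp (-s) ^ n) (Complex.exp (logGen s)) := by
  have hbd := (tendsto_prod_eulerFactor (s := (s.re : ℂ)) (by simpa)).norm.bddAbove_range
  obtain ⟨B, hB⟩ := hbd
  refine hasSum_p_mul_pow (B := B) (norm_exp_neg_lt_one hs) (fun N => ?_)
    (tendsto_prod_eulerFactor hs)
  refine le_trans (le_of_eq ?_) (hB ⟨N, rfl⟩)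
  have hpos : ∀ i : ℕ, 0 < 1 - exp (-s.re) ^ (i + 1) := fun i =>
    sub_pos.mpr (pow_lt_one₀ (exp_pos _).le (Real.exp_lt_one_iff.mpr (by linarith)) i.succ_ne_zero)
  simp only [norm_prod]
  refine Finset.prod_congr rfl fun i _ => ?_
  rw [Complex.norm_exp, Complex.neg_re, ← Complex.ofReal_neg, ← Complex.ofReal_exp,
    ← Complex.ofReal_pow, ← Complex.ofReal_one, ← Complex.ofReal_sub, ← Complex.ofReal_inv,
    Complex.norm_real, Real.norm_of_nonneg (inv_pos.mpr (hpos i)).le]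

theorem integral_exp_int_mul (d : ℤ) :
    ∫ θ in (-π)..π, Complex.exp (d * I * θ) = if d = 0 then (2 * π : ℂ) else 0 := by
  split_ifs with h
  · subst h
    simp
    ring
  · have hc : (d : ℂ) * I ≠ 0 := mul_ne_zero (by exact_mod_cast h) Complex.I_ne_zero
    rw [integral_exp_mul_complex hc, sub_eq_zero.mpr, zero_div]
    rw [Complex.exp_eq_exp_iff_exists_int]
    refine ⟨d, ?_⟩
    push_cast
    ring

theorem continuous_logGen_line {t : ℝ} (ht : 0 < t) :
    Continuous (fun θ : ℝ => logGen (t - θ * I)) := by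
  refine continuous_tsum (fun x => by fun_prop) (summable_moment 0 ht) fun x θ => ?_
  rw [norm_logGen_term]
  simp

theorem integral_exp_logGen {t : ℝ} (ht : 0 < t) (l : ℕ) :
    ∫ θ in (-π)..π, Complex.exp (logGen (t - θ * I)) * Complex.exp (-(l * θ * I)) =
      2 * π * (p l * exp (-(l * t)) : ℝ) := by
  have hre : ∀ θ : ℝ, ((t : ℂ) - θ * I).re = t := fun θ => by simp
  have hsum : ∀ θ : ℝ, HasSum (fun n : ℕ => (p n : ℂ) * Complex.exp (-(t - θ * I)) ^ n *
      Complex.exp (-(l * θ * I)))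
      (Complex.exp (logGen (t - θ * I)) * Complex.exp (-(l * θ * I))) := fun θ =>
    (hasSum_p_mul_exp (by rwa [hre])).mul_right _
  have hbound : Summable (fun n => p n * exp (-t) ^ n) := by
    have := (hasSum_p_mul_exp (s := (t : ℂ)) (by simpa)).summable
    exact_mod_cast this
  have hterm : ∀ (n : ℕ) (θ : ℝ), (p n : ℂ) * Complex.exp (-(t - θ * I)) ^ n *
      Complex.exp (-(l * θ * I)) =
      (p n * exp (-t) ^ n : ℝ) * Complex.exp (((n - l : ℤ) : ℂ) * I * θ) := fun n θ => by
    push_cast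
    rw [← Complex.exp_nat_mul, ← Complex.exp_nat_mul, mul_assoc, ← Complex.exp_add,
      mul_assoc (p n : ℂ), ← Complex.exp_add]
    ring_nf
  have hint := intervalIntegral.hasSum_integral_of_dominated_convergence (μ := MeasureTheory.volume)
    (a := -π) (b := π)
    (F := fun (n : ℕ) (θ : ℝ) => (p n : ℂ) * Complex.exp (-(t - θ * I)) ^ n *
      Complex.exp (-(l * θ * I)))
    (f := fun θ : ℝ => Complex.exp (logGen (t - θ * I)) * Complex.exp (-(l * θ * I)))
    (fun n _ => p n * exp (-t) ^ n)
    (fun n => (by fun_prop : Continuous fun θ : ℝ => (p n : ℂ) * Complex.exp (-(t - θ * I)) ^ n *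
      Complex.exp (-(l * θ * I))).aestronglyMeasurable)
    (fun n => Eventually.of_forall fun θ _ => by
      have hp := p_pos n
      rw [hterm, norm_mul, Complex.norm_real, Real.norm_of_nonneg (by positivity),
        Complex.norm_exp]
      simp)
    (Eventually.of_forall fun θ _ => hbound)
    (by simp)
    (Eventually.of_forall fun θ _ => hsum θ)
  simp only [hterm, intervalIntegral.integral_const_mul, integral_exp_int_mul] at hint
  have h2 := hasSum_single (f := fun n : ℕ => ((p n * exp (-t) ^ n : ℝ) : ℂ) *
    (if (n - l : ℤ) = 0 then (2 * π : ℂ) else 0)) l (fun n hn => by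
      rw [if_neg, mul_zero]
      omega)
  rw [hint.unique h2, if_pos (by omega), ← Real.exp_nat_mul]
  push_cast
  ring_nf

/-- The logarithm of the characteristic function, centred at its mean, of the random partition
with weights `exp (-t n)`. -/
noncomputable def charLog (t θ : ℝ) : ℂ :=
  logGen (t - θ * I) - logGen t - θ * moment 1 t * I

theorem hasSum_charLog {t : ℝ} (ht : 0 < t) (θ : ℝ) :
    HasSum (fun x : ℕ × ℕ => ((1 / ((x.1 : ℝ) + 1) * exp (-(freq x * t)) : ℝ) : ℂ) *
      (Complex.exp (I * (freq x * θ : ℝ)) - 1 - I * (freq x * θ : ℝ))) (charLog t θ) := by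
  have h1 := hasSum_logGen (s := t - θ * I) (by simpa)
  have h2 := hasSum_logGen (s := (t : ℂ)) (by simpa)
  have h3 := (Complex.hasSum_ofReal.mpr (summable_moment 1 ht).hasSum).mul_left ((θ : ℂ) * I)
  have h := (h1.sub h2).sub h3
  have e : charLog t θ = logGen (t - θ * I) - logGen t - θ * I * (moment 1 t : ℂ) := by
    unfold charLog
    ring
  rw [e]
  refine h.congr_fun fun x => ?_
  have e1 : Complex.exp (-(freq x * (t - θ * I))) =
      Complex.exp (-(freq x * t)) * Complex.exp (I * (freq x * θ)) := by
    rw [← Complex.exp_add]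
    ring_nf
  push_cast
  rw [e1]
  ring

theorem norm_exp_I_mul_sub_taylor_le (y : ℝ) :
    ‖Complex.exp (I * y) - 1 - I * y + (y ^ 2 / 2 : ℝ)‖ ≤ 4 * |y| ^ 3 := by
  have hn : ‖I * (y : ℂ)‖ = |y| := by simp
  rcases le_total |y| 1 with h | h
  · have hb := Complex.exp_bound (x := I * y) (by rwa [hn]) (n := 3) (by norm_num)
    rw [hn] at hb
    have e : Complex.exp (I * y) - ∑ m ∈ Finset.range 3, (I * (y : ℂ)) ^ m / (m.factorial : ℂ) =
        Complex.exp (I * y) - 1 - I * y + (y ^ 2 / 2 : ℝ) := by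
      simp [Finset.sum_range_succ, mul_pow]
      ring
    rw [e] at hb
    refine hb.trans ?_
    have : (0 : ℝ) ≤ |y| ^ 3 := by positivity
    norm_num [Nat.factorial]
    nlinarith
  · have h1 : ‖Complex.exp (I * y)‖ = 1 := by
      rw [mul_comm, Complex.norm_exp_ofReal_mul_I]
    have h2 : ‖((y ^ 2 / 2 : ℝ) : ℂ)‖ = |y| ^ 2 / 2 := by
      rw [Complex.norm_real, Real.norm_of_nonneg (by positivity), sq_abs]
    calc _ ≤ ‖Complex.exp (I * y)‖ + ‖(1 : ℂ)‖ + ‖I * (y : ℂ)‖ + ‖((y ^ 2 / 2 : ℝ) : ℂ)‖ :=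
          (norm_add_le _ _).trans (add_le_add_left ((norm_sub_le _ _).trans
            (add_le_add_left (norm_sub_le _ _) _)) _)
      _ = 1 + 1 + |y| + |y| ^ 2 / 2 := by rw [h1, h2, hn, norm_one]
      _ ≤ 4 * |y| ^ 3 := by
          have h3 : |y| ≤ |y| ^ 3 := le_self_pow₀ h (by norm_num)
          have h4 : |y| ^ 2 ≤ |y| ^ 3 := pow_le_pow_right₀ h (by norm_num)
          linarith

theorem norm_charLog_add_le {t : ℝ} (ht : 0 < t) (θ : ℝ) :
    ‖charLog t θ + (moment 2 t * θ ^ 2 / 2 : ℝ)‖ ≤ 4 * |θ| ^ 3 * moment 3 t := by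
  have h2 := Complex.hasSum_ofReal.mpr ((summable_moment 2 ht).hasSum.mul_left (θ ^ 2 / 2))
  have h := (hasSum_charLog ht θ).add h2
  have h3 := (summable_moment 3 ht).hasSum.mul_left (4 * |θ| ^ 3)
  have e : ((θ ^ 2 / 2 * ∑' x : ℕ × ℕ, freq x ^ 2 / ((x.1 : ℝ) + 1) * exp (-(freq x * t)) : ℝ) : ℂ)
      = (moment 2 t * θ ^ 2 / 2 : ℝ) := by
    unfold moment
    congr 1
    ring
  rw [e] at h
  rw [← h.tsum_eq]
  refine tsum_of_norm_bounded h3 fun x => ?_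
  have hf := freq_pos x
  have hw : 0 ≤ 1 / ((x.1 : ℝ) + 1) * exp (-(freq x * t)) := by positivity
  calc _ = ‖((1 / ((x.1 : ℝ) + 1) * exp (-(freq x * t)) : ℝ) : ℂ) *
        (Complex.exp (I * (freq x * θ : ℝ)) - 1 - I * (freq x * θ : ℝ) +
          ((freq x * θ) ^ 2 / 2 : ℝ))‖ := by
        congr 1
        push_cast
        ring
    _ ≤ 1 / ((x.1 : ℝ) + 1) * exp (-(freq x * t)) * (4 * |freq x * θ| ^ 3) := by
        rw [norm_mul, Complex.norm_real, Real.norm_of_nonneg hw]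
        exact mul_le_mul_of_nonneg_left (norm_exp_I_mul_sub_taylor_le _) hw
    _ = _ := by
        rw [abs_mul, abs_of_pos hf]
        ring

theorem hasSum_exp_mul_one_sub_cos {t : ℝ} (ht : 0 < t) (θ : ℝ) :
    HasSum (fun k : ℕ => exp (-(((k : ℝ) + 1) * t)) * (1 - cos (((k : ℝ) + 1) * θ)))
      (exp (-t) * (1 + exp (-t)) * (1 - cos θ) /
        ((1 - exp (-t)) * ((1 - exp (-t)) ^ 2 + 2 * exp (-t) * (1 - cos θ)))) := by
  set r := exp (-t) with hr
  have hr0 : 0 < r := exp_pos _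
  have hr1 : r < 1 := Real.exp_lt_one_iff.mpr (by linarith)
  set z : ℂ := r * Complex.exp (θ * I) with hz
  have hzn : ‖z‖ < 1 := by
    rw [hz, norm_mul, Complex.norm_exp_ofReal_mul_I, mul_one, Complex.norm_real,
      Real.norm_of_nonneg hr0.le]
    exact hr1
  have h1 := (hasSum_geometric_of_lt_one hr0.le hr1).mul_left r
  have h2 := Complex.hasSum_re ((hasSum_geometric_of_norm_lt_one hzn).mul_left z)
  have h := h1.sub h2
  have hzre : z.re = r * cos θ := by
    rw [hz, Complex.re_ofReal_mul, Complex.exp_ofReal_mul_I_re]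
  have hzim : z.im = r * sin θ := by
    rw [hz, Complex.im_ofReal_mul, Complex.exp_ofReal_mul_I_im]
  have hD : 0 < (1 - r) ^ 2 + 2 * r * (1 - cos θ) := by
    have := cos_le_one θ
    have : 0 < (1 - r) ^ 2 := by
      have : 0 < 1 - r := by linarith
      positivity
    nlinarith
  have hns : Complex.normSq (1 - z) = (1 - r) ^ 2 + 2 * r * (1 - cos θ) := by
    rw [Complex.normSq_apply]
    simp only [Complex.sub_re, Complex.one_re, Complex.sub_im, Complex.one_im, hzre, hzim]
    have := sin_sq_add_cos_sq θ
    nlinarith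
  have hval : r * (1 - r)⁻¹ - (z * (1 - z)⁻¹).re =
      r * (1 + r) * (1 - cos θ) / ((1 - r) * ((1 - r) ^ 2 + 2 * r * (1 - cos θ))) := by
    rw [Complex.mul_re, Complex.inv_re, Complex.inv_im, hns]
    simp only [Complex.sub_re, Complex.one_re, Complex.sub_im, Complex.one_im, hzre, hzim]
    have h1r : 1 - r ≠ 0 := by linarith
    have hs := sin_sq_add_cos_sq θ
    generalize hDdef : (1 - r) ^ 2 + 2 * r * (1 - cos θ) = D at hD
    have e : r * cos θ * ((1 - r * cos θ) / D) - r * sin θ * (-(0 - r * sin θ) / D) =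
        (r * cos θ - r ^ 2) / D := by
      field_simp
      linear_combination (-r) * hs
    rw [e]
    field_simp
    rw [← hDdef]
    ring
  rw [← hval]
  refine h.congr_fun fun k => ?_
  have e1 : z * z ^ k = ((r * r ^ k : ℝ) : ℂ) * Complex.exp ((((k : ℝ) + 1) * θ : ℝ) * I) := by
    rw [hz, mul_pow, ← Complex.exp_nat_mul]
    have : Complex.exp ((((k : ℝ) + 1) * θ : ℝ) * I) =
        Complex.exp (θ * I) * Complex.exp (k * (θ * I)) := by
      rw [← Complex.exp_add]
      push_cast
      ring_nf
    rw [this]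
    push_cast
    ring
  rw [exp_neg_succ_mul, e1, Complex.re_ofReal_mul, Complex.exp_ofReal_mul_I_re]
  ring

theorem charLog_re_le {t : ℝ} (ht : 0 < t) (θ : ℝ) :
    (charLog t θ).re ≤ -(exp (-t) * (1 + exp (-t)) * (1 - cos θ) /
        ((1 - exp (-t)) * ((1 - exp (-t)) ^ 2 + 2 * exp (-t) * (1 - cos θ)))) := by
  have h := (Complex.hasSum_re (hasSum_charLog ht θ)).neg
  have hterm : ∀ x : ℕ × ℕ, -(((1 / ((x.1 : ℝ) + 1) * exp (-(freq x * t)) : ℝ) : ℂ) *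
      (Complex.exp (I * (freq x * θ : ℝ)) - 1 - I * (freq x * θ : ℝ))).re =
      1 / ((x.1 : ℝ) + 1) * exp (-(freq x * t)) * (1 - cos (freq x * θ)) := fun x => by
    rw [Complex.re_ofReal_mul, mul_comm I, Complex.sub_re, Complex.sub_re,
      Complex.exp_ofReal_mul_I_re, Complex.re_ofReal_mul]
    simp
    ring
  simp only [hterm] at h
  have hinj : Function.Injective (fun k : ℕ => ((0, k) : ℕ × ℕ)) := fun a b h => by
    simpa using h
  have hle := hasSum_le_inj (g := fun x : ℕ × ℕ =>
      1 / ((x.1 : ℝ) + 1) * exp (-(freq x * t)) * (1 - cos (freq x * θ))) _ hinj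
    (fun x _ => mul_nonneg (by positivity) (sub_nonneg.mpr (cos_le_one _)))
    (fun k => le_of_eq (by simp [freq])) (hasSum_exp_mul_one_sub_cos ht θ) h
  linarith

end LogGenerating

section SaddlePoint

open MeasureTheory
open Complex (I)

/-- The width `t ^ (3 / 2)` of the saddle point. -/
noncomputable def saddleWidth (t : ℝ) : ℝ := t * √t

theorem saddleWidth_pos {t : ℝ} (ht : 0 < t) : 0 < saddleWidth t :=
  mul_pos ht (Real.sqrt_pos.mpr ht)

theorem saddleWidth_sq {t : ℝ} (ht : 0 < t) : saddleWidth t ^ 2 = t ^ 3 := by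
  unfold saddleWidth
  rw [mul_pow, Real.sq_sqrt ht.le]
  ring

theorem tendsto_saddleWidth : Tendsto saddleWidth (𝓝[>] 0) (𝓝 0) := by
  have h : Continuous saddleWidth := by
    unfold saddleWidth
    fun_prop
  have h2 := h.tendsto 0
  simp only [saddleWidth, Real.sqrt_zero, mul_zero] at h2
  exact h2.mono_left nhdsWithin_le_nhds

theorem charLog_re_le_of_le {t θ : ℝ} (ht : 0 < t) (ht2 : t ≤ 1 / 2) (hθ : |θ| ≤ π) :
    (charLog t θ).re ≤ -(θ ^ 2 / (t * (π ^ 2 * t ^ 2 + 4 * θ ^ 2))) := by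
  refine (charLog_re_le ht θ).trans (neg_le_neg ?_)
  have hc := Real.cos_le_one_sub_mul_cos_sq hθ
  set c := 1 - cos θ with hcdef
  set r := exp (-t) with hr
  have hr1 : r < 1 := Real.exp_lt_one_iff.mpr (by linarith)
  have hrt : 1 - t ≤ r := by linarith [Real.add_one_le_exp (-t)]
  have hc0 : 2 / π ^ 2 * θ ^ 2 ≤ c := by linarith
  have hcn : 0 ≤ c := le_trans (by positivity) hc0
  have hpi := pi_pos
  rcases eq_or_ne θ 0 with rfl | hθ0
  · simp [hcdef]
  have hcpos : 0 < c := lt_of_lt_of_le (by positivity) hc0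
  have hθpos : 0 < θ ^ 2 := by positivity
  have hd : 2 * θ ^ 2 ≤ c * π ^ 2 := by
    rw [div_mul_eq_mul_div, div_le_iff₀ (by positivity)] at hc0
    exact hc0
  have step1 : θ ^ 2 / (t * (π ^ 2 * t ^ 2 + 4 * θ ^ 2)) ≤ c / 2 / (t * (t ^ 2 + 2 * c)) := by
    rw [div_le_div_iff₀ (by positivity) (by positivity)]
    have : 0 ≤ t ^ 3 * (c * π ^ 2 - 2 * θ ^ 2) := mul_nonneg (by positivity) (by linarith)
    nlinarith
  refine step1.trans (div_le_div₀ ?_ ?_ ?_ ?_)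
  · have : 0 ≤ r := by linarith
    positivity
  · have : 1 / 2 ≤ r * (1 + r) := by nlinarith
    nlinarith
  · have h1 : 0 < 1 - r := by linarith
    have h2 : 0 < r := by linarith
    positivity
  · have h1 : 0 < 1 - r := by linarith
    have h2 : 0 < r := by linarith
    have h3 : (1 - r) ^ 2 ≤ t ^ 2 := pow_le_pow_left₀ h1.le (by linarith) 2
    have h4 : 2 * r * c ≤ 2 * c := by nlinarith
    exact mul_le_mul (by linarith) (by linarith) (by positivity) ht.le

theorem exists_norm_exp_charLog_le :
    ∃ C, ∀ t u : ℝ, 0 < t → t ≤ 1 / 2 → |u * saddleWidth t| ≤ π →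
      ‖Complex.exp (charLog t (u * saddleWidth t))‖ ≤ C / (1 + u ^ 2) ^ 2 := by
  set K : ℝ := 4 * (π ^ 6 + 64 * π ^ 2) with hK
  have hpi := pi_gt_three
  have hK1 : 1 ≤ K := by
    have : 1 ≤ π ^ 2 := by nlinarith
    have : 0 ≤ π ^ 6 := by positivity
    linarith
  refine ⟨2880 * K ^ 2, fun t u ht ht2 hu => ?_⟩
  have hS := charLog_re_le_of_le ht ht2 hu
  have hw := saddleWidth_sq ht
  have hy3 : u ^ 2 * t ^ 3 ≤ π ^ 2 := by
    rw [← hw, ← mul_pow, ← sq_abs]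
    exact pow_le_pow_left₀ (abs_nonneg _) hu 2
  rw [mul_pow, hw] at hS
  set y := u ^ 2 with hy
  have hy0 : 0 ≤ y := sq_nonneg u
  have e : y * t ^ 3 / (t * (π ^ 2 * t ^ 2 + 4 * (y * t ^ 3))) = y / (π ^ 2 + 4 * y * t) := by
    field_simp
  rw [e] at hS
  set s := y / (π ^ 2 + 4 * y * t) with hs
  have hs0 : 0 ≤ s := by positivity
  have hn : ‖Complex.exp (charLog t (u * saddleWidth t))‖ ≤ exp (-s) := by
    rw [Complex.norm_exp]
    exact exp_le_exp.mpr hS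
  refine hn.trans ?_
  rw [le_div_iff₀ (by positivity)]
  rcases le_total y 1 with h | h
  · have h1 : exp (-s) ≤ 1 := Real.exp_le_one_iff.mpr (by linarith)
    have h2 : (1 + y) ^ 2 ≤ 4 := by nlinarith
    have h3 : 1 ≤ K ^ 2 := one_le_pow₀ hK1
    calc exp (-s) * (1 + y) ^ 2 ≤ 1 * 4 := by gcongr
      _ ≤ _ := by linarith
  · have hcube : ∀ a b : ℝ, 0 ≤ a → 0 ≤ b → (a + b) ^ 3 ≤ 4 * (a ^ 3 + b ^ 3) := fun a b ha hb => by
      nlinarith [mul_nonneg (add_nonneg ha hb) (sq_nonneg (a - b))]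
    have h1 : (π ^ 2 + 4 * y * t) ^ 3 ≤ K * y ^ 2 := by
      refine (hcube _ _ (by positivity) (by positivity)).trans ?_
      have h2 : y ^ 2 * (y * t ^ 3) ≤ y ^ 2 * π ^ 2 := by gcongr
      have h3 : π ^ 6 ≤ π ^ 6 * y ^ 2 := le_mul_of_one_le_right (by positivity) (one_le_pow₀ h)
      calc 4 * ((π ^ 2) ^ 3 + (4 * y * t) ^ 3) = 4 * (π ^ 6 + 64 * (y ^ 2 * (y * t ^ 3))) := by ring
        _ ≤ 4 * (π ^ 6 * y ^ 2 + 64 * (y ^ 2 * π ^ 2)) := by gcongr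
        _ = K * y ^ 2 := by rw [hK]; ring
    have h2 : y ≤ K * s ^ 3 := by
      rw [hs, div_pow, mul_div_assoc', le_div_iff₀ (by positivity)]
      calc y * (π ^ 2 + 4 * y * t) ^ 3 ≤ y * (K * y ^ 2) := by gcongr
        _ = K * y ^ 3 := by ring
    have h3 := pow_mul_exp_neg_le 6 hs0
    have h4 : (1 + y) ^ 2 ≤ 4 * K ^ 2 * s ^ 6 := by
      calc (1 + y) ^ 2 ≤ (2 * y) ^ 2 := by gcongr; linarith
        _ ≤ (2 * (K * s ^ 3)) ^ 2 := by gcongr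
        _ = _ := by ring
    calc exp (-s) * (1 + y) ^ 2 ≤ exp (-s) * (4 * K ^ 2 * s ^ 6) := by gcongr
      _ = 4 * K ^ 2 * (s ^ 6 * exp (-s)) := by ring
      _ ≤ 4 * K ^ 2 * (Nat.factorial 6 : ℝ) := by gcongr
      _ = 2880 * K ^ 2 := by norm_num [Nat.factorial]; ring

theorem tendsto_charLog (u : ℝ) :
    Tendsto (fun t => charLog t (u * saddleWidth t)) (𝓝[>] 0)
      (𝓝 ((-(π ^ 2 / 6) * u ^ 2 : ℝ) : ℂ)) := by
  obtain ⟨C, hC⟩ := exists_pow_mul_moment_le 3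
  have hsqrt : Tendsto (fun t : ℝ => 4 * |u| ^ 3 * (√t * C)) (𝓝[>] 0) (𝓝 0) := by
    have h := (by fun_prop : Continuous fun t : ℝ => 4 * |u| ^ 3 * (√t * C)).tendsto 0
    simp only [Real.sqrt_zero, zero_mul, mul_zero] at h
    exact h.mono_left nhdsWithin_le_nhds
  have h1 : Tendsto (fun t => charLog t (u * saddleWidth t) +
      (moment 2 t * (u * saddleWidth t) ^ 2 / 2 : ℝ)) (𝓝[>] 0) (𝓝 0) := by
    refine squeeze_zero_norm' ?_ hsqrt
    filter_upwards [self_mem_nhdsWithin] with t (ht : 0 < t)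
    refine (norm_charLog_add_le ht _).trans ?_
    have hw := saddleWidth_sq ht
    have hw3 : saddleWidth t ^ 3 = √t * t ^ (3 + 1) := by
      rw [pow_succ, hw]
      unfold saddleWidth
      ring
    rw [abs_mul, abs_of_pos (saddleWidth_pos ht), mul_pow, hw3]
    calc 4 * (|u| ^ 3 * (√t * t ^ (3 + 1))) * moment 3 t
        = 4 * |u| ^ 3 * (√t * (t ^ (3 + 1) * moment 3 t)) := by ring
      _ ≤ 4 * |u| ^ 3 * (√t * C) := by
        gcongr
        exact hC t ht
  have h2 : Tendsto (fun t => ((moment 2 t * (u * saddleWidth t) ^ 2 / 2 : ℝ) : ℂ)) (𝓝[>] 0)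
      (𝓝 ((π ^ 2 / 3 * (u ^ 2 / 2) : ℝ) : ℂ)) := by
    refine (Complex.continuous_ofReal.tendsto _).comp ?_
    refine (tendsto_cube_mul_moment_two.mul_const (u ^ 2 / 2)).congr' ?_
    filter_upwards [self_mem_nhdsWithin] with t ht
    rw [mul_pow, saddleWidth_sq ht]
    ring
  have h := h1.sub h2
  simp only [add_sub_cancel_right] at h
  convert h using 2
  push_cast
  ring

theorem continuous_charLog {t : ℝ} (ht : 0 < t) : Continuous (charLog t) := by
  have := continuous_logGen_line ht
  unfold charLog
  fun_prop

theorem tendsto_saddle_integral {g : ℝ → ℝ → ℝ} {κ : ℝ → ℝ} (hg : ∀ t, Continuous (g t))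
    (hbound : ∀ t, 0 < t → ∀ u, |g t (u * saddleWidth t)| ≤ 1 + u ^ 2)
    (hlim : ∀ u, Tendsto (fun t => g t (u * saddleWidth t)) (𝓝[>] 0) (𝓝 (κ u))) :
    Tendsto (fun t => (∫ θ in (-π)..π, Complex.exp (charLog t θ) * g t θ) / saddleWidth t)
      (𝓝[>] 0) (𝓝 ((∫ u, exp (-(π ^ 2 / 6) * u ^ 2) * κ u : ℝ) : ℂ)) := by
  obtain ⟨C, hC⟩ := exists_norm_exp_charLog_le
  have hC0 : 0 ≤ C := by
    have h := (norm_nonneg _).trans (hC (1 / 2) 0 (by norm_num) le_rfl (by simpa using pi_pos.le))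
    simpa using h
  let F : ℝ → ℝ → ℂ := fun t => (Set.Ioc (-(π / saddleWidth t)) (π / saddleWidth t)).indicator
    fun u => Complex.exp (charLog t (u * saddleWidth t)) * g t (u * saddleWidth t)
  have hF : ∀ t, 0 < t → ∫ u, F t u =
      (∫ θ in (-π)..π, Complex.exp (charLog t θ) * g t θ) / saddleWidth t := fun t ht => by
    have hw := saddleWidth_pos ht
    have hle : -(π / saddleWidth t) ≤ π / saddleWidth t := by
      have := pi_pos
      exact (neg_nonpos.mpr (by positivity)).trans (by positivity)
    rw [integral_indicator measurableSet_Ioc, ← intervalIntegral.integral_of_le hle,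
      intervalIntegral.integral_comp_mul_right
        (fun θ => Complex.exp (charLog t θ) * (g t θ : ℂ)) hw.ne', neg_mul,
      div_mul_cancel₀ _ hw.ne', Complex.real_smul, Complex.ofReal_inv, div_eq_inv_mul]
  rw [← integral_complex_ofReal]
  have key := tendsto_integral_filter_of_dominated_convergence (l := 𝓝[>] (0 : ℝ)) (μ := volume)
    (F := F) (f := fun u => ((exp (-(π ^ 2 / 6) * u ^ 2) * κ u : ℝ) : ℂ))
    (fun u => C * (1 + u ^ 2)⁻¹) ?_ ?_ (integrable_inv_one_add_sq.const_mul C) ?_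
  · refine key.congr' ?_
    filter_upwards [self_mem_nhdsWithin] with t ht
    exact hF t ht
  · filter_upwards [self_mem_nhdsWithin] with t ht
    refine (Continuous.aestronglyMeasurable ?_).indicator measurableSet_Ioc
    have := continuous_charLog ht
    have := hg t
    fun_prop
  · filter_upwards [self_mem_nhdsWithin,
      mem_nhdsWithin_of_mem_nhds (Iic_mem_nhds (by norm_num : (0 : ℝ) < 1 / 2))]
      with t (ht : 0 < t) (ht2 : t ≤ 1 / 2)
    refine Eventually.of_forall fun u => ?_
    have hw := saddleWidth_pos ht
    by_cases hu : u ∈ Set.Ioc (-(π / saddleWidth t)) (π / saddleWidth t)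
    · simp only [F]
      rw [Set.indicator_of_mem hu, norm_mul, Complex.norm_real, Real.norm_eq_abs]
      have hu' : |u * saddleWidth t| ≤ π := by
        rw [abs_mul, abs_of_pos hw, ← le_div_iff₀ hw]
        exact abs_le.mpr ⟨hu.1.le, hu.2⟩
      calc _ ≤ C / (1 + u ^ 2) ^ 2 * (1 + u ^ 2) :=
            mul_le_mul (hC t u ht ht2 hu') (hbound t ht u) (abs_nonneg _) (by positivity)
        _ = C * (1 + u ^ 2)⁻¹ := by
            have : (1 + u ^ 2) ≠ 0 := by positivity
            field_simp
    · simp only [F]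
      rw [Set.indicator_of_notMem hu, norm_zero]
      positivity
  · refine Eventually.of_forall fun u => ?_
    have h1 : Tendsto (fun t => Complex.exp (charLog t (u * saddleWidth t)) *
        (g t (u * saddleWidth t) : ℂ)) (𝓝[>] 0)
        (𝓝 ((exp (-(π ^ 2 / 6) * u ^ 2) * κ u : ℝ) : ℂ)) := by
      rw [Complex.ofReal_mul, Complex.ofReal_exp]
      exact ((Complex.continuous_exp.tendsto _).comp (tendsto_charLog u)).mul
        ((Complex.continuous_ofReal.tendsto _).comp (hlim u))
    refine h1.congr' ?_
    have h2 : Tendsto (fun t => |u| * saddleWidth t) (𝓝[>] 0) (𝓝 (|u| * 0)) :=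
      tendsto_saddleWidth.const_mul _
    rw [mul_zero] at h2
    filter_upwards [self_mem_nhdsWithin, h2.eventually_lt_const pi_pos] with t (ht : 0 < t) hlt
    have hw := saddleWidth_pos ht
    rw [← lt_div_iff₀ hw, abs_lt] at hlt
    simp only [F]
    rw [Set.indicator_of_mem (show u ∈ Set.Ioc _ _ from ⟨hlt.1, hlt.2.le⟩)]

theorem integral_sq_mul_gaussian {b : ℝ} (hb : 0 < b) :
    ∫ u, exp (-b * u ^ 2) * (u ^ 2 / 2) = √(π / b) / (4 * b) := by
  have hi0 : Integrable (fun u : ℝ => exp (-b * u ^ 2)) := integrable_exp_neg_mul_sq hb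
  have hi2 : Integrable (fun u : ℝ => u ^ 2 * exp (-b * u ^ 2)) := by
    have := integrable_rpow_mul_exp_neg_mul_sq hb (s := 2) (by norm_num)
    simpa using this
  have hi1 : Integrable (fun u : ℝ => u * exp (-b * u ^ 2)) := integrable_mul_exp_neg_mul_sq hb
  have hderiv : ∀ u : ℝ, HasDerivAt (fun u : ℝ => u * exp (-b * u ^ 2))
      (exp (-b * u ^ 2) - 2 * b * (u ^ 2 * exp (-b * u ^ 2))) u := fun u => by
    have h := (hasDerivAt_id u).mul (((hasDerivAt_pow 2 u).const_mul (-b)).exp)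
    refine h.congr_deriv ?_
    simp
    ring
  have h := integral_eq_zero_of_hasDerivAt_of_integrable hderiv
    (hi0.sub (hi2.const_mul (2 * b))) hi1
  rw [integral_sub hi0 (hi2.const_mul (2 * b)), integral_const_mul, integral_gaussian] at h
  have e : ∫ u, exp (-b * u ^ 2) * (u ^ 2 / 2) = (∫ u, u ^ 2 * exp (-b * u ^ 2)) / 2 := by
    rw [← integral_div]
    congr 1
    ext u
    ring
  rw [e, div_eq_div_iff (by norm_num) (by positivity)]
  linarith

theorem integral_mul_gaussian (b : ℝ) : ∫ u, exp (-b * u ^ 2) * u = 0 := by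
  have h := integral_neg_eq_self (fun u : ℝ => exp (-b * u ^ 2) * u) volume
  simp only [neg_sq, mul_neg, integral_neg] at h
  linarith

/-- The zeroth trigonometric moment of the centred characteristic function. -/
noncomputable def saddleIntegral (t : ℝ) : ℂ := ∫ θ in (-π)..π, Complex.exp (charLog t θ)

/-- The integral of the centred characteristic function against the cosine. -/
noncomputable def saddleCos (t : ℝ) : ℂ := ∫ θ in (-π)..π, Complex.exp (charLog t θ) * cos θ

/-- The integral of the centred characteristic function against the sine. -/
noncomputable def saddleSin (t : ℝ) : ℂ := ∫ θ in (-π)..π, Complex.exp (charLog t θ) * sin θ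

theorem tendsto_saddleIntegral :
    Tendsto (fun t => saddleIntegral t / saddleWidth t) (𝓝[>] 0)
      (𝓝 (√(π / (π ^ 2 / 6)) : ℝ)) := by
  have h := tendsto_saddle_integral (g := fun _ _ => 1) (κ := fun _ => 1)
    (fun _ => continuous_const) (fun t _ u => by rw [abs_one]; nlinarith [sq_nonneg u])
    (fun u => tendsto_const_nhds)
  simp only [mul_one, Complex.ofReal_one, integral_gaussian] at h
  exact h

theorem tendsto_saddleSin :
    Tendsto (fun t => saddleSin t / saddleWidth t ^ 2) (𝓝[>] 0) (𝓝 0) := by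
  have h := tendsto_saddle_integral (g := fun t θ => sin θ / saddleWidth t) (κ := fun u => u)
    (fun _ => by fun_prop) (fun t ht u => ?_) (fun u => ?_)
  · rw [integral_mul_gaussian, Complex.ofReal_zero] at h
    refine h.congr fun t => ?_
    unfold saddleSin
    simp only [Complex.ofReal_div, ← mul_div_assoc]
    rw [intervalIntegral.integral_div, div_div, sq]
  · have hw := saddleWidth_pos ht
    rw [abs_div, abs_of_pos hw, div_le_iff₀ hw]
    have h1 : |sin (u * saddleWidth t)| ≤ |u * saddleWidth t| := Real.abs_sin_le_abs
    rw [abs_mul, abs_of_pos hw] at h1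
    have h2 : |u| ≤ 1 + u ^ 2 := by nlinarith [sq_nonneg (|u| - 1), sq_abs u]
    exact h1.trans (mul_le_mul_of_nonneg_right h2 hw.le)
  · have hd : HasDerivAt (fun x : ℝ => sin (u * x)) u 0 := by
      have := ((hasDerivAt_id (0 : ℝ)).const_mul u).sin
      simpa using this
    have h1 := hasDerivAt_iff_tendsto_slope_zero.mp hd
    have h2 : Tendsto saddleWidth (𝓝[>] 0) (𝓝[≠] 0) :=
      tendsto_nhdsWithin_iff.mpr ⟨tendsto_saddleWidth, by
        filter_upwards [self_mem_nhdsWithin] with t ht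
        exact (saddleWidth_pos ht).ne'⟩
    refine (h1.comp h2).congr fun t => ?_
    simp [div_eq_inv_mul]

theorem tendsto_saddleIntegral_sub_saddleCos :
    Tendsto (fun t => (saddleIntegral t - saddleCos t) / saddleWidth t ^ 3) (𝓝[>] 0)
      (𝓝 (√(π / (π ^ 2 / 6)) / (4 * (π ^ 2 / 6)) : ℝ)) := by
  have h := tendsto_saddle_integral (g := fun t θ => (1 - cos θ) / saddleWidth t ^ 2)
    (κ := fun u => u ^ 2 / 2) (fun _ => by fun_prop) (fun t ht u => ?_) (fun u => ?_)
  · rw [integral_sq_mul_gaussian (by have := pi_pos; positivity)] at h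
    refine h.congr' ?_
    filter_upwards [self_mem_nhdsWithin] with t (ht : 0 < t)
    unfold saddleIntegral saddleCos
    have hc := continuous_charLog ht
    rw [← intervalIntegral.integral_sub
      (Continuous.intervalIntegrable (by fun_prop) _ _)
      (Continuous.intervalIntegrable (by fun_prop) _ _)]
    simp only [Complex.ofReal_div, ← mul_div_assoc]
    rw [intervalIntegral.integral_div, div_div, Complex.ofReal_pow, ← pow_succ]
    congr 2
    ext θ
    push_cast
    ring
  · have hw := saddleWidth_pos ht
    rw [abs_div, abs_of_pos (pow_pos hw 2), div_le_iff₀ (pow_pos hw 2),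
      abs_of_nonneg (sub_nonneg.mpr (cos_le_one _))]
    have h1 := Real.one_sub_sq_div_two_le_cos (x := u * saddleWidth t)
    nlinarith [sq_nonneg (u * saddleWidth t), pow_pos hw 2]
  · have hlim : Tendsto (fun x : ℝ => u ^ 2 / 2 * sinc (u * x / 2) ^ 2) (𝓝 0)
        (𝓝 (u ^ 2 / 2 * sinc (u * 0 / 2) ^ 2)) :=
      (by have := continuous_sinc; fun_prop :
        Continuous fun x : ℝ => u ^ 2 / 2 * sinc (u * x / 2) ^ 2).tendsto 0
    simp only [mul_zero, zero_div, sinc_zero, one_pow, mul_one] at hlim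
    refine (hlim.comp tendsto_saddleWidth).congr' ?_
    filter_upwards [self_mem_nhdsWithin] with t (ht : 0 < t)
    have hw := saddleWidth_pos ht
    rw [Function.comp_apply]
    rcases eq_or_ne u 0 with rfl | hu
    · simp
    have hne : u * saddleWidth t / 2 ≠ 0 := by positivity
    rw [sinc_of_ne_zero hne, show u * saddleWidth t = 2 * (u * saddleWidth t / 2) by ring,
      cos_two_mul, cos_sq']
    field_simp
    ring

end SaddlePoint

section SecondDifference

open Complex (I)

/-- The quotient `p (N + 1) * p (N - 1) / p N ^ 2`, as a function of the saddle point `t`. -/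
noncomputable def saddleRatio (t : ℝ) : ℂ :=
  (saddleCos t ^ 2 + saddleSin t ^ 2) / saddleIntegral t ^ 2

theorem tendsto_saddleRatio :
    Tendsto (fun t : ℝ => (saddleRatio t - 1) / (t ^ 3 : ℝ)) (𝓝[>] 0)
      (𝓝 ((-(3 / π ^ 2) : ℝ) : ℂ)) := by
  have hpi := pi_pos
  set G : ℝ := √(π / (π ^ 2 / 6)) with hG
  have hG0 : (G : ℂ) ≠ 0 := by
    rw [Complex.ofReal_ne_zero, hG]
    positivity
  have hA := tendsto_saddleIntegral
  have hB := tendsto_saddleSin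
  have hK := tendsto_saddleIntegral_sub_saddleCos
  have hw : Tendsto (fun t => (saddleWidth t : ℂ)) (𝓝[>] 0) (𝓝 0) :=
    (Complex.continuous_ofReal.tendsto _).comp tendsto_saddleWidth
  rw [← hG] at hA hK
  have h := (((hK.mul ((hA.const_mul 2).sub ((hw.pow 2).mul hK))).neg).add (hB.pow 2)).div
    (hA.pow 2) (pow_ne_zero 2 hG0)
  have e : (-(((G / (4 * (π ^ 2 / 6)) : ℝ) : ℂ) * (2 * (G : ℂ) -
      0 ^ 2 * ((G / (4 * (π ^ 2 / 6)) : ℝ) : ℂ))) + 0 ^ 2) / (G : ℂ) ^ 2 =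
      ((-(3 / π ^ 2) : ℝ) : ℂ) := by
    have : (π : ℂ) ≠ 0 := by exact_mod_cast hpi.ne'
    push_cast
    field_simp
    ring
  rw [e] at h
  refine h.congr' ?_
  filter_upwards [self_mem_nhdsWithin, hA.eventually_ne hG0] with t (ht : 0 < t) hne
  have hwne : (saddleWidth t : ℂ) ≠ 0 := by exact_mod_cast (saddleWidth_pos ht).ne'
  have hI : saddleIntegral t ≠ 0 := by
    intro h0
    rw [h0, zero_div] at hne
    exact hne rfl
  rw [Pi.div_apply]
  unfold saddleRatio
  rw [← saddleWidth_sq ht, Complex.ofReal_pow]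
  field_simp
  ring

theorem tendsto_log_saddleRatio :
    Tendsto (fun t : ℝ => log (saddleRatio t).re / t ^ 3) (𝓝[>] 0) (𝓝 (-(3 / π ^ 2))) := by
  have h1 : Tendsto (fun t : ℝ => ((saddleRatio t).re - 1) / t ^ 3) (𝓝[>] 0)
      (𝓝 (-(3 / π ^ 2))) := by
    refine ((Complex.continuous_re.tendsto _).comp tendsto_saddleRatio).congr fun t => ?_
    rw [Function.comp_apply, Complex.div_ofReal_re, Complex.sub_re, Complex.one_re]
  have h3 : Tendsto (fun t : ℝ => t ^ 3) (𝓝[>] 0) (𝓝 0) := by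
    have h := (continuous_pow 3 : Continuous fun t : ℝ => t ^ 3).tendsto 0
    rw [zero_pow (by norm_num)] at h
    exact h.mono_left nhdsWithin_le_nhds
  have h2 : Tendsto (fun t : ℝ => (saddleRatio t).re) (𝓝[>] 0) (𝓝 1) := by
    have h := (h1.mul h3).add_const 1
    rw [mul_zero, zero_add] at h
    refine h.congr' ?_
    filter_upwards [self_mem_nhdsWithin] with t (ht : 0 < t)
    rw [div_mul_cancel₀ _ (by positivity), sub_add_cancel]
  have h4 := h1.mul (h2.inv₀ one_ne_zero)
  rw [inv_one, mul_one] at h4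
  refine tendsto_of_tendsto_of_tendsto_of_le_of_le' h4 h1 ?_ ?_
  · filter_upwards [self_mem_nhdsWithin, h2.eventually_const_lt one_pos] with t (ht : 0 < t) hpos
    rw [div_mul_eq_mul_div]
    refine div_le_div_of_nonneg_right ?_ (by positivity)
    rw [sub_mul, mul_inv_cancel₀ hpos.ne', one_mul]
    exact Real.one_sub_inv_le_log_of_pos hpos
  · filter_upwards [self_mem_nhdsWithin, h2.eventually_const_lt one_pos] with t (ht : 0 < t) hpos
    exact div_le_div_of_nonneg_right (Real.log_le_sub_one_of_pos hpos) (by positivity)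

theorem p_mul_exp_eq_integral {t : ℝ} (ht : 0 < t) {N : ℕ} (hN : moment 1 t = N) (l : ℕ) :
    2 * π * ((p l * exp (-(l * t)) : ℝ) : ℂ) = Complex.exp (logGen t) *
      ∫ θ in (-π)..π, Complex.exp (charLog t θ) * Complex.exp ((N - l : ℂ) * θ * I) := by
  rw [← integral_exp_logGen ht, ← intervalIntegral.integral_const_mul]
  congr 1
  ext θ
  rw [← Complex.exp_add, ← Complex.exp_add, ← Complex.exp_add]
  unfold charLog
  rw [hN]
  push_cast
  ring_nf

theorem integral_charLog_mul_exp {t : ℝ} (ht : 0 < t) (ε : ℂ) (hε : ε = 1 ∨ ε = -1) :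
    ∫ θ in (-π)..π, Complex.exp (charLog t θ) * Complex.exp (ε * θ * I) =
      saddleCos t + ε * I * saddleSin t := by
  have hc := continuous_charLog ht
  unfold saddleCos saddleSin
  rw [← intervalIntegral.integral_const_mul, ← intervalIntegral.integral_add
    (Continuous.intervalIntegrable (by fun_prop) _ _)
    (Continuous.intervalIntegrable (by fun_prop) _ _)]
  congr 1
  ext θ
  rw [Complex.exp_mul_I, Complex.ofReal_cos, Complex.ofReal_sin]
  rcases hε with rfl | rfl
  · rw [one_mul]
    ring
  · rw [neg_one_mul, Complex.cos_neg, Complex.sin_neg]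
    ring

theorem saddleRatio_eq {t : ℝ} (ht : 0 < t) {N : ℕ} (hN : moment 1 t = (N + 1 : ℕ)) :
    saddleRatio t = ((p (N + 2) * p N / p (N + 1) ^ 2 : ℝ) : ℂ) := by
  have h0 := p_mul_exp_eq_integral ht hN (N + 1)
  have h1 := p_mul_exp_eq_integral ht hN (N + 2)
  have h2 := p_mul_exp_eq_integral ht hN N
  rw [show (((N + 1 : ℕ) : ℂ) - (N + 2 : ℕ)) = -1 by push_cast; ring,
    integral_charLog_mul_exp ht _ (Or.inr rfl)] at h1
  rw [show (((N + 1 : ℕ) : ℂ) - N) = 1 by push_cast; ring,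
    integral_charLog_mul_exp ht _ (Or.inl rfl)] at h2
  simp only [sub_self, zero_mul, Complex.exp_zero, mul_one] at h0
  change _ = _ * saddleIntegral t at h0
  have hE : exp (-((N + 2 : ℕ) * t)) * exp (-(N * t)) = exp (-((N + 1 : ℕ) * t)) ^ 2 := by
    rw [← Real.exp_add, ← Real.exp_nat_mul]
    push_cast
    ring_nf
  have hT := Complex.exp_ne_zero (logGen t)
  have hp := (p_pos (N + 1)).ne'
  have hx := (exp_pos (-((N + 1 : ℕ) * t))).ne'
  have hpi : (2 * π : ℂ) ≠ 0 := by
    have := pi_pos.ne'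
    exact_mod_cast mul_ne_zero two_ne_zero this
  have hI : saddleIntegral t ≠ 0 := by
    intro h
    rw [h, mul_zero] at h0
    refine mul_ne_zero hpi ?_ h0
    exact_mod_cast mul_ne_zero hp hx
  have hprod : saddleCos t ^ 2 + saddleSin t ^ 2 =
      (saddleCos t + -1 * I * saddleSin t) * (saddleCos t + 1 * I * saddleSin t) := by
    linear_combination saddleSin t ^ 2 * Complex.I_sq
  have hratio : (p (N + 2) * p N / p (N + 1) ^ 2 : ℝ) =
      (p (N + 2) * exp (-((N + 2 : ℕ) * t))) * (p N * exp (-(N * t))) /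
        (p (N + 1) * exp (-((N + 1 : ℕ) * t))) ^ 2 := by
    rw [mul_pow, ← hE]
    field_simp
  rw [hratio]
  unfold saddleRatio
  rw [hprod, Complex.ofReal_div, Complex.ofReal_mul, Complex.ofReal_pow]
  have hne : ((p (N + 1) * exp (-((N + 1 : ℕ) * t)) : ℝ) : ℂ) ≠ 0 := by
    exact_mod_cast mul_ne_zero hp hx
  rw [div_eq_div_iff (pow_ne_zero 2 hI) (pow_ne_zero 2 hne)]
  refine mul_left_cancel₀ (pow_ne_zero 2 (mul_ne_zero hpi hT)) ?_
  calc _ = (Complex.exp (logGen t) * (saddleCos t + -1 * I * saddleSin t)) *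
        (Complex.exp (logGen t) * (saddleCos t + 1 * I * saddleSin t)) *
        (2 * π * ((p (N + 1) * exp (-((N + 1 : ℕ) * t)) : ℝ) : ℂ)) ^ 2 := by ring
    _ = _ := by
      rw [← h1, ← h2, h0]
      ring

theorem tendsto_moment_one_atTop : Tendsto (moment 1) (𝓝[>] 0) atTop := by
  have h0 : Tendsto (fun t : ℝ => (t ^ 2)⁻¹) (𝓝[>] 0) atTop := by
    refine tendsto_inv_nhdsGT_zero.comp (tendsto_nhdsWithin_iff.mpr ⟨?_, ?_⟩)
    · have h := (continuous_pow 2 : Continuous fun t : ℝ => t ^ 2).tendsto 0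
      rw [zero_pow (by norm_num)] at h
      exact h.mono_left nhdsWithin_le_nhds
    · filter_upwards [self_mem_nhdsWithin] with t (ht : 0 < t)
      exact pow_pos ht 2
  have hpi := pi_pos
  refine (tendsto_sq_mul_moment_one.pos_mul_atTop (by positivity) h0).congr' ?_
  filter_upwards [self_mem_nhdsWithin] with t (ht : 0 < t)
  field_simp

theorem exists_moment_one_eq {a : ℝ} (ha : moment 1 1 ≤ a) : ∃ t, 0 < t ∧ moment 1 t = a := by
  have hev : ∀ᶠ s in 𝓝[>] (0 : ℝ), a ≤ moment 1 s ∧ 0 < s ∧ s ≤ 1 := by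
    filter_upwards [tendsto_moment_one_atTop.eventually_ge_atTop a, self_mem_nhdsWithin,
      mem_nhdsWithin_of_mem_nhds (Iic_mem_nhds one_pos)] with s h1 h2 h3
    exact ⟨h1, h2, h3⟩
  obtain ⟨s, hs, hs0, hs1⟩ := hev.exists
  have hcont : ContinuousOn (moment 1) (Set.Icc s 1) :=
    (continuousOn_moment 1 hs0).mono Set.Icc_subset_Ici_self
  obtain ⟨t, ht, hta⟩ := intermediate_value_Icc' hs1 hcont ⟨ha, hs⟩
  exact ⟨t, lt_of_lt_of_le hs0 ht.1, hta⟩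

theorem exists_saddlePoint_seq : ∃ τ : ℕ → ℝ, Tendsto τ atTop (𝓝[>] 0) ∧
    ∀ᶠ n : ℕ in atTop, moment 1 (τ n) = (n + 1 : ℕ) := by
  have hex : ∀ n : ℕ, ∃ t, 0 < t ∧ (moment 1 1 ≤ (n + 1 : ℕ) → moment 1 t = (n + 1 : ℕ)) := by
    intro n
    by_cases h : moment 1 1 ≤ (n + 1 : ℕ)
    · obtain ⟨t, ht, hta⟩ := exists_moment_one_eq h
      exact ⟨t, ht, fun _ => hta⟩
    · exact ⟨1, one_pos, fun h' => absurd h' h⟩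
  choose τ hτ hτ' using hex
  have hcast : Tendsto (fun n : ℕ => ((n + 1 : ℕ) : ℝ)) atTop atTop :=
    tendsto_natCast_atTop_atTop.comp (tendsto_add_atTop_nat 1)
  have hev : ∀ᶠ n : ℕ in atTop, moment 1 (τ n) = (n + 1 : ℕ) := by
    filter_upwards [hcast.eventually_ge_atTop (moment 1 1)] with n hn
    exact hτ' n hn
  refine ⟨τ, tendsto_nhdsWithin_iff.mpr ⟨?_, Eventually.of_forall hτ⟩, hev⟩
  rw [tendsto_order]
  refine ⟨fun a ha => Eventually.of_forall fun n => ha.trans (hτ n), fun ε hε => ?_⟩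
  filter_upwards [hev, hcast.eventually_gt_atTop (moment 1 ε)] with n hn hlt
  by_contra! hle
  have := moment_antitoneOn 1 (Set.mem_Ioi.mpr hε) (Set.mem_Ioi.mpr (hτ n)) hle
  linarith

theorem tendsto_saddle_main :
    Tendsto (fun t : ℝ => -(moment 1 t + 1) ^ ((3 : ℝ) / 2) * log (saddleRatio t).re) (𝓝[>] 0)
      (𝓝 (π / √24)) := by
  have hpi := pi_pos
  have h1 : Tendsto (fun t : ℝ => t ^ 2 * (moment 1 t + 1)) (𝓝[>] 0) (𝓝 (π ^ 2 / 6)) := by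
    have h := (continuous_pow 2 : Continuous fun t : ℝ => t ^ 2).tendsto 0
    rw [zero_pow (by norm_num)] at h
    have h2 := tendsto_sq_mul_moment_one.add (h.mono_left (nhdsWithin_le_nhds (s := Set.Ioi 0)))
    rw [add_zero] at h2
    refine h2.congr fun t => ?_
    ring
  have h2 := ((h1.rpow_const (p := (3 : ℝ) / 2) (Or.inr (by norm_num))).mul
    tendsto_log_saddleRatio).neg
  have e : -((π ^ 2 / 6) ^ ((3 : ℝ) / 2) * -(3 / π ^ 2)) = π / √24 := by
    have h24 : √(24 : ℝ) = 2 * √6 := by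
      rw [show (24 : ℝ) = 2 ^ 2 * 6 by norm_num, Real.sqrt_mul (by norm_num),
        Real.sqrt_sq (by norm_num)]
    have h32 : (π ^ 2 / 6) ^ ((3 : ℝ) / 2) = (π / √6) ^ 3 := by
      have hsq : π ^ 2 / 6 = (π / √6) ^ (2 : ℝ) := by
        rw [Real.rpow_two, div_pow, Real.sq_sqrt (by norm_num)]
      rw [hsq, ← Real.rpow_mul (by positivity), ← Real.rpow_natCast]
      norm_num
    have h6 : √(6 : ℝ) ^ 2 = 6 := Real.sq_sqrt (by norm_num)
    rw [h24, h32]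
    field_simp
    rw [h6]
    norm_num
  rw [e] at h2
  refine h2.congr' ?_
  filter_upwards [self_mem_nhdsWithin] with t (ht : 0 < t)
  have hm : 0 ≤ moment 1 t + 1 := by
    have : 0 ≤ moment 1 t := tsum_nonneg (moment_term_nonneg 1 t)
    linarith
  have ht3 : (t ^ 2) ^ ((3 : ℝ) / 2) = t ^ 3 := by
    rw [← Real.rpow_natCast t 2, ← Real.rpow_mul ht.le, ← Real.rpow_natCast t 3]
    norm_num
  rw [Real.mul_rpow (by positivity) hm, ht3]
  field_simp

end SecondDifference

theorem limit_second_difference_log_p :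
    Tendsto (fun n : ℕ =>
        -(n : ℝ) ^ ((3 : ℝ) / 2) *
          (Real.log (p n) + Real.log (p (n - 2)) - 2 * Real.log (p (n - 1))))
      atTop (nhds (π / Real.sqrt 24)) := by
  obtain ⟨τ, hτ, hm⟩ := exists_saddlePoint_seq
  rw [← tendsto_add_atTop_iff_nat 2]
  refine (tendsto_saddle_main.comp hτ).congr' ?_
  filter_upwards [hm, hτ.eventually self_mem_nhdsWithin] with n hn hpos
  have h0 := p_pos n
  have h1 := p_pos (n + 1)
  have h2 := p_pos (n + 2)
  rw [Function.comp_apply, hn, saddleRatio_eq hpos hn, Complex.ofReal_re,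
    Real.log_div (by positivity) (by positivity), Real.log_mul h2.ne' h0.ne', Real.log_pow,
    Nat.add_sub_cancel, show n + 2 - 1 = n + 1 by omega]
  push_cast
  ring_nf
end
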